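/- arXiv:2105.12199 — 2 statements merged into one kernel-verified Lean document; each statement's English description precedes it below -/
import Mathlib

section
/- Let M be a finite von Neumann algebra and let 𝔣, 𝔤 be normal positive functionals on M. If the left kernels satisfy L_𝔤 ⊆ L_𝔣, then 𝔣 is absolutely continuous with respect to 𝔤. -/
open scoped ComplexOrder

/-- Scalar multiples of elements of a von Neumann algebra stay in it. -/
instance {H : Type} [NormedAddCommGroup H] [InnerProductSpace ℂ H] [CompleteSpace H] :
    SMulMemClass (VonNeumannAlgebra H) ℂ (H →L[ℂ] H) where
  smul_mem {M} c _x hx := M.toStarSubalgebra.smul_mem hx c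

section VonNeumannDefs

variable {H : Type} [NormedAddCommGroup H] [InnerProductSpace ℂ H] [CompleteSpace H]
variable {M : VonNeumannAlgebra H}

/-- The Loewner order on bounded operators: `x ≤ y` iff `y - x` is a positive operator. -/
def OpLE (x y : H →L[ℂ] H) : Prop := (y - x).IsPositive

/-- A linear functional on a von Neumann algebra is positive if `0 ≤ 𝔣 (x⋆ * x)` for
every `x`. -/
def VNIsPos (𝔣 : ↥M →ₗ[ℂ] ℂ) : Prop := ∀ x : ↥M, 0 ≤ 𝔣 (star x * x)

/-- Order on positive functionals: `𝔣 ≤ 𝔤` iff `𝔤 - 𝔣` is positive. -/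
def VNLE (𝔣 𝔤 : ↥M →ₗ[ℂ] ℂ) : Prop := VNIsPos (𝔤 - 𝔣)

/-- A functional `𝔣` on a von Neumann algebra `M` is normal if for every norm-bounded
increasing net `x : ι → M` of positive elements of `M` having a least upper bound `xsup`
in `M` (with respect to the Loewner order), `𝔣 xsup` is the supremum of the `𝔣 (x i)`. -/
def VNIsNormal (𝔣 : ↥M →ₗ[ℂ] ℂ) : Prop :=
  ∀ (ι : Type) [Preorder ι] [IsDirected ι (· ≤ ·)] [Nonempty ι]
    (x : ι → ↥M) (xsup : ↥M),
    (∀ i, (x i : H →L[ℂ] H).IsPositive) →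
    (∀ i j, i ≤ j → OpLE (x i : H →L[ℂ] H) (x j : H →L[ℂ] H)) →
    (∃ C : ℝ, ∀ i, ‖(x i : H →L[ℂ] H)‖ ≤ C) →
    (∀ i, OpLE (x i : H →L[ℂ] H) (xsup : H →L[ℂ] H)) →
    (∀ y : ↥M, (∀ i, OpLE (x i : H →L[ℂ] H) (y : H →L[ℂ] H)) →
      OpLE (xsup : H →L[ℂ] H) (y : H →L[ℂ] H)) →
    IsLUB (Set.range fun i => 𝔣 (x i)) (𝔣 xsup)

/-- Absolute continuity `𝔣 ≪ 𝔤` for normal positive functionals: `𝔣` is the pointwise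
limit of an increasing sequence of normal positive functionals `𝔣ₙ` with `𝔣ₙ ≤ αₙ • 𝔤`
for some positive reals `αₙ`. -/
def VNAbsCont (𝔣 𝔤 : ↥M →ₗ[ℂ] ℂ) : Prop :=
  ∃ (fn : ℕ → (↥M →ₗ[ℂ] ℂ)) (α : ℕ → ℝ),
    (∀ n, VNIsPos (fn n) ∧ VNIsNormal (fn n)) ∧
    (∀ n, 0 < α n) ∧
    (∀ n, VNLE (fn n) (fn (n + 1))) ∧
    (∀ n, VNLE (fn n) (((α n : ℂ)) • 𝔤)) ∧
    (∀ x : ↥M, Filter.Tendsto (fun n => fn n x) Filter.atTop (nhds (𝔣 x)))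

/-- Singularity `𝔣 ⊥ 𝔤`: the only normal positive functional dominated by both `𝔣` and
`𝔤` is `0`. -/
def VNSingular (𝔣 𝔤 : ↥M →ₗ[ℂ] ℂ) : Prop :=
  ∀ p : ↥M →ₗ[ℂ] ℂ, VNIsPos p → VNIsNormal p → VNLE p 𝔣 → VNLE p 𝔤 → p = 0

/-- `𝔣 = 𝔣r + 𝔣s` is a Lebesgue decomposition of `𝔣` with respect to `𝔤` within the
normal positive functionals. -/
def VNIsLebDecomp (𝔣 𝔤 𝔣r 𝔣s : ↥M →ₗ[ℂ] ℂ) : Prop :=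
  VNIsPos 𝔣r ∧ VNIsNormal 𝔣r ∧ VNIsPos 𝔣s ∧ VNIsNormal 𝔣s ∧
    𝔣 = 𝔣r + 𝔣s ∧ VNAbsCont 𝔣r 𝔤 ∧ VNSingular 𝔣s 𝔤

end VonNeumannDefs

section VonNeumannGlobal

variable {H : Type} [NormedAddCommGroup H] [InnerProductSpace ℂ H] [CompleteSpace H]

/-- The Lebesgue decomposition of normal positive functionals over the von Neumann
algebra `M` is unique. -/
def VNLebDecompUnique (M : VonNeumannAlgebra H) : Prop :=
  ∀ 𝔣 𝔤 : ↥M →ₗ[ℂ] ℂ, VNIsPos 𝔣 → VNIsNormal 𝔣 → VNIsPos 𝔤 → VNIsNormal 𝔤 →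
    ∀ 𝔣r 𝔣s 𝔣r' 𝔣s' : ↥M →ₗ[ℂ] ℂ,
      VNIsLebDecomp 𝔣 𝔤 𝔣r 𝔣s → VNIsLebDecomp 𝔣 𝔤 𝔣r' 𝔣s' → 𝔣r = 𝔣r' ∧ 𝔣s = 𝔣s'

/-- A von Neumann algebra is finite if `x⋆x = 1` implies `xx⋆ = 1`. -/
def VNFinite (M : VonNeumannAlgebra H) : Prop :=
  ∀ x : ↥M, star x * x = 1 → x * star x = 1

end VonNeumannGlobal

set_option linter.unusedSectionVars false

section VNWork

open scoped InnerProductSpace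
open Filter Topology

namespace VNW

variable {H : Type} [NormedAddCommGroup H] [InnerProductSpace ℂ H] [CompleteSpace H]

theorem isClosed_vN (M : VonNeumannAlgebra H) : IsClosed (M : Set (H →L[ℂ] H)) := by
  rw [← M.centralizer_centralizer]
  exact Set.isClosed_centralizer _

attribute [local instance] isClosed_vN

theorem mem_of_comm (M : VonNeumannAlgebra H) (x : H →L[ℂ] H)
    (h : ∀ y ∈ M.commutant, y * x = x * y) : x ∈ M := by
  rw [← M.commutant_commutant, VonNeumannAlgebra.mem_commutant_iff]
  exact h

variable (M : VonNeumannAlgebra H)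

theorem sqrt_mem (x : H →L[ℂ] H) (hx : x ∈ M) : CFC.sqrt x ∈ M := by
  refine mem_of_comm M _ fun y hy => ?_
  have : Commute x y := (VonNeumannAlgebra.mem_commutant_iff.1 hy) x hx
  exact (this.cfcₙ_nnreal _).symm

theorem sor : StarOrderedRing M := by
  refine StarOrderedRing.of_nonneg_iff' (fun {x y} hxy z => ?_) (fun x => ⟨fun hx => ?_, ?_⟩)
  · exact add_le_add_right (α := H →L[ℂ] H) hxy z
  · have hx' : (0 : H →L[ℂ] H) ≤ x := hx
    refine ⟨⟨CFC.sqrt (x : H →L[ℂ] H), sqrt_mem M _ x.2⟩, Subtype.ext ?_⟩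
    change (x : H →L[ℂ] H) = star (CFC.sqrt (x : H →L[ℂ] H)) * CFC.sqrt (x : H →L[ℂ] H)
    rw [(CFC.sqrt_nonneg (x : H →L[ℂ] H)).isSelfAdjoint.star_eq, CFC.sqrt_mul_sqrt_self _ hx']
  · rintro ⟨s, rfl⟩
    exact star_mul_self_nonneg (s : H →L[ℂ] H)

attribute [local instance] sor

noncomputable def toP {M : VonNeumannAlgebra H} (φ : M →ₗ[ℂ] ℂ) (h : VNIsPos φ) : M →ₚ[ℂ] ℂ :=
  PositiveLinearMap.mk₀ φ (fun x hx => by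
    obtain ⟨s, rfl⟩ := CStarAlgebra.nonneg_iff_eq_star_mul_self.1 hx
    exact h s)

theorem toP_apply {M : VonNeumannAlgebra H} (φ : M →ₗ[ℂ] ℂ) (h : VNIsPos φ) (x : M) :
  toP φ h x = φ x := rfl

/-- weak convergence along a directed set -/
def WLim {ι : Type} [Preorder ι] (x : ι → M) (z : M) : Prop :=
  ∀ v w : H, Tendsto (fun i => ⟪v, (x i : H →L[ℂ] H) w⟫_ℂ) atTop (𝓝 ⟪v, (z : H →L[ℂ] H) w⟫_ℂ)

variable {M}
theorem coe_le {x y : M} : x ≤ y ↔ (x : H →L[ℂ] H) ≤ y := Iff.rfl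

theorem opnonneg_iff (T : H →L[ℂ] H) : 0 ≤ T ↔ ∀ v, 0 ≤ ⟪v, T v⟫_ℂ := by
  rw [ContinuousLinearMap.nonneg_iff_isPositive]
  constructor
  · intro h v
    exact h.inner_nonneg_right v
  · intro h
    rw [ContinuousLinearMap.isPositive_iff_complex]
    intro v
    have h1 := h v
    have h2 : 0 ≤ ⟪T v, v⟫_ℂ := by
      rw [← inner_conj_symm]
      exact star_nonneg_iff.2 h1
    rw [Complex.nonneg_iff] at h2
    exact ⟨Complex.ext rfl h2.2, h2.1⟩

theorem le_iff_inner {x y : M} :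
    x ≤ y ↔ ∀ v, ⟪v, (x : H →L[ℂ] H) v⟫_ℂ ≤ ⟪v, (y : H →L[ℂ] H) v⟫_ℂ := by
  rw [coe_le, ← sub_nonneg, opnonneg_iff]
  refine forall_congr' fun v => ?_
  rw [sub_apply, inner_sub_right, sub_nonneg]

section nets
variable {ι : Type} [Preorder ι] [IsDirected ι (· ≤ ·)] [Nonempty ι]

theorem wlim_le {x : ι → M} {z y : M}
    (h : WLim M x z) (hy : ∀ i, x i ≤ y) : z ≤ y := by
  rw [le_iff_inner]
  intro v
  exact le_of_tendsto (h v v) (Eventually.of_forall fun i => le_iff_inner.1 (hy i) v)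

theorem le_wlim {x : ι → M} {z : M} (hm : Monotone x)
    (h : WLim M x z) (i : ι) : x i ≤ z := by
  rw [le_iff_inner]
  intro v
  refine ge_of_tendsto (h v v) ?_
  filter_upwards [eventually_ge_atTop i] with j hj
  exact le_iff_inner.1 (hm hj) v

theorem ge_wlim_anti {x : ι → M} {z : M} (hm : Antitone x)
    (h : WLim M x z) (i : ι) : z ≤ x i := by
  rw [le_iff_inner]
  intro v
  refine le_of_tendsto (h v v) ?_
  filter_upwards [eventually_ge_atTop i] with j hj
  exact le_iff_inner.1 (hm hj) v

theorem le_wlim_of_le {x : ι → M} {z y : M}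
    (h : WLim M x z) (hy : ∀ i, y ≤ x i) : y ≤ z := by
  rw [le_iff_inner]
  intro v
  exact ge_of_tendsto (h v v) (Eventually.of_forall fun i => le_iff_inner.1 (hy i) v)

theorem wlim_unique {x : ι → M} {z y : M} (h : WLim M x z) (h' : WLim M x y) : z = y := by
  refine Subtype.ext (ContinuousLinearMap.ext fun v => ext_inner_left ℂ fun w => ?_)
  exact tendsto_nhds_unique (h w v) (h' w v)

theorem wlim_mul {x : ι → M} {z : M} (h : WLim M x z) (a b : M) :
    WLim M (fun i => a * x i * b) (a * z * b) := by
  intro v w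
  have := h (ContinuousLinearMap.adjoint (a : H →L[ℂ] H) v) ((b : H →L[ℂ] H) w)
  simp only [ContinuousLinearMap.adjoint_inner_left] at this
  exact this

theorem exists_wlim {x : ι → M} (hm : Monotone x) (h0 : ∀ i, 0 ≤ x i) (h1 : ∀ i, x i ≤ 1) :
    ∃ z : M, WLim M x z := by
  have hn : ∀ i, ‖(x i : H →L[ℂ] H)‖ ≤ 1 := fun i =>
    (CStarAlgebra.norm_le_one_iff_of_nonneg (x i : H →L[ℂ] H) (h0 i)).2 (h1 i)
  let U : Ultrafilter ι := Ultrafilter.of atTop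
  have hU : (U : Filter ι) ≤ atTop := Ultrafilter.of_le _
  have hb : ∀ i v w, ‖⟪(x i : H →L[ℂ] H) v, w⟫_ℂ‖ ≤ 1 * ‖v‖ * ‖w‖ := by
    intro i v w
    refine (norm_inner_le_norm _ _).trans ?_
    gcongr
    exact (x i : H →L[ℂ] H).le_of_opNorm_le (hn i) v
  have hex : ∀ v w, ∃ c : ℂ, ‖c‖ ≤ 1 * ‖v‖ * ‖w‖ ∧
      Tendsto (fun i => ⟪(x i : H →L[ℂ] H) v, w⟫_ℂ) U (𝓝 c) := by
    intro v w
    have hc := isCompact_closedBall (0 : ℂ) (1 * ‖v‖ * ‖w‖)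
    obtain ⟨c, hc1, hc2⟩ := hc.ultrafilter_le_nhds
      (U.map fun i => ⟪(x i : H →L[ℂ] H) v, w⟫_ℂ) (by
        rw [le_principal_iff]
        refine Filter.mem_map.2 (Filter.univ_mem' fun i => ?_)
        simpa using hb i v w)
    exact ⟨c, by simpa using hc1, hc2⟩
  choose B hB1 hB2 using hex
  let L : H →ₗ⋆[ℂ] H →ₗ[ℂ] ℂ := LinearMap.mk₂'ₛₗ _ _ B
    (fun v v' w => tendsto_nhds_unique (hB2 _ _) (by
      simpa [inner_add_left] using (hB2 v w).add (hB2 v' w)))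
    (fun c v w => tendsto_nhds_unique (hB2 _ _) (by
      simpa [inner_smul_left, mul_comm] using (hB2 v w).const_mul (starRingEnd ℂ c)))
    (fun v w w' => tendsto_nhds_unique (hB2 _ _) (by
      simpa [inner_add_right] using (hB2 v w).add (hB2 v w')))
    (fun c v w => tendsto_nhds_unique (hB2 _ _) (by
      simpa [inner_smul_right] using (hB2 v w).const_mul c))
  let Bc : H →L⋆[ℂ] H →L[ℂ] ℂ := L.mkContinuous₂ 1 hB1
  let T : H →L[ℂ] H := InnerProductSpace.continuousLinearMapOfBilin Bc
  have hT : ∀ v w, ⟪T v, w⟫_ℂ = B v w := fun v w =>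
    InnerProductSpace.continuousLinearMapOfBilin_apply Bc v w
  have hTl : ∀ v w, Tendsto (fun i => ⟪(x i : H →L[ℂ] H) v, w⟫_ℂ) U (𝓝 ⟪T v, w⟫_ℂ) := by
    intro v w
    rw [hT]
    exact hB2 v w
  have hTM : T ∈ M := by
    refine mem_of_comm M _ fun y hy => ?_
    refine ContinuousLinearMap.ext fun v => ext_inner_right ℂ fun w => ?_
    have h1 := hTl v (ContinuousLinearMap.adjoint y w)
    have h2 := hTl (y v) w
    simp only [ContinuousLinearMap.adjoint_inner_right] at h1
    refine tendsto_nhds_unique h1 (h2.congr fun i => ?_)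
    have := (VonNeumannAlgebra.mem_commutant_iff.1 hy) (x i) (x i).2
    have := congrArg (fun S : H →L[ℂ] H => S v) this
    simp only [mul_apply_eq_comp] at this
    rw [this]
  have hdiag : ∀ v, Tendsto (fun i => ⟪(x i : H →L[ℂ] H) v, v⟫_ℂ) atTop (𝓝 ⟪T v, v⟫_ℂ) := by
    intro v
    have hre : ∀ i, ⟪(x i : H →L[ℂ] H) v, v⟫_ℂ = ((⟪(x i : H →L[ℂ] H) v, v⟫_ℂ).re : ℂ) := by
      intro i
      have := ((ContinuousLinearMap.isPositive_iff_complex _).1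
        ((ContinuousLinearMap.nonneg_iff_isPositive _).1 (coe_le.1 (h0 i))) v).1
      exact this.symm
    have hmono : Monotone fun i => (⟪(x i : H →L[ℂ] H) v, v⟫_ℂ).re := by
      intro i j hij
      have := ((ContinuousLinearMap.le_def _ _).1 (coe_le.1 (hm hij))).re_inner_nonneg_left v
      simpa [inner_sub_left] using this
    have hbdd : BddAbove (Set.range fun i => (⟪(x i : H →L[ℂ] H) v, v⟫_ℂ).re) := by
      refine ⟨1 * ‖v‖ * ‖v‖, ?_⟩
      rintro _ ⟨i, rfl⟩
      exact (Complex.re_le_norm _).trans (hb i v v)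
    have h1 := tendsto_atTop_ciSup hmono hbdd
    have h2 := (Complex.continuous_ofReal.tendsto _).comp h1
    have h3 : Tendsto (fun i => ⟪(x i : H →L[ℂ] H) v, v⟫_ℂ) atTop
      (𝓝 ((⨆ i, (⟪(x i : H →L[ℂ] H) v, v⟫_ℂ).re : ℝ) : ℂ)) := h2.congr fun i => (hre i).symm
    rwa [tendsto_nhds_unique (hTl v v) (h3.mono_left hU)]
  refine ⟨⟨T, hTM⟩, fun v w => ?_⟩
  have hpol : ∀ (S : H →L[ℂ] H), ⟪S w, v⟫_ℂ =
      (⟪S (v + w), v + w⟫_ℂ - ⟪S (v - w), v - w⟫_ℂ +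
        Complex.I * ⟪S (v + Complex.I • w), v + Complex.I • w⟫_ℂ -
        Complex.I * ⟪S (v - Complex.I • w), v - Complex.I • w⟫_ℂ) / 4 := fun S =>
    inner_map_polarization S.toLinearMap v w
  have key : Tendsto (fun i => ⟪(x i : H →L[ℂ] H) w, v⟫_ℂ) atTop (𝓝 ⟪T w, v⟫_ℂ) := by
    rw [hpol T]
    refine Tendsto.congr (fun i => (hpol (x i)).symm) ?_
    exact ((((hdiag _).sub (hdiag _)).add ((hdiag _).const_mul _)).sub
      ((hdiag _).const_mul _)).div_const _
  have := (Complex.continuous_conj.tendsto _).comp key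
  simpa [Function.comp_def, inner_conj_symm] using this

theorem normal_tendsto {φ : M →ₗ[ℂ] ℂ} (hp : VNIsPos φ) (hn : VNIsNormal φ) {x : ι → M} {z : M}
    (hm : Monotone x) (h0 : ∀ i, 0 ≤ x i) (hz : WLim M x z) :
    Tendsto (fun i => φ (x i)) atTop (𝓝 (φ z)) := by
  have hle := le_wlim hm hz
  have hlub := hn ι x z (fun i => (ContinuousLinearMap.nonneg_iff_isPositive _).1 (h0 i))
    (fun i j hij => hm hij)
    ⟨‖(z : H →L[ℂ] H)‖, fun i => CStarAlgebra.norm_le_norm_of_nonneg_of_le (coe_le.1 (h0 i)) (hle i)⟩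
    hle (fun y hy => wlim_le hz hy)
  have hmono : Monotone fun i => φ (x i) := fun i j hij => OrderHomClass.mono (toP φ hp) (hm hij)
  have hre : ∀ y : M, 0 ≤ y → φ y = ((φ y).re : ℂ) := by
    intro y hy
    have h1 : 0 ≤ φ y := (toP φ hp).map_nonneg hy
    exact Complex.ext rfl (Complex.nonneg_iff.1 h1).2.symm
  have hz0 : 0 ≤ z := (h0 (Classical.arbitrary ι)).trans (hle _)
  have hmr : Monotone fun i => (φ (x i)).re := fun i j hij => (Complex.le_def.1 (hmono hij)).1
  have hlubr : IsLUB (Set.range fun i => (φ (x i)).re) (φ z).re := by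
    constructor
    · rintro _ ⟨i, rfl⟩
      exact (Complex.le_def.1 (hlub.1 ⟨i, rfl⟩)).1
    · intro c hc
      have : φ z ≤ (c : ℂ) := hlub.2 (by
        rintro _ ⟨i, rfl⟩
        change φ (x i) ≤ _
        rw [hre _ (h0 i)]
        exact Complex.real_le_real.2 (hc ⟨i, rfl⟩))
      exact (Complex.le_def.1 this).1
  have h1 := (Complex.continuous_ofReal.tendsto _).comp (tendsto_atTop_isLUB hmr hlubr)
  rw [hre z hz0]
  exact h1.congr fun i => (hre _ (h0 i)).symm
end nets

open scoped Ring
section generic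
variable {A : Type} [CStarAlgebra A] [PartialOrder A] [StarOrderedRing A]

theorem cs (φ : A →ₚ[ℂ] ℂ) (x y : A) :
    ‖φ (star x * y)‖ ^ 2 ≤ (φ (star x * x)).re * (φ (star y * y)).re := by
  have h := norm_inner_le_norm (𝕜 := ℂ) (φ.toPreGNS x) (φ.toPreGNS y)
  rw [φ.preGNS_inner_def, φ.preGNS_norm_def, φ.preGNS_norm_def] at h
  simp only [PositiveLinearMap.ofPreGNS_toPreGNS] at h
  have hx : 0 ≤ (φ (star x * x)).re := (Complex.le_def.1 (φ.map_nonneg (star_mul_self_nonneg x))).1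
  have hy : 0 ≤ (φ (star y * y)).re := (Complex.le_def.1 (φ.map_nonneg (star_mul_self_nonneg y))).1
  calc _ ≤ (√(φ (star x * x)).re * √(φ (star y * y)).re) ^ 2 := by gcongr
    _ = _ := by rw [mul_pow, Real.sq_sqrt hx, Real.sq_sqrt hy]

theorem re_nonneg (φ : A →ₚ[ℂ] ℂ) {x : A} (h : 0 ≤ x) : 0 ≤ (φ x).re :=
  (Complex.le_def.1 (φ.map_nonneg h)).1

theorem re_mono (φ : A →ₚ[ℂ] ℂ) {x y : A} (h : x ≤ y) : (φ x).re ≤ (φ y).re :=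
  (Complex.le_def.1 (OrderHomClass.mono φ h)).1

theorem eq_re (φ : A →ₚ[ℂ] ℂ) {x : A} (h : 0 ≤ x) : φ x = ((φ x).re : ℂ) :=
  Complex.ext rfl (Complex.nonneg_iff.1 (φ.map_nonneg h)).2.symm

theorem sp_of_one_le {h : A} (h1 : 1 ≤ h) : IsStrictlyPositive h :=
  IsStrictlyPositive.of_le (isStrictlyPositive_one) h1

theorem inv_mul {h : A} (h1 : 1 ≤ h) : h⁻¹ʳ * h = 1 :=
  Ring.inverse_mul_cancel _ (sp_of_one_le h1).isUnit

theorem mul_inv {h : A} (h1 : 1 ≤ h) : h * h⁻¹ʳ = 1 :=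
  Ring.mul_inverse_cancel _ (sp_of_one_le h1).isUnit

theorem inv_anti {h h' : A} (h1 : 1 ≤ h) (hh : h ≤ h') : h'⁻¹ʳ ≤ h⁻¹ʳ :=
  CStarAlgebra.ringInverse_le_ringInverse hh (sp_of_one_le h1)

theorem inv_nonneg' {h : A} (h1 : 1 ≤ h) : 0 ≤ h⁻¹ʳ := by
  have h0 : 0 ≤ h := zero_le_one.trans h1
  have : star (h⁻¹ʳ) * h * h⁻¹ʳ = star (h⁻¹ʳ) := by rw [mul_assoc, mul_inv h1, mul_one]
  have h2 := star_left_conjugate_nonneg h0 (h⁻¹ʳ)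
  rw [this] at h2
  exact star_nonneg_iff.1 h2

theorem inv_le_one' {h : A} (h1 : 1 ≤ h) : h⁻¹ʳ ≤ 1 := by
  simpa using inv_anti le_rfl h1

theorem sqrt_star (r : A) : star (CFC.sqrt r) = CFC.sqrt r :=
  (CFC.sqrt_nonneg r).isSelfAdjoint.star_eq

/-- `sqrt (h⁻¹) * h * sqrt (h⁻¹) = 1`. -/
theorem sqrt_inv_conj {h : A} (h1 : 1 ≤ h) :
    CFC.sqrt (h⁻¹ʳ) * h * CFC.sqrt (h⁻¹ʳ) = 1 := by
  have hr := inv_nonneg' h1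
  set t := CFC.sqrt (h⁻¹ʳ)
  have htt : t * t = h⁻¹ʳ := CFC.sqrt_mul_sqrt_self _ hr
  have ht1 : t * (t * h) = 1 := by rw [← mul_assoc, htt, inv_mul h1]
  have ht2 : (h * t) * t = 1 := by rw [mul_assoc, htt, mul_inv h1]
  have : t * h = h * t := (left_inv_eq_right_inv ht2 ht1).symm
  rw [mul_assoc, ← this, ht1]

theorem norm_mul_sqrt_inv {h d : A} {c : ℝ} (hc : 0 < c) (h1 : 1 ≤ h)
    (hd : c • (star d * d) ≤ h) : ‖d * CFC.sqrt (h⁻¹ʳ)‖ ^ 2 ≤ 1 / c := by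
  set t := CFC.sqrt (h⁻¹ʳ) with ht
  have hts : star t = t := sqrt_star _
  have h2 : t * (c • (star d * d)) * t ≤ 1 := by
    have := star_left_conjugate_le_conjugate hd t
    rwa [hts, sqrt_inv_conj h1] at this
  have h3 : c • (star (d * t) * (d * t)) ≤ 1 := by
    refine le_trans (le_of_eq ?_) h2
    simp only [star_mul, hts, mul_smul_comm, smul_mul_assoc, mul_assoc]
  have h4 : 0 ≤ c • (star (d * t) * (d * t)) := smul_nonneg hc.le (star_mul_self_nonneg _)
  have h5 := (CStarAlgebra.norm_le_one_iff_of_nonneg _ h4).2 h3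
  rw [norm_smul, CStarRing.norm_star_mul_self, Real.norm_of_nonneg hc.le] at h5
  rw [le_div_iff₀ hc]
  nlinarith

theorem norm_conj_le {d k r : A} (hk : 0 ≤ k) (hkr : k ≤ r) :
    ‖d * CFC.sqrt k‖ ≤ ‖d * CFC.sqrt r‖ := by
  have e : ∀ r : A, 0 ≤ r → ‖d * CFC.sqrt r‖ ^ 2 = ‖d * r * star d‖ := by
    intro r hr
    rw [pow_two, ← CStarRing.norm_self_mul_star, star_mul, sqrt_star, mul_assoc,
      ← mul_assoc (CFC.sqrt r), CFC.sqrt_mul_sqrt_self _ hr, mul_assoc]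
  have : ‖d * CFC.sqrt k‖ ^ 2 ≤ ‖d * CFC.sqrt r‖ ^ 2 := by
    rw [e k hk, e r (hk.trans hkr)]
    exact CStarAlgebra.norm_le_norm_of_nonneg_of_le (star_right_conjugate_nonneg hk d)
      (star_right_conjugate_le_conjugate hkr d)
  exact (sq_le_sq₀ (norm_nonneg _) (norm_nonneg _)).1 this

theorem cs_inv (φ : A →ₚ[ℂ] ℂ) {h : A} (h1 : 1 ≤ h) (w : A) :
    ‖φ w‖ ^ 2 ≤ (φ (w * h⁻¹ʳ * star w)).re * (φ h).re := by
  have hr := inv_nonneg' h1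
  have h0 : 0 ≤ h := zero_le_one.trans h1
  set t := CFC.sqrt (h⁻¹ʳ)
  have hts : star t = t := sqrt_star _
  have htt : t * t = h⁻¹ʳ := CFC.sqrt_mul_sqrt_self _ hr
  have hh : star h = h := h0.isSelfAdjoint.star_eq
  have := cs φ (t * star w) (t * h)
  simp only [star_mul, star_star, hts, hh] at this
  have e1 : w * t * (t * h) = w := by
    rw [mul_assoc, ← mul_assoc t, htt, inv_mul h1, mul_one]
  have e2 : h * t * (t * h) = h := by
    rw [mul_assoc, ← mul_assoc t, htt, inv_mul h1, mul_one]
  have e3 : w * t * (t * star w) = w * h⁻¹ʳ * star w := by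
    rw [mul_assoc, ← mul_assoc t, htt, mul_assoc]
  rwa [e1, e2, e3] at this

theorem mul_eq_zero_of_conj {a k : A} (hk : 0 ≤ k) (h : a * k * star a = 0) : a * k = 0 := by
  have e : (a * CFC.sqrt k) * star (a * CFC.sqrt k) = 0 := by
    rw [star_mul, sqrt_star, mul_assoc, ← mul_assoc (CFC.sqrt k), CFC.sqrt_mul_sqrt_self _ hk,
      ← mul_assoc, h]
  have e2 := CStarRing.mul_star_self_eq_zero_iff _ |>.1 e
  rw [← CFC.sqrt_mul_sqrt_self k hk, ← mul_assoc, e2, zero_mul]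

theorem sq_le_self {r : A} (h0 : 0 ≤ r) (h1 : r ≤ 1) : r * r ≤ r := by
  have hs := CFC.sqrt_mul_sqrt_self r h0
  have := star_left_conjugate_le_conjugate h1 (CFC.sqrt r)
  rw [sqrt_star, mul_one, hs] at this
  refine le_trans (le_of_eq ?_) this
  generalize CFC.sqrt r = s at hs
  subst hs
  simp only [mul_assoc]

theorem mono_conj_norm (φ : A →ₚ[ℂ] ℂ) {z c : A} (hc : 0 ≤ c) :
    (φ (star z * c * z)).re ≤ ‖c‖ * (φ (star z * z)).re := by
  have h := re_mono φ (CStarAlgebra.star_left_conjugate_le_norm_smul (a := z) (b := c)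
    (hb := hc.isSelfAdjoint))
  refine h.trans (le_of_eq ?_)
  rw [← Complex.coe_smul, map_smul]
  simp

end generic

section nets2
variable {ι : Type} [Preorder ι] [IsDirected ι (· ≤ ·)] [Nonempty ι]

theorem exists_wlim_anti {r : ι → M} (hm : Antitone r) (h0 : ∀ i, 0 ≤ r i) (h1 : ∀ i, r i ≤ 1) :
    ∃ z : M, WLim M r z := by
  obtain ⟨z, hz⟩ := exists_wlim (x := fun i => 1 - r i) (fun i j hij => sub_le_sub_left (hm hij) 1)
    (fun i => sub_nonneg.2 (h1 i)) (fun i => sub_le_self _ (h0 i))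
  refine ⟨1 - z, fun v w => ?_⟩
  have := (tendsto_const_nhds (x := ⟪v, w⟫_ℂ)).sub (hz v w)
  simpa [inner_sub_right] using this

theorem normal_tendsto_anti {φ : M →ₗ[ℂ] ℂ} (hp : VNIsPos φ) (hn : VNIsNormal φ)
    {r : ι → M} {k : M} (hm : Antitone r) (h1 : ∀ i, r i ≤ 1) (hk : WLim M r k) (w : M) :
    Tendsto (fun i => φ (w * r i * star w)) atTop (𝓝 (φ (w * k * star w))) := by
  have h2 := normal_tendsto hp hn (x := fun i => w * (1 - r i) * star w) (z := w * (1 - k) * star w)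
    (fun i j hij => star_right_conjugate_le_conjugate (sub_le_sub_left (hm hij) 1) w)
    (fun i => star_right_conjugate_nonneg (sub_nonneg.2 (h1 i)) w)
    (wlim_mul (fun v w => by
      have := (tendsto_const_nhds (x := ⟪v, w⟫_ℂ)).sub (hk v w)
      simpa [inner_sub_right] using this) w (star w))
  have h3 := (tendsto_const_nhds (x := φ (w * star w))).sub h2
  simpa [mul_sub, sub_mul] using h3

end nets2

section generic2
variable {A : Type} [CStarAlgebra A] [PartialOrder A] [StarOrderedRing A]

theorem one_sub_inv_le {h : A} (h1 : 1 ≤ h) : 1 - h⁻¹ʳ ≤ h - 1 := by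
  have hs : star (1 - h⁻¹ʳ) = 1 - h⁻¹ʳ := by
    rw [star_sub, star_one, (inv_nonneg' h1).isSelfAdjoint.star_eq]
  have := star_left_conjugate_nonneg (zero_le_one.trans h1) (1 - h⁻¹ʳ)
  rw [hs, sub_mul, one_mul, inv_mul h1, mul_sub, sub_mul h 1 (h⁻¹ʳ), mul_inv h1] at this
  rw [← sub_nonneg]
  refine this.trans (le_of_eq ?_)
  simp only [mul_one, one_mul]

theorem mul_eq_zero_of_inv {d k : A} (hk : 0 ≤ k)
    (H : ∀ c : ℕ, ∃ h : A, 1 ≤ h ∧ (c : ℝ) • (star d * d) ≤ h ∧ k ≤ h⁻¹ʳ) : d * k = 0 := by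
  have hb : ∀ c : ℕ, ‖d * CFC.sqrt k‖ ^ 2 ≤ 1 / ((c : ℝ) + 1) := by
    intro c
    obtain ⟨h, h1, h2, h3⟩ := H (c + 1)
    have := norm_mul_sqrt_inv (c := ((c + 1 : ℕ) : ℝ)) (by positivity) h1 h2
    push_cast at this
    refine le_trans ?_ this
    gcongr
    exact norm_conj_le hk h3
  have h0 : ‖d * CFC.sqrt k‖ ^ 2 ≤ 0 :=
    ge_of_tendsto' tendsto_one_div_add_atTop_nhds_zero_nat hb
  have h1 : d * CFC.sqrt k = 0 := by
    rw [← norm_eq_zero]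
    exact pow_eq_zero_iff (two_ne_zero) |>.1 (le_antisymm h0 (by positivity))
  rw [← CFC.sqrt_mul_sqrt_self k hk, ← mul_assoc, h1, zero_mul]

theorem one_le_add {x : A} (hx : 0 ≤ x) : 1 ≤ 1 + x := le_add_of_nonneg_right hx

theorem smul_sq_nonneg (c : ℕ) (d : A) : 0 ≤ (c : ℝ) • (star d * d) :=
  smul_nonneg (Nat.cast_nonneg _) (star_mul_self_nonneg _)

end generic2

theorem support {g : M →ₗ[ℂ] ℂ} (hp : VNIsPos g) (hn : VNIsNormal g) :
    ∃ z : M, z * z = z ∧ star z = z ∧ g z = 0 ∧ ∀ y : M, g (star y * y) = 0 → y * z = y := by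
  let ι := {x : M // 0 ≤ x ∧ g x = 0}
  have : Nonempty ι := ⟨⟨0, le_rfl, map_zero g⟩⟩
  have : IsDirected ι (· ≤ ·) := ⟨fun a b => ⟨⟨a.1 + b.1, add_nonneg a.2.1 b.2.1, by
    rw [map_add, a.2.2, b.2.2, add_zero]⟩, by
      exact (le_add_of_nonneg_right b.2.1 : a.1 ≤ a.1 + b.1), by
      exact (le_add_of_nonneg_left a.2.1 : b.1 ≤ a.1 + b.1)⟩⟩
  let r : ι → M := fun i => (1 + i.1)⁻¹ʳ
  have hr1 : ∀ i : ι, (1 : M) ≤ 1 + i.1 := fun i => one_le_add i.2.1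
  have hanti : Antitone r := fun i j hij => inv_anti (hr1 i) (by
    have : i.1 ≤ j.1 := hij
    gcongr)
  have h0 : ∀ i, 0 ≤ r i := fun i => inv_nonneg' (hr1 i)
  have h1 : ∀ i, r i ≤ 1 := fun i => inv_le_one' (hr1 i)
  obtain ⟨k, hk⟩ := exists_wlim_anti hanti h0 h1
  have hk0 : 0 ≤ k := le_wlim_of_le hk h0
  have hk1 : k ≤ 1 := wlim_le hk h1
  have hgr : ∀ i, g (1 - r i) = 0 := by
    intro i
    have hle : 1 - r i ≤ i.1 := by
      have := one_sub_inv_le (hr1 i)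
      rwa [add_sub_cancel_left] at this
    have h2 : g (1 - r i) ≤ g i.1 := OrderHomClass.mono (toP g hp) hle
    have h3 : 0 ≤ g (1 - r i) := (toP g hp).map_nonneg (sub_nonneg.2 (h1 i))
    rw [i.2.2] at h2
    exact le_antisymm h2 h3
  have hgk : g (1 - k) = 0 := by
    have h4 := normal_tendsto_anti hp hn hanti h1 hk 1
    simp only [one_mul, star_one, mul_one] at h4
    have h5 : ∀ i, g (r i) = g 1 := by
      intro i
      have := hgr i
      rw [map_sub, sub_eq_zero] at this
      exact this.symm
    simp only [h5] at h4
    rw [map_sub, ← tendsto_nhds_unique h4 tendsto_const_nhds, sub_self]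
  have key : ∀ y : M, g (star y * y) = 0 → y * (1 - k) = y := by
    intro y hy
    have : y * k = 0 := by
      refine mul_eq_zero_of_inv hk0 fun c => ?_
      let i : ι := ⟨(c : ℝ) • (star y * y), smul_sq_nonneg c y, by
        rw [← Complex.coe_smul, map_smul, hy, smul_zero]⟩
      exact ⟨1 + i.1, hr1 i, le_add_of_nonneg_left zero_le_one, ge_wlim_anti hanti hk i⟩
    rw [mul_sub, this, mul_one, sub_zero]
  have hz0 : 0 ≤ 1 - k := sub_nonneg.2 hk1
  refine ⟨1 - k, ?_, hz0.isSelfAdjoint.star_eq, hgk, key⟩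
  have h6 := key (CFC.sqrt (1 - k)) (by rw [sqrt_star, CFC.sqrt_mul_sqrt_self _ hz0, hgk])
  have h7 := CFC.sqrt_mul_sqrt_self (1 - k) hz0
  conv_lhs => rw [← h7]
  rw [h7, ]
  conv_lhs => enter [1]; rw [← h7]
  rw [mul_assoc, h6, h7]

theorem kerproj (b : M) : ∃ (r : ℕ → M) (e : M), Antitone r ∧ (∀ j, 0 ≤ r j) ∧ (∀ j, r j ≤ 1) ∧
    WLim M r e ∧ e * e = e ∧ star e = e ∧ b * e = 0 ∧ (∀ y : M, b * y = 0 → e * y = y) ∧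
    (∀ j : ℕ, ((j : ℝ) • (r j * star b)) * b = 1 - r j) ∧
    (∀ v : H, (b : H →L[ℂ] H) v = 0 → (e : H →L[ℂ] H) v = v) := by
  let r : ℕ → M := fun j => (1 + (j : ℝ) • (star b * b))⁻¹ʳ
  have hr1 : ∀ j : ℕ, (1 : M) ≤ 1 + (j : ℝ) • (star b * b) := fun j => one_le_add (smul_sq_nonneg j b)
  have hanti : Antitone r := fun i j hij => inv_anti (hr1 i) (by
    gcongr
    exact star_mul_self_nonneg b)
  have h0 : ∀ i, 0 ≤ r i := fun i => inv_nonneg' (hr1 i)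
  have h1 : ∀ i, r i ≤ 1 := fun i => inv_le_one' (hr1 i)
  obtain ⟨e, he⟩ := exists_wlim_anti hanti h0 h1
  have he0 : 0 ≤ e := le_wlim_of_le he h0
  have hbe : b * e = 0 := mul_eq_zero_of_inv he0 fun c =>
    ⟨_, hr1 c, le_add_of_nonneg_left zero_le_one, ge_wlim_anti hanti he c⟩
  have hy : ∀ y : M, b * y = 0 → e * y = y := by
    intro y hy
    have : ∀ j, r j * y = y := by
      intro j
      have h2 : (1 + (j : ℝ) • (star b * b)) * y = y := by
        rw [add_mul, one_mul, smul_mul_assoc, mul_assoc, hy, mul_zero, smul_zero, add_zero]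
      conv_lhs => rw [← h2]
      rw [← mul_assoc, inv_mul (hr1 j), one_mul]
    have h3 := wlim_mul he 1 y
    simp only [one_mul, this] at h3
    exact wlim_unique h3 (fun v w => tendsto_const_nhds)
  refine ⟨r, e, hanti, h0, h1, he, hy e hbe, he0.isSelfAdjoint.star_eq, hbe, hy, fun j => ?_, ?_⟩
  · have := inv_mul (hr1 j)
    rw [mul_add, mul_one, mul_smul_comm] at this
    rw [smul_mul_assoc, mul_assoc, eq_sub_iff_add_eq, add_comm]
    exact this
  · intro v hv
    have : ∀ j, (r j : H →L[ℂ] H) v = v := by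
      intro j
      have h2 : ((1 + (j : ℝ) • (star b * b) : M) : H →L[ℂ] H) v = v := by
        change v + (j : ℝ) • ((star b : M) : H →L[ℂ] H) ((b : H →L[ℂ] H) v) = v
        rw [hv, map_zero, smul_zero, add_zero]
      conv_lhs => rw [← h2]
      have h3 : ((r j * (1 + (j : ℝ) • (star b * b)) : M) : H →L[ℂ] H) v = ((1 : M) : H →L[ℂ] H) v := by
        rw [inv_mul (hr1 j)]
      exact h3
    refine ext_inner_left ℂ fun w => ?_
    have h4 := he w v
    simp only [this] at h4
    exact (tendsto_nhds_unique h4 tendsto_const_nhds)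

theorem fin_inj (hM : VNFinite M) (T : M) (hT : ∀ y : M, y * T = 0 → y = 0) (y : M)
    (hy : T * y = 0) : y = 0 := by
  obtain ⟨r, e, -, -, -, -, -, hes, hbe, -, -, hv⟩ := kerproj (star T)
  have he : e = 0 := by
    refine hT e ?_
    have := congrArg star hbe
    rwa [star_mul, star_star, star_zero, hes] at this
  have hTinj : ∀ v : H, ((star T : M) : H →L[ℂ] H) v = 0 → v = 0 := by
    intro v h
    rw [← hv v h, he]
    rfl
  have hnn : 0 ≤ T * star T := mul_star_self_nonneg T
  obtain ⟨D, hDs, hDD⟩ : ∃ D : M, star D = D ∧ D * D = T * star T :=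
    ⟨CFC.sqrt (T * star T), sqrt_star _, CFC.sqrt_mul_sqrt_self _ hnn⟩
  have hadj : ∀ (x : M) (v w : H), ⟪(x : H →L[ℂ] H) v, w⟫_ℂ = ⟪v, ((star x : M) : H →L[ℂ] H) w⟫_ℂ := by
    intro x v w
    exact (ContinuousLinearMap.adjoint_inner_right (x : H →L[ℂ] H) v w).symm
  have hnorm : ∀ v : H, ‖((star T : M) : H →L[ℂ] H) v‖ = ‖(D : H →L[ℂ] H) v‖ := by
    intro v
    rw [← sq_eq_sq₀ (norm_nonneg _) (norm_nonneg _), ← inner_self_eq_norm_sq (𝕜 := ℂ),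
      ← inner_self_eq_norm_sq (𝕜 := ℂ), hadj, hadj, hDs, star_star]
    change RCLike.re ⟪v, ((T * star T : M) : H →L[ℂ] H) v⟫_ℂ
      = RCLike.re ⟪v, ((D * D : M) : H →L[ℂ] H) v⟫_ℂ
    rw [hDD]
  have hDinj : ∀ v : H, (D : H →L[ℂ] H) v = 0 → v = 0 := by
    intro v h
    refine hTinj v ?_
    rw [← norm_eq_zero, hnorm, h, norm_zero]
  have hdense : DenseRange (D : H →L[ℂ] H) := by
    have h1 := ContinuousLinearMap.orthogonal_ker (D : H →L[ℂ] H)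
    have h2 : (D : H →L[ℂ] H).ker = ⊥ := by
      rw [LinearMap.ker_eq_bot']
      exact hDinj
    have h3 : ContinuousLinearMap.adjoint (D : H →L[ℂ] H) = D := congrArg Subtype.val hDs
    rw [h2, h3, Submodule.bot_orthogonal_eq_top] at h1
    have h4 := Submodule.dense_iff_topologicalClosure_eq_top.2 h1.symm
    exact h4
  let V : H →L[ℂ] H := (((star T : M) : H →L[ℂ] H) : H →ₗ[ℂ] H).extendOfNorm ((D : H →L[ℂ] H) : H →ₗ[ℂ] H)
  have hVD : ∀ v, V ((D : H →L[ℂ] H) v) = ((star T : M) : H →L[ℂ] H) v := fun v =>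
    LinearMap.extendOfNorm_eq (f := (((star T : M) : H →L[ℂ] H) : H →ₗ[ℂ] H)) hdense
      ⟨1, fun x => by rw [one_mul]; exact (hnorm x).le⟩ v
  have hViso : ∀ v, ‖V v‖ = ‖v‖ := by
    intro v
    refine hdense.induction_on (p := fun v => ‖V v‖ = ‖v‖) v (isClosed_eq (by fun_prop) (by fun_prop)) ?_
    intro v
    rw [hVD, hnorm]
  have hVM : V ∈ M := by
    refine mem_of_comm M V fun y hy => ?_
    have hyc := VonNeumannAlgebra.mem_commutant_iff.1 hy
    refine ContinuousLinearMap.ext fun v => ?_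
    refine hdense.induction_on (p := fun v => (y * V) v = (V * y) v) v
      (isClosed_eq (by fun_prop) (by fun_prop)) ?_
    intro v
    change y (V ((D : H →L[ℂ] H) v)) = V (y ((D : H →L[ℂ] H) v))
    have h1 := congrArg (fun f : H →L[ℂ] H => f v) (hyc D D.2)
    have h2 := congrArg (fun f : H →L[ℂ] H => f v) (hyc (star T : M) (star T : M).2)
    change (D : H →L[ℂ] H) (y v) = y ((D : H →L[ℂ] H) v) at h1
    change ((star T : M) : H →L[ℂ] H) (y v) = y (((star T : M) : H →L[ℂ] H) v) at h2
    rw [← h1, hVD, hVD, h2]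
  let W : M := ⟨V, hVM⟩
  have hW1 : star W * W = 1 := by
    refine Subtype.ext ?_
    change ContinuousLinearMap.adjoint V * V = 1
    exact (ContinuousLinearMap.norm_map_iff_adjoint_comp_self V).1 hViso
  have hW2 := hM W hW1
  have hWD : W * D = star T := Subtype.ext (ContinuousLinearMap.ext hVD)
  have hT2 : T = D * star W := by
    rw [← star_star T, ← hWD, star_mul, hDs]
  have h5 : star W * y = 0 := by
    refine Subtype.ext (ContinuousLinearMap.ext fun v => ?_)
    refine hDinj _ ?_
    have h6 : D * (star W * y) = 0 := by rw [← mul_assoc, ← hT2, hy]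
    exact congrArg (fun f : M => (f : H →L[ℂ] H) v) h6
  rw [← one_mul y, ← hW2, mul_assoc, h5, mul_zero]

theorem estE {φ : M →ₗ[ℂ] ℂ} (hp : VNIsPos φ) (hn : VNIsNormal φ) {h : ℕ → M} {k : M} {C : ℝ}
    (h1 : ∀ m, 1 ≤ h m) (hmono : Monotone h) (hC : ∀ m, (φ (h m)).re ≤ C)
    (hk : WLim M (fun m => (h m)⁻¹ʳ) k) (w : M) :
    ‖φ w‖ ^ 2 ≤ (φ (w * k * star w)).re * C := by
  have ht := normal_tendsto_anti hp hn (r := fun m => (h m)⁻¹ʳ)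
    (fun i j hij => inv_anti (h1 i) (hmono hij)) (fun i => inv_le_one' (h1 i)) hk w
  have ht2 := ((Complex.continuous_re.tendsto _).comp ht).mul_const C
  refine ge_of_tendsto' ht2 fun m => ?_
  refine (cs_inv (toP φ hp) (h1 m) w).trans ?_
  exact mul_le_mul_of_nonneg_left (hC m)
    (re_nonneg (toP φ hp) (star_right_conjugate_nonneg (inv_nonneg' (h1 m)) w))

theorem pos_continuous {φ : M →ₗ[ℂ] ℂ} (hp : VNIsPos φ) : Continuous φ :=
  map_continuous (toP φ hp)

theorem closable0 (hM : VNFinite M) {f g : M →ₗ[ℂ] ℂ} (hfp : VNIsPos f) (hfn : VNIsNormal f)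
    (hgp : VNIsPos g) (hgn : VNIsNormal g) (z : M) (hzs : star z = z)
    (hz : ∀ y : M, g (star y * y) = 0 → y * z = y) (a : ℕ → M) (haz : ∀ n, a n * z = 0)
    (hdf : ∀ n, (f (star (a (n + 1) - a n) * (a (n + 1) - a n))).re ≤ (1 / 8) ^ n)
    (hdg : ∀ n, (g (star (a (n + 1) - a n) * (a (n + 1) - a n))).re ≤ (1 / 8) ^ n)
    (hg0 : Tendsto (fun n => (g (star (a n) * a n)).re) atTop (𝓝 0)) :
    Tendsto (fun n => (f (star (a n) * a n)).re) atTop (𝓝 0) := by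
  let d : ℕ → M := fun n => a (n + 1) - a n
  let h : ℕ → M := fun m => 1 + ∑ n ∈ Finset.range m, (4 : ℝ) ^ n • (star (d n) * d n)
  have hterm : ∀ n, 0 ≤ (4 : ℝ) ^ n • (star (d n) * d n) := fun n =>
    smul_nonneg (by positivity) (star_mul_self_nonneg _)
  have h1 : ∀ m, 1 ≤ h m := fun m => one_le_add (Finset.sum_nonneg fun n _ => hterm n)
  have hmono : Monotone h := monotone_nat_of_le_succ fun m => by
    simp only [h, Finset.sum_range_succ, ← add_assoc]
    exact le_add_of_nonneg_right (hterm m)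
  have hbound : ∀ φ : M →ₗ[ℂ] ℂ, (∀ n, (φ (star (d n) * d n)).re ≤ (1 / 8) ^ n) →
      ∀ m, (φ (h m)).re ≤ (φ 1).re + 2 := by
    intro φ hφ m
    simp only [h, map_add, map_sum, Complex.add_re, Complex.re_sum]
    gcongr
    calc _ ≤ ∑ n ∈ Finset.range m, (1 / 2 : ℝ) ^ n := by
          refine Finset.sum_le_sum fun n _ => ?_
          rw [← Complex.coe_smul, map_smul, smul_eq_mul, Complex.re_ofReal_mul]
          calc _ ≤ (4 : ℝ) ^ n * (1 / 8) ^ n := by gcongr; exact hφ n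
            _ = _ := by rw [← mul_pow]; norm_num
      _ ≤ 2 := sum_geometric_two_le m
  have hanti : Antitone (fun m => (h m)⁻¹ʳ) := fun i j hij => inv_anti (h1 i) (hmono hij)
  obtain ⟨k, hk⟩ := exists_wlim_anti hanti (fun i => inv_nonneg' (h1 i)) (fun i => inv_le_one' (h1 i))
  have hk0 : 0 ≤ k := le_wlim_of_le hk (fun i => inv_nonneg' (h1 i))
  obtain ⟨s, hs0, hss, hsk, hsd⟩ : ∃ s : M, 0 ≤ s ∧ star s = s ∧ s * s = k ∧ s = CFC.sqrt k :=
    ⟨CFC.sqrt k, CFC.sqrt_nonneg k, sqrt_star k, CFC.sqrt_mul_sqrt_self k hk0, rfl⟩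
  have hds : ∀ n, ‖d n * s‖ ≤ (1 / 2) ^ n := by
    intro n
    have h2 : (4 : ℝ) ^ n • (star (d n) * d n) ≤ h (n + 1) := by
      have h3 := Finset.single_le_sum (s := Finset.range (n + 1)) (fun i _ => hterm i)
        (Finset.mem_range.2 (Nat.lt_succ_self n))
      exact h3.trans (le_add_of_nonneg_left zero_le_one)
    have h4 := norm_mul_sqrt_inv (by positivity) (h1 (n + 1)) h2
    have h5 := norm_conj_le (d := d n) hk0 (ge_wlim_anti hanti hk (n + 1))
    rw [← hsd] at h5
    refine (sq_le_sq₀ (norm_nonneg _) (by positivity)).1 ?_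
    calc _ ≤ _ := pow_le_pow_left₀ (norm_nonneg _) h5 2
      _ ≤ _ := h4
      _ = _ := by rw [← pow_mul, mul_comm, pow_mul, ← one_div_pow]; norm_num
  obtain ⟨b, hb⟩ : ∃ b : M, Tendsto (fun n => a n * s) atTop (𝓝 b) := by
    refine cauchySeq_tendsto_of_complete (cauchySeq_of_le_geometric (1 / 2) 1 (by norm_num) fun n => ?_)
    rw [dist_comm, dist_eq_norm, ← sub_mul, one_mul]
    exact hds n
  have hEf := estE hfp hfn h1 hmono (hbound f hdf) hk
  have hEg := estE hgp hgn h1 hmono (hbound g hdg) hk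
  set Cf := (f 1).re + 2
  set Cg := (g 1).re + 2
  -- relations with z
  have hkz : k * z = z := by
    have h2 : ∀ m, (h m)⁻¹ʳ * z = z := by
      intro m
      have h3 : h m * z = z := by
        simp only [h, add_mul, one_mul, Finset.sum_mul]
        rw [Finset.sum_eq_zero, add_zero]
        intro n _
        rw [smul_mul_assoc, mul_assoc, sub_mul, haz, haz, sub_zero, mul_zero, smul_zero]
      conv_lhs => rw [← h3]
      rw [← mul_assoc, inv_mul (h1 m), one_mul]
    have h3 := wlim_mul hk 1 z
    simp only [one_mul, h2] at h3
    exact wlim_unique h3 (fun v w => tendsto_const_nhds)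
  have hsz : s * z = z := by
    have h2 : (1 + s) * (s * z - z) = 0 := by
      rw [add_mul, one_mul, mul_sub, ← mul_assoc, hsk, hkz]
      abel
    have h3 : s * z - z = 0 := by
      rw [← one_mul (s * z - z), ← inv_mul (one_le_add hs0), mul_assoc, h2, mul_zero]
    exact sub_eq_zero.1 h3
  have hzs' : z * s = z := by
    have := congrArg star hsz
    rwa [star_mul, hss, hzs] at this
  have hbz : b * z = 0 := by
    have h2 := hb.mul_const z
    simp only [mul_assoc, hsz, haz] at h2
    exact tendsto_nhds_unique h2 tendsto_const_nhds
  obtain ⟨r, e, hra, hr0, hr1, hre, hee, hes, hbe, hker, hrb, -⟩ := kerproj b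
  have hez : e * z = z := hker z hbz
  have hze : z * e = z := by
    have := congrArg star hez
    rwa [star_mul, hes, hzs] at this
  have hclaim : ∀ y : M, y * (s * e) = 0 → g (star y * y) = 0 := by
    intro y hy
    set Y := star y * y with hY
    have hYs : star Y = Y := by simp [hY]
    have hj : ∀ j : ℕ, ‖g Y‖ ^ 2 ≤ (g ((Y * s) * r j * star (Y * s))).re * Cg := by
      intro j
      let c : M := y * s * ((j : ℝ) • (r j * star b))
      have hcb : c * b = y * s * (1 - r j) := by
        simp only [c]
        rw [mul_assoc, hrb]
      let w : ℕ → M := fun n => star y * (y - c * a n)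
      have hw1 : Tendsto (fun n => ‖g (w n)‖ ^ 2) atTop (𝓝 (‖g Y‖ ^ 2)) := by
        have h2 : Tendsto (fun n => g (star y * c * a n)) atTop (𝓝 0) := by
          rw [tendsto_zero_iff_norm_tendsto_zero]
          have h3 : ∀ n, ‖g (star y * c * a n)‖ ^ 2 ≤
              (g (star y * c * star (star y * c))).re * (g (star (a n) * a n)).re := by
            intro n
            have := cs (toP g hgp) (star (star y * c)) (a n)
            rwa [star_star] at this
          have h4 := hg0.const_mul (g (star y * c * star (star y * c))).re
          rw [mul_zero] at h4
          have h5 := squeeze_zero (fun n => by positivity) h3 h4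
          have h6 := (Real.continuous_sqrt.tendsto _).comp h5
          simpa [Function.comp_def, Real.sqrt_sq (norm_nonneg _)] using h6
        have h3 := ((tendsto_const_nhds (x := g Y)).sub h2).norm.pow 2
        rw [sub_zero] at h3
        refine h3.congr fun n => ?_
        simp only [w, mul_sub, map_sub, hY, mul_assoc]
      have hw2 : Tendsto (fun n => w n * s) atTop (𝓝 (Y * s * r j)) := by
        have h2 : Tendsto (fun n => star y * (y * s - c * (a n * s))) atTop
            (𝓝 (star y * (y * s - c * b))) :=
          (tendsto_const_nhds.sub (hb.const_mul c)).const_mul (star y)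
        rw [hcb] at h2
        have e1 : star y * (y * s - y * s * (1 - r j)) = Y * s * r j := by
          rw [mul_sub (y * s), mul_one, sub_sub_cancel, hY]
          simp only [mul_assoc]
        rw [e1] at h2
        refine h2.congr fun n => ?_
        simp only [w, mul_assoc, sub_mul]
      have hw3 : Tendsto (fun n => (g (w n * k * star (w n))).re * Cg) atTop
          (𝓝 ((g ((Y * s * r j) * star (Y * s * r j))).re * Cg)) := by
        have h2 := ((Complex.continuous_re.comp (pos_continuous hgp)).tendsto _).comp
          (hw2.mul hw2.star)
        refine (h2.mul_const Cg).congr fun n => ?_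
        simp only [Function.comp_def, star_mul, hss, ← hsk, mul_assoc]
      have h4 := le_of_tendsto_of_tendsto' hw1 hw3 (fun n => hEg (w n))
      refine h4.trans ?_
      have hCg : 0 ≤ Cg := by
        have : 0 ≤ (g 1).re := re_nonneg (toP g hgp) zero_le_one
        positivity
      refine mul_le_mul_of_nonneg_right ?_ hCg
      refine re_mono (toP g hgp) ?_
      have h5 := star_right_conjugate_le_conjugate (sq_le_self (hr0 j) (hr1 j)) (Y * s)
      refine le_trans (le_of_eq ?_) h5
      rw [star_mul, (hr0 j).isSelfAdjoint.star_eq]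
      simp only [mul_assoc]
    have hlim := normal_tendsto_anti hgp hgn hra hr1 hre (Y * s)
    have h0 : Y * s * e = 0 := by rw [hY, mul_assoc, mul_assoc, hy, mul_zero]
    rw [h0, zero_mul, map_zero] at hlim
    have hlim2 := ((Complex.continuous_re.tendsto _).comp hlim).mul_const Cg
    rw [Complex.zero_re, zero_mul] at hlim2
    have h7 : ‖g Y‖ ^ 2 ≤ 0 := ge_of_tendsto' hlim2 hj
    rw [← norm_eq_zero]
    exact pow_eq_zero_iff (two_ne_zero) |>.1 (le_antisymm h7 (by positivity))
  have hTinj : ∀ y : M, y * (s * e) = 0 → y = 0 := by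
    intro y hy
    have h2 := hz y (hclaim y hy)
    have h3 : y = y * z * s * e := by rw [mul_assoc y, hzs', mul_assoc, hze, h2]
    rw [h3, h2, mul_assoc, hy]
  have he1 : 1 - e = 0 := fin_inj hM (s * e) hTinj (1 - e) (by
    rw [mul_assoc, mul_sub, mul_one, hee, sub_self, mul_zero])
  have hb0 : b = 0 := by
    rw [← hbe, ← sub_eq_zero.1 he1, mul_one]
  rw [hb0] at hb
  have hCf : 0 ≤ Cf := by
    have : 0 ≤ (f 1).re := re_nonneg (toP f hfp) zero_le_one
    positivity
  have hfin : ∀ n, (f (star (a n) * a n)).re ≤ ‖a n * s‖ ^ 2 * Cf := by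
    intro n
    have hx : 0 ≤ (f (star (a n) * a n)).re := re_nonneg (toP f hfp) (star_mul_self_nonneg _)
    set x := (f (star (a n) * a n)).re with hxd
    have h2 := hEf (star (a n) * a n)
    have h3 := mono_conj_norm (toP f hfp) (z := a n) (c := a n * k * star (a n))
      (star_right_conjugate_nonneg hk0 _)
    have h4 : ‖a n * k * star (a n)‖ = ‖a n * s‖ ^ 2 := by
      rw [pow_two, ← CStarRing.norm_self_mul_star, star_mul, hss, ← hsk]
      simp only [mul_assoc]
    have h5 : star (a n) * (a n * k * star (a n)) * a n =
      star (a n) * a n * k * star (star (a n) * a n) := by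
      simp only [star_mul, star_star, mul_assoc]
    rw [h4, h5] at h3
    have h6 : x ≤ ‖f (star (a n) * a n)‖ := Complex.re_le_norm _
    have h7 : x ^ 2 ≤ ‖a n * s‖ ^ 2 * x * Cf := by
      calc x ^ 2 ≤ ‖f (star (a n) * a n)‖ ^ 2 := pow_le_pow_left₀ hx h6 2
        _ ≤ _ := h2
        _ ≤ _ := mul_le_mul_of_nonneg_right h3 hCf
    rcases hx.eq_or_lt with h8 | h8
    · rw [← h8]; positivity
    · by_contra h9
      push Not at h9
      nlinarith
  have hlim := (hb.norm.pow 2).mul_const Cf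
  rw [norm_zero, zero_pow two_ne_zero, zero_mul] at hlim
  exact squeeze_zero (fun n => re_nonneg (toP f hfp) (star_mul_self_nonneg _)) hfin hlim

theorem map_conj_compl {φ : M →ₗ[ℂ] ℂ} (hp : VNIsPos φ) {z : M} (hzz : z * z = z)
    (hzs : star z = z) (h0 : φ z = 0) (a : M) :
    φ (star (a * (1 - z)) * (a * (1 - z))) = φ (star a * a) := by
  have h1 : ∀ w, φ (w * z) = 0 := by
    intro w
    have := cs (toP φ hp) (star w) z
    simp only [toP_apply, star_star, hzs, hzz, h0, Complex.zero_re, mul_zero] at this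
    rw [← norm_eq_zero]
    exact pow_eq_zero_iff (two_ne_zero) |>.1 (le_antisymm this (by positivity))
  have h2 : ∀ w, φ (z * w) = 0 := by
    intro w
    have := cs (toP φ hp) z w
    simp only [toP_apply, hzs, hzz, h0, Complex.zero_re, zero_mul] at this
    rw [← norm_eq_zero]
    exact pow_eq_zero_iff (two_ne_zero) |>.1 (le_antisymm this (by positivity))
  have e : star (a * (1 - z)) * (a * (1 - z)) =
      star a * a - z * (star a * a) - (star a * a) * z + z * (star a * a * z) := by
    simp only [star_mul, star_sub, hzs, sub_mul, mul_sub, mul_one, mul_assoc]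
    abel
  rw [e, map_add, map_sub, map_sub, h1, h2, h2]
  simp

theorem closable (hM : VNFinite M) {f g : M →ₗ[ℂ] ℂ} (hfp : VNIsPos f) (hfn : VNIsNormal f)
    (hgp : VNIsPos g) (hgn : VNIsNormal g)
    (hker : ∀ y : M, g (star y * y) = 0 → f (star y * y) = 0) (a : ℕ → M)
    (hdf : ∀ n, (f (star (a (n + 1) - a n) * (a (n + 1) - a n))).re ≤ (1 / 8) ^ n)
    (hdg : ∀ n, (g (star (a (n + 1) - a n) * (a (n + 1) - a n))).re ≤ (1 / 8) ^ n)
    (hg0 : Tendsto (fun n => (g (star (a n) * a n)).re) atTop (𝓝 0)) :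
    Tendsto (fun n => (f (star (a n) * a n)).re) atTop (𝓝 0) := by
  obtain ⟨z, hzz, hzs, hgz, hz⟩ := support hgp hgn
  have hfz : f z = 0 := by
    have := hker z (by rw [hzs, hzz, hgz])
    rwa [hzs, hzz] at this
  have ef := map_conj_compl hfp hzz hzs hfz
  have eg := map_conj_compl hgp hzz hzs hgz
  have := closable0 hM hfp hfn hgp hgn z hzs hz (fun n => a n * (1 - z))
    (fun n => by rw [mul_assoc, sub_mul, one_mul, hzz, sub_self, mul_zero])
    (fun n => by simp only [← sub_mul, ef]; exact hdf n)
    (fun n => by simp only [← sub_mul, eg]; exact hdg n)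
    (by simpa only [eg] using hg0)
  simpa only [ef] using this

theorem normal_of_le {p f : M →ₗ[ℂ] ℂ} (hp : VNIsPos p) (hle : VNLE p f) (hn : VNIsNormal f) :
    VNIsNormal p := by
  intro ι _ _ _ x xsup h1 h2 h3 h4 h5
  have hlub := hn ι x xsup h1 h2 h3 h4 h5
  have hx : ∀ i, x i ≤ xsup := h4
  refine ⟨?_, ?_⟩
  · rintro _ ⟨i, rfl⟩
    exact OrderHomClass.mono (toP p hp) (hx i)
  · intro u hu
    have : f xsup ≤ f xsup - p xsup + u := by
      refine hlub.2 ?_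
      rintro _ ⟨i, rfl⟩
      have h6 : (f - p) (x i) ≤ (f - p) xsup := OrderHomClass.mono (toP (f - p) hle) (hx i)
      have h7 : p (x i) ≤ u := hu ⟨i, rfl⟩
      simp only [LinearMap.sub_apply] at h6
      calc f (x i) = f (x i) - p (x i) + p (x i) := by ring
        _ ≤ _ := add_le_add h6 h7
    rw [sub_add, le_sub_self_iff, sub_nonpos] at this
    exact this

section generic3
variable {A : Type} [CStarAlgebra A] [PartialOrder A] [StarOrderedRing A]

theorem comm_mul_nonneg {x y : A} (hx : 0 ≤ x) (hy : 0 ≤ y) (h : Commute x y) : 0 ≤ x * y := by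
  have h1 : Commute (CFC.sqrt x) y := h.cfcₙ_nnreal _
  have h2 := star_left_conjugate_nonneg hy (CFC.sqrt x)
  rwa [sqrt_star, mul_assoc, ← h1.eq, ← mul_assoc, CFC.sqrt_mul_sqrt_self x hx] at h2

theorem powc_nonneg {t : A} (h0 : 0 ≤ t) (n : ℕ) : 0 ≤ t ^ n := by
  induction n with
  | zero => simp
  | succ n ih => rw [pow_succ]; exact comm_mul_nonneg ih h0 ((Commute.refl t).pow_left n)

theorem pow_mul_nonneg {t : A} (h0 : 0 ≤ t) (h1 : t ≤ 1) (n : ℕ) : 0 ≤ t ^ n * (1 - t) :=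
  comm_mul_nonneg (powc_nonneg h0 n) (sub_nonneg.2 h1)
    (((Commute.one_right t).sub_right (Commute.refl t)).pow_left n)

theorem pow_mul_anti {t : A} (h0 : 0 ≤ t) (h1 : t ≤ 1) : Antitone fun n : ℕ => t ^ n * (1 - t) := by
  refine antitone_nat_of_succ_le fun n => ?_
  rw [← sub_nonneg]
  have h2 : Commute (1 - t) (t ^ n * (1 - t)) := by
    refine Commute.mul_right ?_ (Commute.refl _)
    exact (((Commute.one_right t).sub_right (Commute.refl t)).pow_left n).symm
  have := comm_mul_nonneg (sub_nonneg.2 h1) (pow_mul_nonneg h0 h1 n) h2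
  rw [h2.eq] at this
  refine this.trans (le_of_eq ?_)
  noncomm_ring

theorem sub_pow_le {t : A} (h0 : 0 ≤ t) (h1 : t ≤ 1) (n : ℕ) :
    t - t ^ (n + 1) ≤ (n : ℝ) • (1 - t) := by
  induction n with
  | zero => simp
  | succ n ih =>
    have h2 := pow_mul_anti h0 h1 (Nat.zero_le (n + 1))
    simp only [pow_zero, one_mul] at h2
    have := add_le_add ih h2
    rw [mul_sub, mul_one, ← pow_succ] at this
    push_cast
    rw [add_smul, one_smul]
    refine le_trans (le_of_eq ?_) this
    abel

theorem sub_pow_nonneg {t : A} (h0 : 0 ≤ t) (h1 : t ≤ 1) (n : ℕ) : 0 ≤ t - t ^ (n + 1) := by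
  induction n with
  | zero => simp
  | succ n ih =>
    have := add_nonneg ih (pow_mul_nonneg h0 h1 (n + 1))
    rw [mul_sub, mul_one, ← pow_succ] at this
    refine this.trans (le_of_eq ?_)
    abel

theorem smul_pow_le {t : A} (h0 : 0 ≤ t) (h1 : t ≤ 1) (n : ℕ) :
    ((n : ℝ) + 1) • (t ^ n * (1 - t)) ≤ 1 := by
  have h : ∀ m ≤ n + 1, (m : ℝ) • (t ^ n * (1 - t)) ≤ 1 - t ^ m := by
    intro m hm
    induction m with
    | zero => simp
    | succ m ih =>
      have h2 := add_le_add (ih (by omega)) (pow_mul_anti h0 h1 (show m ≤ n by omega))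
      simp only [mul_sub, mul_one, ← pow_succ] at h2
      push_cast
      rw [add_smul, one_smul]
      refine le_trans (le_of_eq ?_) (h2.trans (le_of_eq ?_))
      · simp only [mul_sub, mul_one, ← pow_succ]
      · abel
  have := h (n + 1) le_rfl
  push_cast at this
  exact this.trans (sub_le_self _ (powc_nonneg h0 _))

theorem norm_pow_mul_le {t : A} (h0 : 0 ≤ t) (h1 : t ≤ 1) (n : ℕ) :
    ‖t ^ n * (1 - t)‖ ≤ 1 / ((n : ℝ) + 1) := by
  have hn : (0 : ℝ) < n + 1 := by positivity
  have h2 := (CStarAlgebra.norm_le_one_iff_of_nonneg _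
    (smul_nonneg hn.le (pow_mul_nonneg h0 h1 n))).2 (smul_pow_le h0 h1 n)
  rw [norm_smul, Real.norm_of_nonneg hn.le] at h2
  rw [le_div_iff₀ hn]
  linarith

end generic3

theorem tendsto_pow_zero {K : Type} [NormedAddCommGroup K] [InnerProductSpace ℂ K]
    [CompleteSpace K] (T : K →L[ℂ] K) (h0 : 0 ≤ T) (h1 : T ≤ 1) (hinj : ∀ v, T v = v → v = 0)
    (v : K) : Tendsto (fun n : ℕ => (T ^ n) v) atTop (𝓝 0) := by
  have hS : 0 ≤ 1 - T := sub_nonneg.2 h1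
  have hdense : DenseRange (1 - T : K →L[ℂ] K) := by
    have h1 := ContinuousLinearMap.orthogonal_ker (1 - T : K →L[ℂ] K)
    have h2 : (1 - T : K →L[ℂ] K).ker = ⊥ := by
      rw [LinearMap.ker_eq_bot']
      intro v hv
      exact hinj v (sub_eq_zero.1 hv).symm
    have h3 : ContinuousLinearMap.adjoint (1 - T : K →L[ℂ] K) = 1 - T := hS.isSelfAdjoint.star_eq
    rw [h2, h3, Submodule.bot_orthogonal_eq_top] at h1
    exact Submodule.dense_iff_topologicalClosure_eq_top.2 h1.symm
  have hT : ‖T‖ ≤ 1 := (CStarAlgebra.norm_le_one_iff_of_nonneg T h0).2 h1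
  have hTn : ∀ (n : ℕ) (u : K), ‖(T ^ n) u‖ ≤ ‖u‖ := by
    intro n
    induction n with
    | zero => intro u; simp
    | succ n ih =>
      intro u
      rw [pow_succ]
      refine (ih (T u)).trans ?_
      simpa using T.le_of_opNorm_le hT u
  rw [Metric.tendsto_atTop]
  intro ε hε
  obtain ⟨w, hw⟩ := hdense.exists_dist_lt v (half_pos hε)
  have h2 : Tendsto (fun n : ℕ => 1 / ((n : ℝ) + 1) * ‖w‖) atTop (𝓝 0) := by
    simpa using tendsto_one_div_add_atTop_nhds_zero_nat.mul_const ‖w‖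
  obtain ⟨N, hN⟩ := eventually_atTop.1 (h2.eventually_lt_const (half_pos hε))
  refine ⟨N, fun n hn => ?_⟩
  have h3 : (T ^ n) v = (T ^ n) (v - (1 - T : K →L[ℂ] K) w) + (T ^ n * (1 - T)) w := by
    rw [map_sub]
    simp
  rw [dist_zero_right, h3]
  have h4 := hTn n (v - (1 - T : K →L[ℂ] K) w)
  have h5 := (T ^ n * (1 - T)).le_of_opNorm_le (norm_pow_mul_le h0 h1 n) w
  rw [dist_eq_norm] at hw
  calc _ ≤ _ := norm_add_le _ _
    _ < ε / 2 + ε / 2 := add_lt_add_of_lt_of_le (h4.trans_lt hw) (h5.trans (hN n hn).le)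
    _ = ε := add_halves ε

/-- The space of the GNS construction for `f + g` with the operator representing `f`. -/
theorem gns_data {A : Type} [CStarAlgebra A] [PartialOrder A] [StarOrderedRing A]
    (φ f : A →ₚ[ℂ] ℂ) (hle : ∀ x, (f (star x * x)).re ≤ (φ (star x * x)).re) :
    ∃ (K : Type) (_ : NormedAddCommGroup K) (_ : InnerProductSpace ℂ K) (_ : CompleteSpace K)
      (L : A →ₗ[ℂ] K) (P : A → K →L[ℂ] K) (T : K →L[ℂ] K), DenseRange L ∧
      (∀ x y, ⟪L x, L y⟫_ℂ = φ (star x * y)) ∧ (∀ x y, ⟪L x, T (L y)⟫_ℂ = f (star x * y)) ∧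
      (∀ x y, P x (L y) = L (x * y)) ∧ (∀ x v w, ⟪P (star x) v, w⟫_ℂ = ⟪v, P x w⟫_ℂ) := by
  let L : A →ₗ[ℂ] φ.GNS :=
    (UniformSpace.Completion.toComplL (𝕜 := ℂ) (E := φ.PreGNS)).toLinearMap ∘ₗ φ.toPreGNS.toLinearMap
  let Lf : A →ₗ[ℂ] f.GNS :=
    (UniformSpace.Completion.toComplL (𝕜 := ℂ) (E := f.PreGNS)).toLinearMap ∘ₗ f.toPreGNS.toLinearMap
  have hL : ∀ x, L x = ((φ.toPreGNS x : φ.PreGNS) : φ.GNS) := fun x => rfl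
  have hLf : ∀ x, Lf x = ((f.toPreGNS x : f.PreGNS) : f.GNS) := fun x => rfl
  have hd : DenseRange L := by
    have h1 : DenseRange ((↑) : φ.PreGNS → φ.GNS) := UniformSpace.Completion.denseRange_coe
    have h2 : Function.Surjective φ.toPreGNS := φ.toPreGNS.surjective
    exact h1.comp h2.denseRange (UniformSpace.Completion.continuous_coe _)
  have hin : ∀ x y, ⟪L x, L y⟫_ℂ = φ (star x * y) := by
    intro x y
    rw [hL, hL, UniformSpace.Completion.inner_coe, φ.preGNS_inner_def]
    rfl
  have hinf : ∀ x y, ⟪Lf x, Lf y⟫_ℂ = f (star x * y) := by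
    intro x y
    rw [hLf, hLf, UniformSpace.Completion.inner_coe, f.preGNS_inner_def]
    rfl
  have hn : ∀ x, ‖Lf x‖ ≤ 1 * ‖L x‖ := by
    intro x
    rw [one_mul, ← sq_le_sq₀ (norm_nonneg _) (norm_nonneg _), ← inner_self_eq_norm_sq (𝕜 := ℂ),
      ← inner_self_eq_norm_sq (𝕜 := ℂ), hin, hinf]
    exact hle x
  let V : φ.GNS →L[ℂ] f.GNS := Lf.extendOfNorm L
  have hV : ∀ x, V (L x) = Lf x := LinearMap.extendOfNorm_eq hd ⟨1, hn⟩
  refine ⟨φ.GNS, inferInstance, inferInstance, inferInstance, L, fun x => φ.gnsStarAlgHom x,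
    ContinuousLinearMap.adjoint V ∘L V, hd, hin, ?_, ?_, ?_⟩
  · intro x y
    rw [ContinuousLinearMap.comp_apply, ContinuousLinearMap.adjoint_inner_right, hV, hV, hinf]
  · intro x y
    beta_reduce
    rw [hL, hL]
    exact φ.gnsNonUnitalStarAlgHom_apply_coe
  · intro x v w
    beta_reduce
    rw [map_star]
    exact ContinuousLinearMap.adjoint_inner_left _ _ _

theorem fixed_zero (hM : VNFinite M) {f g : M →ₗ[ℂ] ℂ} (hfp : VNIsPos f) (hfn : VNIsNormal f)
    (hgp : VNIsPos g) (hgn : VNIsNormal g)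
    (hker : ∀ y : M, g (star y * y) = 0 → f (star y * y) = 0)
    {K : Type} [NormedAddCommGroup K] [InnerProductSpace ℂ K] [CompleteSpace K]
    (L : M →ₗ[ℂ] K) (T : K →L[ℂ] K) (hd : DenseRange L)
    (hin : ∀ x y, ⟪L x, L y⟫_ℂ = f (star x * y) + g (star x * y))
    (hT : ∀ x y, ⟪L x, T (L y)⟫_ℂ = f (star x * y)) (κ : K) (hκ : T κ = κ) : κ = 0 := by
  have h1 : ∀ n : ℕ, ∃ x : M, dist κ (L x) < (1 / 4) ^ n / 2 := fun n =>
    hd.exists_dist_lt κ (by positivity)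
  choose a ha using h1
  have hlim : Tendsto (fun n => L (a n)) atTop (𝓝 κ) := by
    rw [tendsto_iff_dist_tendsto_zero]
    refine squeeze_zero (g := fun n : ℕ => (1 / 4 : ℝ) ^ n / 2) (fun n => dist_nonneg) (fun n => by rw [dist_comm]; exact (ha n).le) ?_
    have := (tendsto_pow_atTop_nhds_zero_of_lt_one (r := (1 / 4 : ℝ)) (by norm_num)
      (by norm_num)).div_const 2
    simpa using this
  have hsum : ∀ n, (f (star (a (n + 1) - a n) * (a (n + 1) - a n))).re
      + (g (star (a (n + 1) - a n) * (a (n + 1) - a n))).re ≤ (1 / 8) ^ n := by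
    intro n
    rw [← Complex.add_re, ← hin, map_sub]
    have h2 : ‖L (a (n + 1)) - L (a n)‖ ≤ (1 / 4) ^ n := by
      rw [← dist_eq_norm]
      have h3 := dist_triangle_left (L (a (n + 1))) (L (a n)) κ
      have h4 : (1 / 4 : ℝ) ^ (n + 1) ≤ (1 / 4) ^ n :=
        pow_le_pow_of_le_one (by norm_num) (by norm_num) (Nat.le_succ n)
      have h5 := ha n
      have h6 := ha (n + 1)
      linarith
    have h3 := inner_self_eq_norm_sq (𝕜 := ℂ) (L (a (n + 1)) - L (a n))
    change (⟪L (a (n + 1)) - L (a n), L (a (n + 1)) - L (a n)⟫_ℂ).re = _ at h3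
    rw [h3]
    calc _ ≤ ((1 / 4 : ℝ) ^ n) ^ 2 := pow_le_pow_left₀ (norm_nonneg _) h2 2
      _ = (1 / 16) ^ n := by rw [← pow_mul, mul_comm, pow_mul]; norm_num
      _ ≤ _ := pow_le_pow_left₀ (by norm_num) (by norm_num) n
  have hf0 : ∀ x : M, 0 ≤ (f (star x * x)).re := fun x => re_nonneg (toP f hfp) (star_mul_self_nonneg x)
  have hg0 : ∀ x : M, 0 ≤ (g (star x * x)).re := fun x => re_nonneg (toP g hgp) (star_mul_self_nonneg x)
  have hTl : Tendsto (fun n => ⟪L (a n), T (L (a n))⟫_ℂ) atTop (𝓝 ⟪κ, κ⟫_ℂ) := by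
    have := hlim.inner (𝕜 := ℂ) ((T.continuous.tendsto κ).comp hlim)
    rw [hκ] at this
    exact this
  have hl : Tendsto (fun n => ⟪L (a n), L (a n)⟫_ℂ) atTop (𝓝 ⟪κ, κ⟫_ℂ) := hlim.inner hlim
  have hgl : Tendsto (fun n => (g (star (a n) * a n)).re) atTop (𝓝 0) := by
    have h2 := (Complex.continuous_re.tendsto _).comp (hl.sub hTl)
    rw [sub_self, Complex.zero_re] at h2
    refine h2.congr fun n => ?_
    simp only [Function.comp_apply, hT, hin, add_sub_cancel_left]
  have hfl := closable hM hfp hfn hgp hgn hker a (fun n => by linarith [hsum n, hg0 (a (n + 1) - a n)])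
    (fun n => by linarith [hsum n, hf0 (a (n + 1) - a n)]) hgl
  have hfl2 := (Complex.continuous_re.tendsto _).comp hTl
  have h3 := tendsto_nhds_unique hfl (hfl2.congr fun n => by simp only [Function.comp_apply, hT])
  have h4 := inner_self_eq_norm_sq (𝕜 := ℂ) κ
  change (⟪κ, κ⟫_ℂ).re = _ at h4
  rw [← h3] at h4
  rw [← norm_eq_zero]
  exact pow_eq_zero_iff (two_ne_zero) |>.1 h4.symm

theorem main (hM : VNFinite M) {f g : M →ₗ[ℂ] ℂ} (hfp : VNIsPos f) (hfn : VNIsNormal f)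
    (hgp : VNIsPos g) (hgn : VNIsNormal g)
    (hker : ∀ y : M, g (star y * y) = 0 → f (star y * y) = 0) : VNAbsCont f g := by
  have hfg : VNIsPos (f + g) := fun x => add_nonneg (hfp x) (hgp x)
  obtain ⟨K, _, _, _, L, P, T, hd, hin, hT, hPL, hPadj⟩ := gns_data (toP (f + g) hfg) (toP f hfp)
    (fun x => by
      have : 0 ≤ (g (star x * x)).re := re_nonneg (toP g hgp) (star_mul_self_nonneg x)
      simp only [toP_apply, LinearMap.add_apply, Complex.add_re]
      linarith)
  simp only [toP_apply, LinearMap.add_apply] at hin hT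
  have hS : ∀ x y, ⟪L x, (1 - T : K →L[ℂ] K) (L y)⟫_ℂ = g (star x * y) := by
    intro x y
    change ⟪L x, L y - T (L y)⟫_ℂ = _
    rw [inner_sub_right, hin, hT, add_sub_cancel_left]
  have hdpos : ∀ B : K →L[ℂ] K, (∀ x, 0 ≤ ⟪L x, B (L x)⟫_ℂ) → 0 ≤ B := by
    intro B hB
    rw [opnonneg_iff]
    intro v
    exact hd.induction_on (p := fun v => 0 ≤ ⟪v, B v⟫_ℂ) v
      (isClosed_le continuous_const (by fun_prop)) hB
  have hT0 : 0 ≤ T := hdpos T fun x => by rw [hT]; exact hfp x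
  have hT1 : T ≤ 1 := by
    rw [← sub_nonneg]
    exact hdpos _ fun x => by rw [hS]; exact hgp x
  have hcomm : ∀ x, Commute T (P x) := by
    intro x
    refine ContinuousLinearMap.ext fun v => ?_
    refine hd.induction_on (p := fun v => (T * P x) v = (P x * T) v) v
      (isClosed_eq (by fun_prop) (by fun_prop)) ?_
    intro y
    refine ext_inner_left ℂ fun w => ?_
    refine hd.induction_on (p := fun w => ⟪w, (T * P x) (L y)⟫_ℂ = ⟪w, (P x * T) (L y)⟫_ℂ) w
      (isClosed_eq (by fun_prop) (by fun_prop)) ?_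
    intro w
    change ⟪L w, T (P x (L y))⟫_ℂ = ⟪L w, P x (T (L y))⟫_ℂ
    rw [← hPadj, hPL, hPL, hT, hT, star_mul, star_star, mul_assoc]
  -- the functional attached to an operator
  let F : (K →L[ℂ] K) → (M →ₗ[ℂ] ℂ) := fun B =>
    (innerSL ℂ (L 1)).toLinearMap ∘ₗ B.toLinearMap ∘ₗ L
  have hF : ∀ B x, F B x = ⟪L 1, B (L x)⟫_ℂ := fun B x => rfl
  have hFs : ∀ B, (∀ x, Commute B (P x)) → ∀ x, F B (star x * x) = ⟪L x, B (L x)⟫_ℂ := by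
    intro B hB x
    rw [hF, ← hPL]
    have h2 : B (P (star x) (L x)) = P (star x) (B (L x)) :=
      congrArg (fun C : K →L[ℂ] K => C (L x)) (hB (star x)).eq
    rw [h2, ← hPadj, star_star, hPL, mul_one]
  have hFpos : ∀ B, (∀ x, Commute B (P x)) → 0 ≤ B → VNIsPos (F B) := by
    intro B hB h0 x
    rw [hFs B hB]
    exact (opnonneg_iff B).1 h0 _
  have hFsub : ∀ B C, F (B - C) = F B - F C := by
    intro B C
    refine LinearMap.ext fun x => ?_
    rw [LinearMap.sub_apply, hF, hF, hF, ← inner_sub_right]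
    rfl
  have hFT : F T = f := by
    refine LinearMap.ext fun x => ?_
    rw [hF, hT, star_one, one_mul]
  have hFg : ∀ c : ℝ, F (c • (1 - T)) = (c : ℂ) • g := by
    intro c
    refine LinearMap.ext fun x => ?_
    have h2 := hS 1 x
    rw [star_one, one_mul] at h2
    rw [LinearMap.smul_apply, ← h2, hF, smul_eq_mul, ← inner_smul_right]
    rfl
  have cT : ∀ n x, Commute (T ^ n) (P x) := fun n x => (hcomm x).pow_left n
  have cB : ∀ n x, Commute (T - T ^ (n + 1)) (P x) := fun n x => (hcomm x).sub_left (cT _ x)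
  have cS : ∀ (c : ℝ) x, Commute (c • (1 - T)) (P x) := fun c x =>
    ((Commute.one_left (P x)).sub_left (hcomm x)).smul_left c
  have hfpos : ∀ n, VNIsPos (F (T - T ^ (n + 1))) := fun n =>
    hFpos _ (cB n) (sub_pow_nonneg hT0 hT1 n)
  have hlef : ∀ n, VNLE (F (T - T ^ (n + 1))) f := by
    intro n
    have : f - F (T - T ^ (n + 1)) = F (T ^ (n + 1)) := by
      rw [hFsub, hFT, sub_sub_cancel]
    rw [VNLE, this]
    exact hFpos _ (cT _) (powc_nonneg hT0 _)
  refine ⟨fun n => F (T - T ^ (n + 1 + 1)), fun n => ((n + 1 : ℕ) : ℝ),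
    fun n => ⟨hfpos _, normal_of_le (hfpos _) (hlef _) hfn⟩, fun n => by positivity, ?_, ?_, ?_⟩
  · intro n
    rw [VNLE, ← hFsub]
    refine hFpos _ (fun x => (cB _ x).sub_left (cB _ x)) ?_
    have := pow_mul_nonneg hT0 hT1 (n + 1 + 1)
    rw [mul_sub, mul_one, ← pow_succ] at this
    refine this.trans (le_of_eq ?_)
    abel
  · intro n
    rw [VNLE, ← hFg, ← hFsub]
    exact hFpos _ (fun x => (cS _ x).sub_left (cB _ x)) (sub_nonneg.2 (sub_pow_le hT0 hT1 (n + 1)))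
  · intro x
    have h2 := tendsto_pow_zero T hT0 hT1
      (fixed_zero hM hfp hfn hgp hgn hker L T hd hin hT) (L x)
    have h3 := (h2.comp (tendsto_add_atTop_nat 2))
    have h4 : Tendsto (fun n : ℕ => ⟪L 1, (T ^ (n + 2)) (L x)⟫_ℂ) atTop (𝓝 ⟪L 1, (0 : K)⟫_ℂ) :=
      tendsto_const_nhds.inner h3
    rw [inner_zero_right] at h4
    have h5 := (tendsto_const_nhds (x := f x)).sub h4
    rw [sub_zero] at h5
    refine h5.congr fun n => ?_
    beta_reduce
    rw [hFsub, LinearMap.sub_apply, hFT, hF]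

end VNW
end VNWork


/-- **Lemma 2.10**: on a finite von Neumann algebra `M`, if the left kernels of the normal
positive functionals `𝔣, 𝔤` satisfy `L_𝔤 ⊆ L_𝔣`, then `𝔣 ≪ 𝔤`. -/
theorem vN_finite_absCont_of_leftKernel_subset
    {H : Type} [NormedAddCommGroup H] [InnerProductSpace ℂ H] [CompleteSpace H]
    (M : VonNeumannAlgebra H) (hM : VNFinite M)
    (𝔣 𝔤 : ↥M →ₗ[ℂ] ℂ)
    (h𝔣p : VNIsPos 𝔣) (h𝔣n : VNIsNormal 𝔣)
    (h𝔤p : VNIsPos 𝔤) (h𝔤n : VNIsNormal 𝔤)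
    (hker : {a : ↥M | 𝔤 (star a * a) = 0} ⊆ {a : ↥M | 𝔣 (star a * a) = 0}) :
    VNAbsCont 𝔣 𝔤 := by
  exact VNW.main hM h𝔣p h𝔣n h𝔤p h𝔤n (fun y hy => hker hy)
end

section
/- If M is a finite von Neumann algebra, then the Lebesgue decomposition of normal positive functionals over M is unique. -/
open scoped ComplexOrder

open scoped ComplexOrder

namespace VNLeb
open Filter Topology

section Algebraic
variable {H : Type} [NormedAddCommGroup H] [InnerProductSpace ℂ H] [CompleteSpace H]
variable {M : VonNeumannAlgebra H}

lemma pos_form_symm {f : ↥M →ₗ[ℂ] ℂ} (hf : VNIsPos f) (a b : ↥M) :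
    (starRingEnd ℂ) (f (star b * a)) = f (star a * b) := by
  have h1 := hf (a + b)
  have h2 := hf (a + Complex.I • b)
  have ha := hf a
  have hb := hf b
  have e1 : f (star (a + b) * (a + b))
      = f (star a * a) + f (star a * b) + f (star b * a) + f (star b * b) := by
    rw [← map_add, ← map_add, ← map_add]; congr 1
    simp only [star_add]; noncomm_ring
  have e2 : f (star (a + Complex.I • b) * (a + Complex.I • b))
      = f (star a * a) + Complex.I * f (star a * b) - Complex.I * f (star b * a)
        + f (star b * b) := by
    have : star (a + Complex.I • b) * (a + Complex.I • b)
      = star a * a + Complex.I • (star a * b) - Complex.I • (star b * a) + star b * b := by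
      simp only [star_add, star_smul, add_mul, mul_add, smul_mul_assoc, mul_smul_comm]
      have hI : star Complex.I = -Complex.I := by simp
      rw [hI, smul_add, smul_smul, mul_neg, Complex.I_mul_I, neg_neg, one_smul, neg_smul]
      abel
    rw [this]; simp
  rw [e1] at h1
  rw [e2] at h2
  rw [Complex.le_def] at h1 h2 ha hb
  simp at h1 h2 ha hb
  apply Complex.ext
  · simp; linarith [h2.2]
  · simp; linarith [h1.2]

/-- the pre-inner product `f (a⋆ b)` -/
@[reducible] noncomputable def core {f : ↥M →ₗ[ℂ] ℂ} (hf : VNIsPos f) : PreInnerProductSpace.Core ℂ ↥M where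
  inner a b := f (star a * b)
  conj_inner_symm a b := pos_form_symm hf a b
  re_inner_nonneg a := (Complex.le_def.1 (hf a)).1
  add_left a b c := by simp [add_mul]
  smul_left a b c := by simp

/-- the seminorm attached to a positive functional -/
noncomputable def nrm (f : ↥M →ₗ[ℂ] ℂ) (a : ↥M) : ℝ := Real.sqrt (f (star a * a)).re

lemma nrm_nonneg (f : ↥M →ₗ[ℂ] ℂ) (a : ↥M) : 0 ≤ nrm f a := Real.sqrt_nonneg _

lemma nrm_sq {f : ↥M →ₗ[ℂ] ℂ} (hf : VNIsPos f) (a : ↥M) :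
    nrm f a ^ 2 = (f (star a * a)).re :=
  Real.sq_sqrt (Complex.le_def.1 (hf a)).1

lemma f_eq_re {f : ↥M →ₗ[ℂ] ℂ} (hf : VNIsPos f) (a : ↥M) :
    f (star a * a) = ((f (star a * a)).re : ℂ) := by
  apply Complex.ext
  · simp
  · have := (Complex.le_def.1 (hf a)).2
    simpa using this.symm

lemma f_eq_nrm {f : ↥M →ₗ[ℂ] ℂ} (hf : VNIsPos f) (a : ↥M) :
    f (star a * a) = ((nrm f a ^ 2 : ℝ) : ℂ) := by
  rw [nrm_sq hf, ← f_eq_re hf]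

lemma cauchy {f : ↥M →ₗ[ℂ] ℂ} (hf : VNIsPos f) (a b : ↥M) :
    ‖f (star a * b)‖ ≤ nrm f a * nrm f b := by
  let _ := core hf
  have h := InnerProductSpace.Core.inner_mul_inner_self_le (𝕜 := ℂ) a b
  have h' : ‖f (star a * b)‖ * ‖f (star b * a)‖ ≤ (f (star a * a)).re * (f (star b * b)).re := h
  rw [← pos_form_symm hf b a, RCLike.norm_conj, ← nrm_sq hf, ← nrm_sq hf, ← mul_pow,
    ← sq] at h'
  exact (sq_le_sq₀ (norm_nonneg _) (mul_nonneg (nrm_nonneg _ _) (nrm_nonneg _ _))).1 h'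

lemma nrm_expand {f : ↥M →ₗ[ℂ] ℂ} (hf : VNIsPos f) (a b : ↥M) :
    nrm f (a + b) ^ 2 = nrm f a ^ 2 + 2 * (f (star a * b)).re + nrm f b ^ 2 := by
  have e1 : f (star (a + b) * (a + b))
      = f (star a * a) + f (star a * b) + f (star b * a) + f (star b * b) := by
    rw [← map_add, ← map_add, ← map_add]; congr 1
    simp only [star_add]; noncomm_ring
  rw [nrm_sq hf, e1, ← pos_form_symm hf b a, nrm_sq hf, nrm_sq hf]
  simp; ring

lemma nrm_add {f : ↥M →ₗ[ℂ] ℂ} (hf : VNIsPos f) (a b : ↥M) :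
    nrm f (a + b) ≤ nrm f a + nrm f b := by
  have h := nrm_expand hf a b
  have h2 := (Complex.re_le_norm _).trans (cauchy hf a b)
  nlinarith [nrm_nonneg f a, nrm_nonneg f b, nrm_nonneg f (a+b)]

lemma nrm_smul {f : ↥M →ₗ[ℂ] ℂ} (hf : VNIsPos f) (c : ℂ) (a : ↥M) :
    nrm f (c • a) = ‖c‖ * nrm f a := by
  unfold nrm
  have : f (star (c • a) * (c • a)) = ((‖c‖ ^ 2 : ℝ) : ℂ) * f (star a * a) := by
    simp [smul_smul]
    left
    rw [Complex.mul_conj, Complex.normSq_eq_norm_sq]; push_cast; ring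
  rw [this, Complex.re_ofReal_mul, Real.sqrt_mul (by positivity), Real.sqrt_sq (norm_nonneg _)]

lemma nrm_neg {f : ↥M →ₗ[ℂ] ℂ} (a : ↥M) : nrm f (-a) = nrm f a := by
  unfold nrm; simp

lemma nrm_zero {f : ↥M →ₗ[ℂ] ℂ} : nrm f (0 : ↥M) = 0 := by
  unfold nrm; simp

lemma nrm_sub {f : ↥M →ₗ[ℂ] ℂ} (hf : VNIsPos f) (a b : ↥M) :
    nrm f (a - b) ≤ nrm f a + nrm f b := by
  rw [sub_eq_add_neg]; exact (nrm_add hf _ _).trans (by rw [nrm_neg])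

/-! ### membership -/

lemma mem_of_commute {a : H →L[ℂ] H} (h : ∀ y ∈ M.commutant, Commute a y) : a ∈ M := by
  rw [← VonNeumannAlgebra.commutant_commutant M, VonNeumannAlgebra.mem_commutant_iff]
  intro g hg
  exact (h g hg).eq.symm

lemma commute_of_mem {a : H →L[ℂ] H} (ha : a ∈ M) {y : H →L[ℂ] H} (hy : y ∈ M.commutant) :
    Commute a y := by
  rw [VonNeumannAlgebra.mem_commutant_iff] at hy
  exact hy a ha

lemma cfc_mem {a : H →L[ℂ] H} (ha : a ∈ M) (φ : ℝ → ℝ) : cfc φ a ∈ M :=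
  mem_of_commute fun _ hy => (commute_of_mem ha hy).cfc_real φ

lemma exists_sqrt (a : ↥M) (ha : 0 ≤ (a : H →L[ℂ] H)) : ∃ b : ↥M, star b = b ∧ b * b = a := by
  have hs : CFC.sqrt (a : H →L[ℂ] H) ∈ M := by
    rw [CFC.sqrt_eq_real_sqrt _ ha, cfcₙ_eq_cfc]
    exact cfc_mem a.2 _
  refine ⟨⟨CFC.sqrt (a : H →L[ℂ] H), hs⟩, ?_, ?_⟩
  · apply Subtype.ext
    exact (CFC.sqrt_nonneg (a : H →L[ℂ] H)).isSelfAdjoint.star_eq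
  · apply Subtype.ext
    exact CFC.sqrt_mul_sqrt_self _ ha

lemma f_nonneg {f : ↥M →ₗ[ℂ] ℂ} (hf : VNIsPos f) {a : ↥M} (ha : 0 ≤ (a : H →L[ℂ] H)) :
    0 ≤ f a := by
  obtain ⟨b, hb, rfl⟩ := exists_sqrt a ha
  have := hf b
  rwa [hb] at this

lemma f_mono {f : ↥M →ₗ[ℂ] ℂ} (hf : VNIsPos f) {a b : ↥M}
    (hab : (a : H →L[ℂ] H) ≤ (b : H →L[ℂ] H)) : f a ≤ f b := by
  have := f_nonneg hf (a := b - a) (by simpa using hab)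
  rw [map_sub] at this
  simpa using this

lemma f_re_mono {f : ↥M →ₗ[ℂ] ℂ} (hf : VNIsPos f) {a b : ↥M}
    (hab : (a : H →L[ℂ] H) ≤ (b : H →L[ℂ] H)) : (f a).re ≤ (f b).re :=
  (Complex.le_def.1 (f_mono hf hab)).1

lemma nrm_mul_le {f : ↥M →ₗ[ℂ] ℂ} (hf : VNIsPos f) (b a : ↥M) :
    nrm f (b * a) ≤ ‖(b : H →L[ℂ] H)‖ * nrm f a := by
  have h : ((star (b * a) * (b * a) : ↥M) : H →L[ℂ] H) ≤
      (((‖(b : H →L[ℂ] H)‖ ^ 2 : ℝ) : ℂ) • (star a * a) : ↥M) := by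
    have h0 : star (b : H →L[ℂ] H) * b ≤ algebraMap ℝ _ (‖(b : H →L[ℂ] H)‖ ^ 2) :=
      CStarAlgebra.star_mul_le_algebraMap_norm_sq
    have h1 := star_left_conjugate_le_conjugate h0 (a : H →L[ℂ] H)
    have e : star (a : H →L[ℂ] H) * (algebraMap ℝ _ (‖(b : H →L[ℂ] H)‖ ^ 2)) * a
        = (((‖(b : H →L[ℂ] H)‖ ^ 2 : ℝ) : ℂ) • (star a * a) : ↥M) := by
      rw [Algebra.algebraMap_eq_smul_one]
      simp only [mul_smul_comm, smul_mul_assoc, mul_one]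
      push_cast
      ext x; simp [← Complex.ofReal_pow]
    rw [← e]
    convert h1 using 1
    simp [mul_assoc]
  have h2 := f_re_mono hf h
  rw [map_smul, smul_eq_mul, Complex.re_ofReal_mul, ← nrm_sq hf, ← nrm_sq hf, ← mul_pow] at h2
  exact (sq_le_sq₀ (nrm_nonneg _ _) (mul_nonneg (norm_nonneg _) (nrm_nonneg _ _))).1 h2

lemma nrm_le_norm {f : ↥M →ₗ[ℂ] ℂ} (hf : VNIsPos f) (b : ↥M) :
    nrm f b ≤ ‖(b : H →L[ℂ] H)‖ * nrm f 1 := by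
  simpa using nrm_mul_le hf b 1

/-! ### normality -/

lemma normal_of_le {p f : ↥M →ₗ[ℂ] ℂ} (hp : VNIsPos p) (hfn : VNIsNormal f)
    (hle : VNLE p f) : VNIsNormal p := by
  intro ι _ _ _ x xsup h1 h2 h3 h4 h5
  have hL := hfn ι x xsup h1 h2 h3 h4 h5
  constructor
  · rintro _ ⟨i, rfl⟩
    exact f_mono hp (h4 i)
  · intro u hu
    have hfs : IsLUB (Set.range fun i => (f (x i)).re) (f xsup).re := by
      constructor
      · rintro _ ⟨i, rfl⟩
        exact (Complex.le_def.1 (hL.1 ⟨i, rfl⟩)).1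
      · intro v hv
        have : f xsup ≤ (v : ℂ) + ((f xsup).im : ℂ) * Complex.I := by
          apply hL.2
          rintro _ ⟨i, rfl⟩
          rw [Complex.le_def]
          refine ⟨by simpa using hv ⟨i, rfl⟩, ?_⟩
          simpa using (Complex.le_def.1 (hL.1 ⟨i, rfl⟩)).2
        simpa using (Complex.le_def.1 this).1
    have i0 : ι := Classical.arbitrary ι
    have key : ∀ i, (p xsup).re - (p (x i)).re ≤ (f xsup).re - (f (x i)).re := by
      intro i
      have : 0 ≤ (f - p) (xsup - x i) := f_nonneg hle (by
        have := h4 i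
        simpa using (ContinuousLinearMap.nonneg_iff_isPositive _).2 this)
      have := (Complex.le_def.1 this).1
      simp at this
      linarith
    rw [Complex.le_def]
    constructor
    · apply le_of_forall_pos_le_add
      intro ε hε
      obtain ⟨_, ⟨i, rfl⟩, hi, -⟩ := hfs.exists_between (sub_lt_self _ hε)
      have := (Complex.le_def.1 (hu ⟨i, rfl⟩)).1
      have := key i
      simp at *
      linarith
    · have a1 := (Complex.le_def.1 (hu ⟨i0, rfl⟩)).2
      have a2 := (Complex.le_def.1 (f_mono hp (h4 i0))).2
      simp at a1
      rw [← a1, a2]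

/-- normal functionals along decreasing sequences with weak limit. -/
lemma normal_tendsto {f : ↥M →ₗ[ℂ] ℂ} (hf : VNIsPos f) (hfn : VNIsNormal f)
    (x : ℕ → ↥M) (y : ↥M) (hpos : ∀ i, (y : H →L[ℂ] H) ≤ x i)
    (hanti : ∀ i j, i ≤ j → (x j : H →L[ℂ] H) ≤ x i)
    (hlim : ∀ ξ : H, Tendsto (fun i => (x i : H →L[ℂ] H) ξ) atTop (𝓝 ((y : H →L[ℂ] H) ξ))) :
    Tendsto (fun i => (f (x i)).re) atTop (𝓝 (f y).re) := by
  have hL := hfn ℕ (fun i => x 0 - x i) (x 0 - y) ?_ ?_ ?_ ?_ ?_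
  · have hfs : IsLUB (Set.range fun i => (f (x 0 - x i)).re) (f (x 0 - y)).re := by
      constructor
      · rintro _ ⟨i, rfl⟩
        exact (Complex.le_def.1 (hL.1 ⟨i, rfl⟩)).1
      · intro v hv
        have : f (x 0 - y) ≤ (v : ℂ) + ((f (x 0 - y)).im : ℂ) * Complex.I := by
          apply hL.2
          rintro _ ⟨i, rfl⟩
          rw [Complex.le_def]
          refine ⟨by simpa using hv ⟨i, rfl⟩, ?_⟩
          simpa using (Complex.le_def.1 (hL.1 ⟨i, rfl⟩)).2
        simpa using (Complex.le_def.1 this).1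
    have hm : Monotone (fun i => (f (x 0 - x i)).re) := by
      intro i j hij
      apply f_re_mono hf
      have := hanti i j hij
      push_cast
      exact sub_le_sub_left this _
    have := (tendsto_atTop_isLUB hm hfs).const_sub (f (x 0)).re
    simpa using this
  · intro i
    rw [← ContinuousLinearMap.nonneg_iff_isPositive]
    simpa using hanti 0 i (Nat.zero_le _)
  · intro i j hij
    have := hanti i j hij
    rw [OpLE, ← ContinuousLinearMap.nonneg_iff_isPositive]
    simpa using this
  · refine ⟨‖((x 0 - y : ↥M) : H →L[ℂ] H)‖, fun i => ?_⟩
    apply CStarAlgebra.norm_le_norm_of_nonneg_of_le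
    · simpa using hanti 0 i (Nat.zero_le _)
    · push_cast
      exact sub_le_sub_left (hpos i) _
  · intro i
    rw [OpLE, ← ContinuousLinearMap.nonneg_iff_isPositive]
    simpa using hpos i
  · intro z hz
    rw [OpLE, ContinuousLinearMap.isPositive_iff_complex]
    intro ξ
    have hz' : ∀ i, 0 ≤ inner ℂ (((z - (x 0 - x i) : ↥M) : H →L[ℂ] H) ξ) ξ := by
      intro i
      exact (show ((z : H →L[ℂ] H) - (x 0 - x i : ↥M)).IsPositive from hz i).inner_nonneg_left ξ
    have ht : Tendsto (fun i => inner ℂ (((z - (x 0 - x i) : ↥M) : H →L[ℂ] H) ξ) ξ) atTop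
        (𝓝 (inner ℂ (((z - (x 0 - y) : ↥M) : H →L[ℂ] H) ξ) ξ)) := by
      apply Tendsto.inner _ tendsto_const_nhds
      simpa using (tendsto_const_nhds (x := (z : H →L[ℂ] H) ξ)).sub
        ((tendsto_const_nhds (x := (x 0 : H →L[ℂ] H) ξ)).sub (hlim ξ))
    have := ge_of_tendsto' ht hz'
    rw [Complex.le_def] at this
    refine ⟨?_, this.1⟩
    apply Complex.ext
    · exact Complex.ofReal_re _
    · exact (Complex.ofReal_im _).trans this.2

end Algebraic
end VNLeb

open scoped ComplexOrder

namespace VNLeb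
open Filter Topology

section Operators
variable {H : Type} [NormedAddCommGroup H] [InnerProductSpace ℂ H] [CompleteSpace H]
variable {M : VonNeumannAlgebra H}

@[simp, norm_cast] lemma coe_star_M (a : ↥M) : ((star a : ↥M) : H →L[ℂ] H) = star (a : H →L[ℂ] H) := rfl

lemma inner_star (a : H →L[ℂ] H) (ξ η : H) : inner ℂ ((star a) ξ) η = inner ℂ ξ (a η) := by
  rw [ContinuousLinearMap.star_eq_adjoint, ContinuousLinearMap.adjoint_inner_left]

lemma norm_sq_star_mul (a : H →L[ℂ] H) (ξ : H) :
    ‖a ξ‖ ^ 2 = (inner ℂ ((star a * a) ξ) ξ).re := by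
  rw [mul_apply_eq_comp, inner_star, inner_self_eq_norm_sq_to_K]
  norm_cast

lemma re_inner_nonneg {a : H →L[ℂ] H} (ha : 0 ≤ a) (ξ : H) : 0 ≤ (inner ℂ (a ξ) ξ).re :=
  (Complex.le_def.1 (((ContinuousLinearMap.nonneg_iff_isPositive a).1 ha).inner_nonneg_left ξ)).1

lemma re_inner_mono {a b : H →L[ℂ] H} (hab : a ≤ b) (ξ : H) :
    (inner ℂ (a ξ) ξ).re ≤ (inner ℂ (b ξ) ξ).re := by
  have := re_inner_nonneg (sub_nonneg.2 hab) ξ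
  simp [inner_sub_left] at this
  exact this

lemma nonneg_of_inner {a : H →L[ℂ] H} (h : ∀ ξ, 0 ≤ inner ℂ (a ξ) ξ) : 0 ≤ a := by
  rw [ContinuousLinearMap.nonneg_iff_isPositive, ContinuousLinearMap.isPositive_iff_complex]
  intro ξ
  have := h ξ
  rw [Complex.le_def] at this
  refine ⟨?_, this.1⟩
  apply Complex.ext
  · exact Complex.ofReal_re _
  · exact (Complex.ofReal_im _).trans this.2

lemma norm_sq_le_of_nonneg {D : H →L[ℂ] H} (hD : 0 ≤ D) (ξ : H) :
    ‖D ξ‖ ^ 2 ≤ ‖D‖ * (inner ℂ (D ξ) ξ).re := by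
  set s := CFC.sqrt D with hs
  have hss : s * s = D := CFC.sqrt_mul_sqrt_self _ hD
  have hsa : star s = s := (CFC.sqrt_nonneg D).isSelfAdjoint.star_eq
  have h1 : ‖s ξ‖ ^ 2 = (inner ℂ (D ξ) ξ).re := by
    rw [norm_sq_star_mul, hsa, hss]
  have h2 : ‖s‖ * ‖s‖ = ‖D‖ := by
    rw [← CStarRing.norm_star_mul_self, hsa, hss]
  have h3 : ‖D ξ‖ ≤ ‖s‖ * ‖s ξ‖ := by
    rw [← hss]; exact s.le_opNorm _
  calc ‖D ξ‖ ^ 2 ≤ (‖s‖ * ‖s ξ‖) ^ 2 := by gcongr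
    _ = _ := by rw [mul_pow, h1, sq, h2]

lemma exists_lim_op (x : ℕ → H →L[ℂ] H) (hpos : ∀ i, 0 ≤ x i)
    (hanti : ∀ i j, i ≤ j → x j ≤ x i) :
    ∃ y : H →L[ℂ] H, ∀ ξ, Tendsto (fun i => x i ξ) atTop (𝓝 (y ξ)) := by
  have hex : ∀ ξ, ∃ η, Tendsto (fun i => x i ξ) atTop (𝓝 η) := by
    intro ξ
    apply cauchySeq_tendsto_of_complete
    set u : ℕ → ℝ := fun i => (inner ℂ (x i ξ) ξ).re with hu
    have hua : Antitone u := fun i j hij => re_inner_mono (hanti i j hij) ξ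
    have hub : BddBelow (Set.range u) := ⟨0, by
      rintro _ ⟨i, rfl⟩; exact re_inner_nonneg (hpos i) ξ⟩
    have huc : CauchySeq u := (tendsto_atTop_ciInf hua hub).cauchySeq
    have key : ∀ i j, ‖x i ξ - x j ξ‖ ^ 2 ≤ ‖x 0‖ * |u i - u j| := by
      have key' : ∀ i j, i ≤ j → ‖x i ξ - x j ξ‖ ^ 2 ≤ ‖x 0‖ * |u i - u j| := by
        intro i j hij
        have hD : 0 ≤ x i - x j := sub_nonneg.2 (hanti i j hij)
        have h1 := norm_sq_le_of_nonneg hD ξ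
        have h2 : ‖x i - x j‖ ≤ ‖x 0‖ := by
          apply CStarAlgebra.norm_le_norm_of_nonneg_of_le hD
          exact (sub_le_self _ (hpos j)).trans (hanti 0 i (Nat.zero_le _))
        have h3 : (inner ℂ ((x i - x j) ξ) ξ).re = u i - u j := by
          simp [hu, inner_sub_left]
        rw [h3] at h1
        calc _ ≤ _ := h1
          _ ≤ _ := mul_le_mul h2 (le_abs_self _) (by rw [← h3]; exact re_inner_nonneg hD ξ)
            (norm_nonneg _)
      intro i j
      rcases le_total i j with h | h
      · exact key' i j h
      · rw [norm_sub_rev, abs_sub_comm]; exact key' j i h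
    rw [Metric.cauchySeq_iff] at huc ⊢
    intro ε hε
    obtain ⟨N, hN⟩ := huc (ε ^ 2 / (‖x 0‖ + 1)) (by positivity)
    refine ⟨N, fun m hm n hn => ?_⟩
    have h1 := hN m hm n hn
    rw [Real.dist_eq] at h1
    rw [dist_eq_norm]
    have h2 := key m n
    have h3 : ‖x m ξ - x n ξ‖ ^ 2 < ε ^ 2 := by
      rw [lt_div_iff₀ (by positivity)] at h1
      nlinarith [abs_nonneg (u m - u n)]
    exact lt_of_pow_lt_pow_left₀ 2 hε.le h3
  choose y hy using hex
  exact ⟨continuousLinearMapOfTendsto (fun i => x i) (tendsto_pi_nhds.2 hy), hy⟩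

lemma lim_mem {x : ℕ → H →L[ℂ] H} {y : H →L[ℂ] H} (hx : ∀ i, x i ∈ M)
    (hlim : ∀ ξ, Tendsto (fun i => x i ξ) atTop (𝓝 (y ξ))) : y ∈ M := by
  apply mem_of_commute
  intro z hz
  ext ξ
  have h1 := hlim (z ξ)
  have h2 := (z.continuous.tendsto _).comp (hlim ξ)
  refine tendsto_nhds_unique h1 (h2.congr fun i => ?_)
  have := commute_of_mem (hx i) hz
  exact congrArg (fun T : H →L[ℂ] H => T ξ) this.eq.symm

lemma nonneg_lim {x : ℕ → H →L[ℂ] H} {y : H →L[ℂ] H} (n : ℕ) (hx : ∀ i, n ≤ i → 0 ≤ x i)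
    (hlim : ∀ ξ, Tendsto (fun i => x i ξ) atTop (𝓝 (y ξ))) : 0 ≤ y := by
  apply nonneg_of_inner
  intro ξ
  refine ge_of_tendsto ((hlim ξ).inner tendsto_const_nhds) ?_
  filter_upwards [eventually_ge_atTop n] with i hi
  exact ((ContinuousLinearMap.nonneg_iff_isPositive _).1 (hx i hi)).inner_nonneg_left ξ

lemma exists_lim (x : ℕ → ↥M) (hpos : ∀ i, 0 ≤ (x i : H →L[ℂ] H))
    (hanti : ∀ i j, i ≤ j → (x j : H →L[ℂ] H) ≤ x i) :
    ∃ y : ↥M, 0 ≤ (y : H →L[ℂ] H) ∧ (∀ i, (y : H →L[ℂ] H) ≤ x i) ∧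
      ∀ ξ : H, Tendsto (fun i => (x i : H →L[ℂ] H) ξ) atTop (𝓝 ((y : H →L[ℂ] H) ξ)) := by
  obtain ⟨y, hy⟩ := exists_lim_op (fun i => (x i : H →L[ℂ] H)) hpos hanti
  refine ⟨⟨y, lim_mem (fun i => (x i).2) hy⟩, nonneg_lim 0 (fun i _ => hpos i) hy, ?_, hy⟩
  intro i
  rw [← sub_nonneg]
  refine nonneg_lim (x := fun j => (x i : H →L[ℂ] H) - (x j : H →L[ℂ] H)) i (fun j hj => ?_) ?_
  · exact sub_nonneg.2 (hanti i j hj)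
  · intro ξ
    simpa using (tendsto_const_nhds (x := (x i : H →L[ℂ] H) ξ)).sub (hy ξ)

/-- finiteness excludes infinitely many orthogonal equivalent projections -/
lemma shift_contra (hM : VNFinite M) (w : ℕ → ↥M) (Q : ↥M) (hQ : Q * Q = Q)
    (hw : ∀ i j, star (w i) * w j = if i = j then Q else 0) : Q = 0 := by
  have hQs : star Q = Q := by
    have := hw 0 0
    rw [if_pos rfl] at this
    rw [← this]; simp
  have hwQ : ∀ i, w i * Q = w i := by
    intro i
    have h : star (w i - w i * Q) * (w i - w i * Q) = 0 := by
      have e : star (w i - w i * Q) * (w i - w i * Q)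
        = star (w i) * w i - star (w i) * w i * Q - star Q * (star (w i) * w i)
          + star Q * (star (w i) * w i) * Q := by
        simp only [star_sub, star_mul]; noncomm_ring
      rw [e, hw, if_pos rfl, hQs, hQ, hQ]; simp
    have h' := congrArg (fun a : ↥M => (a : H →L[ℂ] H)) h
    push_cast at h'
    have := CStarRing.star_mul_self_eq_zero_iff _ |>.1 h'
    have h2 : w i - w i * Q = 0 := Subtype.ext (by push_cast; exact this)
    exact (sub_eq_zero.1 h2).symm
  set p : Finset ℕ → ↥M := fun F => ∑ j ∈ F, w j * star (w j) with hp
  set t : Finset ℕ → ↥M := fun F => ∑ j ∈ F, w (j + 1) * star (w j) with ht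
  have hpp : ∀ F, p F * p F = p F := by
    intro F
    simp only [hp]
    rw [Finset.sum_mul_sum]
    apply Finset.sum_congr rfl
    intro i hi
    have : ∀ j ∈ F, w i * star (w i) * (w j * star (w j))
        = if i = j then w i * star (w i) else 0 := by
      intro j hj
      rw [show w i * star (w i) * (w j * star (w j)) = w i * (star (w i) * w j) * star (w j) by
        noncomm_ring, hw]
      split_ifs with h
      · rw [hwQ, h]
      · simp
    rw [Finset.sum_congr rfl this]
    simp [hi]
  have hps : ∀ F, star (p F) = p F := by intro F; simp [hp]
  have htt : ∀ F, star (t F) * t F = p F := by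
    intro F
    simp only [hp, ht, star_sum]
    rw [Finset.sum_mul_sum]
    apply Finset.sum_congr rfl
    intro i hi
    have : ∀ j ∈ F, star (w (i + 1) * star (w i)) * (w (j + 1) * star (w j))
        = if i = j then w i * star (w i) else 0 := by
      intro j hj
      rw [show star (w (i + 1) * star (w i)) * (w (j + 1) * star (w j))
        = w i * (star (w (i + 1)) * w (j + 1)) * star (w j) by
        simp only [star_mul, star_star]; noncomm_ring, hw]
      by_cases h : i = j
      · simp [h, hwQ]
      · simp [h]
    rw [Finset.sum_congr rfl this]
    simp [hi]
  have hp0 : ∀ F, 0 ≤ (p F : H →L[ℂ] H) := by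
    intro F
    rw [← htt F]; push_cast
    exact star_mul_self_nonneg _
  have hp1 : ∀ F, 0 ≤ ((1 - p F : ↥M) : H →L[ℂ] H) := by
    intro F
    have : 1 - p F = star (1 - p F) * (1 - p F) := by
      simp only [star_sub, star_one, hps]
      rw [sub_mul, mul_sub, mul_sub, hpp]; simp
    rw [this]; push_cast
    exact star_mul_self_nonneg _
  have hsplit : ∀ (u : ℕ → ↥M) m n, m ≤ n → ∑ j ∈ Finset.range n, u j
      - ∑ j ∈ Finset.range m, u j = ∑ j ∈ Finset.Ico m n, u j := by
    intro u m n h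
    rw [Finset.sum_Ico_eq_sub _ h]
  obtain ⟨P', -, -, hP'⟩ := exists_lim (fun n => 1 - p (Finset.range n)) (fun n => hp1 _) (by
    intro i j hij
    rw [← sub_nonneg]
    have := hp0 (Finset.Ico i j)
    rw [hp] at this
    simp only at this
    rw [← hsplit _ _ _ hij] at this
    simpa [hp] using this)
  set P : ↥M := 1 - P' with hPdef
  have hP : ∀ ξ : H, Tendsto (fun n => (p (Finset.range n) : H →L[ℂ] H) ξ) atTop
      (𝓝 ((P : H →L[ℂ] H) ξ)) := by
    intro ξ
    simpa [hPdef] using (tendsto_const_nhds (x := ξ)).sub (hP' ξ)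
  have hPs : star P = P := by
    have : 0 ≤ (P : H →L[ℂ] H) := nonneg_lim 0 (fun i _ => hp0 _) hP
    apply Subtype.ext
    exact this.isSelfAdjoint.star_eq
  have hpw : ∀ n j, j < n → p (Finset.range n) * w j = w j := by
    intro n j hj
    simp only [hp]
    rw [Finset.sum_mul]
    simp only [mul_assoc, hw]
    simp [hj, hwQ]
  have hPw : ∀ j, P * w j = w j := by
    intro j
    apply Subtype.ext
    ext ξ
    refine tendsto_nhds_unique (hP ((w j : H →L[ℂ] H) ξ)) ?_
    refine tendsto_const_nhds.congr' ?_
    filter_upwards [eventually_gt_atTop j] with n hn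
    have := congrArg (fun a : ↥M => (a : H →L[ℂ] H) ξ) (hpw n j hn)
    simpa using this.symm
  have hPp : ∀ F, P * p F = p F := by
    intro F
    simp only [hp]
    rw [Finset.mul_sum]
    simp only [← mul_assoc, hPw]
  have hPt : ∀ F, P * t F = t F := by
    intro F
    simp only [ht]
    rw [Finset.mul_sum]
    simp only [← mul_assoc, hPw]
  have hPP : P * P = P := by
    apply Subtype.ext
    ext ξ
    have h1 := (((P : H →L[ℂ] H).continuous.tendsto _).comp (hP ξ))
    refine tendsto_nhds_unique h1 ((hP ξ).congr fun n => ?_)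
    have := congrArg (fun a : ↥M => (a : H →L[ℂ] H) ξ) (hPp (Finset.range n))
    simpa using this.symm
  have hSex : ∀ ξ : H, ∃ η, Tendsto (fun n => (t (Finset.range n) : H →L[ℂ] H) ξ) atTop (𝓝 η) := by
    intro ξ
    apply cauchySeq_tendsto_of_complete
    set u : ℕ → ℂ := fun n => inner ℂ ((p (Finset.range n) : H →L[ℂ] H) ξ) ξ with hu
    have huc : CauchySeq u := ((hP ξ).inner tendsto_const_nhds).cauchySeq
    have key' : ∀ i j, i ≤ j → ‖(t (Finset.range j) : H →L[ℂ] H) ξ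
        - (t (Finset.range i) : H →L[ℂ] H) ξ‖ ^ 2 ≤ ‖u j - u i‖ := by
      intro i j hij
      have h1 := norm_sq_star_mul (t (Finset.Ico i j) : H →L[ℂ] H) ξ
      have h2 := congrArg (fun a : ↥M => (a : H →L[ℂ] H)) (htt (Finset.Ico i j))
      push_cast at h2
      rw [h2] at h1
      have h3 : t (Finset.Ico i j) = t (Finset.range j) - t (Finset.range i) := by
        simp only [ht]; rw [hsplit _ _ _ hij]
      have h4 : p (Finset.Ico i j) = p (Finset.range j) - p (Finset.range i) := by
        simp only [hp]; rw [hsplit _ _ _ hij]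
      rw [h3, h4] at h1
      push_cast at h1
      simp only [Pi.sub_apply, inner_sub_left] at h1
      rw [h1]
      exact Complex.re_le_norm _
    rw [Metric.cauchySeq_iff'] at huc ⊢
    intro ε hε
    obtain ⟨N, hN⟩ := huc (ε ^ 2) (by positivity)
    refine ⟨N, fun n hn => ?_⟩
    have h1 := hN n hn
    rw [dist_eq_norm] at h1 ⊢
    exact lt_of_pow_lt_pow_left₀ 2 hε.le ((key' N n hn).trans_lt h1)
  choose S0 hS0 using hSex
  have hS1 : ∃ S : H →L[ℂ] H, ∀ ξ, Tendsto (fun n => (t (Finset.range n) : H →L[ℂ] H) ξ) atTop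
      (𝓝 (S ξ)) :=
    ⟨continuousLinearMapOfTendsto (fun n => (t (Finset.range n) : H →L[ℂ] H))
      (tendsto_pi_nhds.2 hS0), hS0⟩
  obtain ⟨S1, hS1⟩ := hS1
  obtain ⟨S, hS⟩ : ∃ S : ↥M, ∀ ξ, Tendsto (fun n => (t (Finset.range n) : H →L[ℂ] H) ξ) atTop
      (𝓝 ((S : H →L[ℂ] H) ξ)) := ⟨⟨S1, lim_mem (fun n => (t (Finset.range n)).2) hS1⟩, hS1⟩
  have hSS : star S * S = P := by
    apply Subtype.ext
    push_cast
    apply ContinuousLinearMap.ext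
    intro ξ
    apply ext_inner_right ℂ
    intro η
    rw [mul_apply_eq_comp, inner_star]
    refine tendsto_nhds_unique ((hS ξ).inner (hS η)) ?_
    refine ((hP ξ).inner (tendsto_const_nhds (x := η))).congr fun n => ?_
    rw [← inner_star, ← mul_apply_eq_comp]
    have h2 := congrArg (fun a : ↥M => (a : H →L[ℂ] H)) (htt (Finset.range n))
    push_cast at h2
    rw [h2]
  have hPS : P * S = S := by
    apply Subtype.ext
    ext ξ
    have h1 := (((P : H →L[ℂ] H).continuous.tendsto _).comp (hS ξ))
    refine tendsto_nhds_unique h1 ((hS ξ).congr fun n => ?_)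
    have := congrArg (fun a : ↥M => (a : H →L[ℂ] H) ξ) (hPt (Finset.range n))
    simpa using this.symm
  have hwS : star (w 0) * S = 0 := by
    apply Subtype.ext
    ext ξ
    have h1 := (((star (w 0 : H →L[ℂ] H)).continuous.tendsto _).comp (hS ξ))
    refine tendsto_nhds_unique h1 ?_
    refine tendsto_const_nhds.congr fun n => ?_
    have h0 : star (w 0) * t (Finset.range n) = 0 := by
      simp only [ht]
      rw [Finset.mul_sum]
      apply Finset.sum_eq_zero
      intro j _
      rw [← mul_assoc, hw]; simp
    have := congrArg (fun a : ↥M => (a : H →L[ℂ] H) ξ) h0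
    simpa using this.symm
  have hSP : star S * P = star S := by
    have := congrArg star hPS
    rwa [star_mul, hPs] at this
  have hV : star (S + (1 - P)) * (S + (1 - P)) = 1 := by
    have e : star (S + (1 - P)) * (S + (1 - P)) = star S * S + (star S - star S * P)
      + (S - P * S) + (1 - P - P + P * P) := by
      simp only [star_add, star_sub, star_one, hPs]; noncomm_ring
    rw [e, hSS, hSP, hPS, hPP]; abel
  have hVV := hM _ hV
  have hwP : star (w 0) * P = star (w 0) := by
    have := congrArg star (hPw 0)
    rwa [star_mul, hPs] at this
  have hwV : star (w 0) * (S + (1 - P)) = 0 := by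
    rw [mul_add, mul_sub, hwS, hwP]; simp
  have h0 : star (w 0) = 0 := by
    calc star (w 0) = star (w 0) * ((S + (1 - P)) * star (S + (1 - P))) := by rw [hVV, mul_one]
      _ = 0 := by rw [← mul_assoc, hwV, zero_mul]
  have := hw 0 0
  rw [h0, zero_mul, if_pos rfl] at this
  exact this.symm

end Operators
end VNLeb

open scoped ComplexOrder

namespace VNLeb
open Filter Topology

section Parallel
variable {H : Type} [NormedAddCommGroup H] [InnerProductSpace ℂ H] [CompleteSpace H]
variable {M : VonNeumannAlgebra H}

lemma var_ineq {s g : ↥M →ₗ[ℂ] ℂ} (hs : VNIsPos s) (hg : VNIsPos g) (I δ : ℝ) (hδ : 0 ≤ δ)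
    (hI : ∀ x, I ≤ nrm s (1 - x) ^ 2 + nrm g x ^ 2) (x b : ↥M)
    (hx : nrm s (1 - x) ^ 2 + nrm g x ^ 2 ≤ I + δ) :
    ‖s (star b * (1 - x)) - g (star b * x)‖ ≤ Real.sqrt δ * (nrm s b + nrm g b) := by
  set D := s (star b * (1 - x)) - g (star b * x) with hD
  have key : ∀ t : ℝ, 0 ≤ (‖D‖ ^ 2 * (nrm s b ^ 2 + nrm g b ^ 2)) * (t * t)
      + (-2 * ‖D‖ ^ 2) * t + δ := by
    intro t
    have h1 := hI (((t : ℂ) * D) • b + x)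
    have e1 : 1 - (((t : ℂ) * D) • b + x) = (-((t : ℂ) * D)) • b + (1 - x) := by
      rw [neg_smul]; abel
    rw [e1, nrm_expand hs, nrm_expand hg, nrm_smul hs, nrm_smul hg] at h1
    have e2 : (s (star ((-((t : ℂ) * D)) • b) * (1 - x))).re
        + (g (star (((t : ℂ) * D) • b) * x)).re = - (t * ‖D‖ ^ 2) := by
      rw [star_smul, star_smul, smul_mul_assoc, smul_mul_assoc, map_smul, map_smul,
        smul_eq_mul, smul_eq_mul, ← Complex.add_re]
      have : star (-((t : ℂ) * D)) * s (star b * (1 - x)) + star ((t : ℂ) * D) * g (star b * x)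
          = ((-(t * ‖D‖ ^ 2) : ℝ) : ℂ) := by
        have h3 : star ((t : ℂ) * D) = (t : ℂ) * (starRingEnd ℂ) D := by simp
        rw [star_neg, h3]
        have h4 : (starRingEnd ℂ) D * D = ((‖D‖ ^ 2 : ℝ) : ℂ) := by
          rw [mul_comm, Complex.mul_conj, Complex.normSq_eq_norm_sq]
        calc _ = -(t * ((starRingEnd ℂ) D * D)) := by
              conv_rhs => rw [hD]
              ring
          _ = _ := by rw [h4]; push_cast; ring
      rw [this, Complex.ofReal_re]
    have e3 : ‖(t : ℂ) * D‖ ^ 2 = t ^ 2 * ‖D‖ ^ 2 := by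
      rw [norm_mul, mul_pow, Complex.norm_real, Real.norm_eq_abs, sq_abs]
    rw [norm_neg, mul_pow, mul_pow, e3] at h1
    nlinarith
  have h := discrim_le_zero key
  rw [discrim] at h
  have h5 : ‖D‖ ^ 2 ≤ δ * (nrm s b ^ 2 + nrm g b ^ 2) := by
    rcases eq_or_lt_of_le (norm_nonneg D) with h0 | h0
    · rw [← h0]
      have := sq_nonneg (nrm s b); have := sq_nonneg (nrm g b)
      simp; positivity
    · have h0' : 0 < ‖D‖ ^ 2 := by positivity
      by_contra hc
      push Not at hc
      nlinarith [mul_lt_mul_of_pos_left hc h0']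
  refine le_of_sq_le_sq ?_ (mul_nonneg (Real.sqrt_nonneg _)
    (add_nonneg (nrm_nonneg _ _) (nrm_nonneg _ _)))
  rw [mul_pow, Real.sq_sqrt hδ]
  refine h5.trans (mul_le_mul_of_nonneg_left ?_ hδ)
  nlinarith [nrm_nonneg s b, nrm_nonneg g b, mul_nonneg (nrm_nonneg s b) (nrm_nonneg g b)]

lemma parallel {s g : ↥M →ₗ[ℂ] ℂ} (hs : VNIsPos s) (hsn : VNIsNormal s) (hg : VNIsPos g)
    (hsing : VNSingular s g) (η : ℝ) (hη : 0 < η) :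
    ∃ x : ↥M, nrm g x < η ∧ nrm s (1 - x) < η := by
  set F : ↥M → ℝ := fun x => nrm s (1 - x) ^ 2 + nrm g x ^ 2 with hF
  have hF0 : ∀ x, 0 ≤ F x := fun x => by positivity
  have hbdd : BddBelow (Set.range F) := ⟨0, by rintro _ ⟨x, rfl⟩; exact hF0 x⟩
  set I : ℝ := sInf (Set.range F) with hIdef
  have hI : ∀ x, I ≤ F x := fun x => csInf_le hbdd ⟨x, rfl⟩
  have hex : ∀ n : ℕ, ∃ x, F x < I + 1 / ((n : ℝ) + 1) := by
    intro n
    obtain ⟨_, ⟨x, rfl⟩, hx⟩ := exists_lt_of_csInf_lt (Set.range_nonempty F)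
      (show sInf (Set.range F) < I + 1 / ((n : ℝ) + 1) by
        have : 0 < 1 / ((n : ℝ) + 1) := by positivity
        linarith)
    exact ⟨x, hx⟩
  choose x hx using hex
  set d : ℕ → ℝ := fun n => Real.sqrt (1 / ((n : ℝ) + 1)) with hd
  have hd0 : Tendsto d atTop (𝓝 0) := by
    have := (Real.continuous_sqrt.tendsto 0).comp tendsto_one_div_add_atTop_nhds_zero_nat
    simpa [hd, Function.comp_def] using this
  have hdn : ∀ n, 0 ≤ d n := fun n => Real.sqrt_nonneg _
  have hvar : ∀ n b, ‖s (star b * (1 - x n)) - g (star b * x n)‖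
      ≤ d n * (nrm s b + nrm g b) := fun n b =>
    var_ineq hs hg I _ (by positivity) hI (x n) b (hx n).le
  -- Cauchy
  have hcau : ∀ m n, nrm s (x m - x n) ≤ 2 * (d n + d m) := by
    intro m n
    set e := x m - x n with he
    have h1 := hvar n e
    have h2 := hvar m e
    have h3 : (s (star e * (1 - x n)) - g (star e * x n))
        - (s (star e * (1 - x m)) - g (star e * x m))
        = ((nrm s e ^ 2 + nrm g e ^ 2 : ℝ) : ℂ) := by
      push_cast
      have hs1 := f_eq_nrm hs e
      have hg1 := f_eq_nrm hg e
      push_cast at hs1 hg1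
      rw [← hs1, ← hg1]
      have a1 : star e * (1 - x n) = star e * (1 - x m) + star e * e := by
        rw [he]; noncomm_ring
      have a2 : star e * x m = star e * x n + star e * e := by
        rw [he]; noncomm_ring
      rw [a1, a2, map_add, map_add]; ring
    have h4 : nrm s e ^ 2 + nrm g e ^ 2 ≤ (d n + d m) * (nrm s e + nrm g e) := by
      have := norm_sub_le (s (star e * (1 - x n)) - g (star e * x n))
        (s (star e * (1 - x m)) - g (star e * x m))
      rw [h3, Complex.norm_real, Real.norm_eq_abs, abs_of_nonneg (by positivity)] at this
      linarith
    have hse := nrm_nonneg s e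
    have hge := nrm_nonneg g e
    have hdd := add_nonneg (hdn n) (hdn m)
    by_contra hc
    push Not at hc
    nlinarith [sq_nonneg (nrm s e - nrm g e)]
  -- the limit functional
  have hlim : ∀ a : ↥M, ∃ z, Tendsto (fun n => s (a * (1 - x n))) atTop (𝓝 z) := by
    intro a
    apply cauchySeq_tendsto_of_complete
    rw [Metric.cauchySeq_iff]
    intro ε hε
    have hd1 : Tendsto (fun n => (4 * nrm s (star a)) * d n) atTop (𝓝 0) := by
      simpa using hd0.const_mul (4 * nrm s (star a))
    obtain ⟨N, hN⟩ := eventually_atTop.1 (hd1.eventually (gt_mem_nhds hε))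
    refine ⟨N, fun m hm n hn => ?_⟩
    rw [dist_eq_norm, ← map_sub]
    have e : a * (1 - x m) - a * (1 - x n) = star (star a) * (x n - x m) := by
      rw [star_star]; noncomm_ring
    rw [e]
    have h1 := cauchy hs (star a) (x n - x m)
    have h2 := hcau n m
    have h3 := mul_le_mul_of_nonneg_left h2 (nrm_nonneg s (star a))
    have h4 := hN m hm
    have h5 := hN n hn
    linarith
  choose p0 hp0 using hlim
  let p : ↥M →ₗ[ℂ] ℂ :=
    { toFun := p0
      map_add' := by
        intro a b
        refine tendsto_nhds_unique (hp0 (a + b)) (((hp0 a).add (hp0 b)).congr fun n => ?_)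
        rw [add_mul, map_add]
      map_smul' := by
        intro c a
        refine tendsto_nhds_unique (hp0 (c • a)) (((hp0 a).const_mul c).congr fun n => ?_)
        rw [smul_mul_assoc, map_smul, smul_eq_mul] }
  have hp : ∀ a, Tendsto (fun n => s (a * (1 - x n))) atTop (𝓝 (p a)) := hp0
  have hp' : ∀ a, Tendsto (fun n => g (a * x n)) atTop (𝓝 (p a)) := by
    intro a
    have h0 : Tendsto (fun n => s (a * (1 - x n)) - g (a * x n)) atTop (𝓝 0) := by
      refine squeeze_zero_norm (fun n => ?_)
        (by simpa using hd0.mul_const (nrm s (star a) + nrm g (star a)))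
      simpa using hvar n (star a)
    simpa using (hp a).sub h0
  -- bounds
  obtain ⟨C, hC⟩ : ∃ C : ℝ, ∀ n, nrm s (x n) + nrm g (x n) ≤ C ∧
      nrm s (1 - x n) + nrm g (1 - x n) ≤ C := by
    have hb : ∀ n, nrm s (1 - x n) ≤ I + 2 ∧ nrm g (x n) ≤ I + 2 := by
      intro n
      have h1 := hx n
      have h2 : 1 / ((n : ℝ) + 1) ≤ 1 := by
        rw [div_le_one (by positivity)]; linarith [(Nat.cast_nonneg n : (0:ℝ) ≤ n)]
      simp only [hF] at h1
      constructor
      · nlinarith [sq_nonneg (nrm s (1 - x n) - 1), sq_nonneg (nrm g (x n))]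
      · nlinarith [sq_nonneg (nrm s (1 - x n)), sq_nonneg (nrm g (x n) - 1)]
    refine ⟨2 * (I + 2) + nrm s 1 + nrm g 1, fun n => ?_⟩
    have h1 := nrm_sub hs 1 (1 - x n)
    have h2 := nrm_sub hg 1 (x n)
    rw [sub_sub_cancel] at h1
    have := hb n
    have := nrm_nonneg s 1
    have := nrm_nonneg g 1
    constructor <;> linarith
  have hvar0 : ∀ (c : ↥M) (b : ℕ → ↥M), (∀ n, nrm s (b n) + nrm g (b n) ≤ C) →
      Tendsto (fun n => s (star (c * b n) * (1 - x n)) - g (star (c * b n) * x n)) atTop (𝓝 0) := by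
    intro c b hb
    refine squeeze_zero_norm (fun n => ?_)
      (by simpa using hd0.mul_const (‖(c : H →L[ℂ] H)‖ * C))
    refine (hvar n _).trans (mul_le_mul_of_nonneg_left ?_ (hdn n))
    have h1 := nrm_mul_le hs c (b n)
    have h2 := nrm_mul_le hg c (b n)
    have h3 := mul_le_mul_of_nonneg_left (hb n) (norm_nonneg (c : H →L[ℂ] H))
    linarith
  have hvar1 : ∀ (c : ↥M) (b : ℕ → ↥M), (∀ n, nrm s (b n) + nrm g (b n) ≤ C) →
      Tendsto (fun n => s (star (1 - x n) * (c * b n)) - g (star (x n) * (c * b n))) atTop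
        (𝓝 0) := by
    intro c b hb
    have := (Complex.continuous_conj.tendsto _).comp (hvar0 c b hb)
    rw [map_zero] at this
    refine this.congr fun n => ?_
    simp only [Function.comp]
    rw [map_sub, pos_form_symm hs, pos_form_symm hg]
  have hz : ∀ y : ↥M, Tendsto (fun n => s (star (y * (1 - x n)) * (y * (1 - x n)))
      + g (star (y * x n) * (y * x n))) atTop (𝓝 (p (star y * y))) := by
    intro y
    have h1 := hvar0 (star y * y) x (fun n => (hC n).1)
    have h2 := (hp (star y * y)).sub h1
    rw [sub_zero] at h2
    refine h2.congr fun n => ?_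
    have e1 : star y * y * (1 - x n) = star (y * (1 - x n)) * (y * (1 - x n))
        + star (star y * y * x n) * (1 - x n) := by
      simp only [star_mul, star_sub, star_one, star_star]; noncomm_ring
    have e2 : star (y * x n) * (y * x n) = star (star y * y * x n) * x n := by
      simp only [star_mul, star_star]; noncomm_ring
    rw [e1, e2, map_add]; ring
  have hppos : VNIsPos p := fun y => ge_of_tendsto' (hz y) fun n => add_nonneg (hs _) (hg _)
  have hps : VNLE p s := by
    intro y
    have h1 := hvar1 (star y * y) x (fun n => (hC n).1)
    have h2 := ((tendsto_const_nhds (x := s (star y * y))).sub (hp (star y * y))).sub h1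
    rw [sub_zero] at h2
    refine ge_of_tendsto' h2 fun n => ?_
    have e : s (star y * y) - s (star y * y * (1 - x n))
        - (s (star (1 - x n) * (star y * y * x n)) - g (star (x n) * (star y * y * x n)))
        = s (star (y * x n) * (y * x n)) + g (star (y * x n) * (y * x n)) := by
      rw [← map_sub, ← sub_add, ← map_sub]
      congr 2
      · simp only [star_mul, star_sub, star_one]; noncomm_ring
      · simp only [star_mul]; noncomm_ring
    rw [e]
    exact add_nonneg (hs _) (hg _)
  have hpg : VNLE p g := by
    intro y
    have h1 := hvar1 (star y * y) (fun n => 1 - x n) (fun n => (hC n).2)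
    have h2 := ((tendsto_const_nhds (x := g (star y * y))).sub (hp' (star y * y))).add h1
    rw [add_zero] at h2
    refine ge_of_tendsto' h2 fun n => ?_
    have e : g (star y * y) - g (star y * y * x n)
        + (s (star (1 - x n) * (star y * y * (1 - x n)))
          - g (star (x n) * (star y * y * (1 - x n))))
        = g (star (y * (1 - x n)) * (y * (1 - x n)))
          + s (star (y * (1 - x n)) * (y * (1 - x n))) := by
      rw [← map_sub, ← add_sub_assoc, add_sub_right_comm, ← map_sub]
      congr 2
      · simp only [star_mul, star_sub, star_one]; noncomm_ring
      · simp only [star_mul, star_sub, star_one]; noncomm_ring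
    rw [e]
    exact add_nonneg (hg _) (hs _)
  have hp00 : p = 0 := hsing p hppos (normal_of_le hppos hsn hps) hps hpg
  have hfin : Tendsto (fun n => F (x n)) atTop (𝓝 0) := by
    have h1 := (Complex.continuous_re.tendsto _).comp (hz 1)
    rw [hp00] at h1
    simp only [LinearMap.zero_apply, Complex.zero_re] at h1
    refine h1.congr fun n => ?_
    simp only [Function.comp, one_mul, hF, Complex.add_re, nrm_sq hs, nrm_sq hg]
  obtain ⟨n, hn⟩ := (hfin.eventually (gt_mem_nhds (show (0:ℝ) < η ^ 2 by positivity))).exists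
  refine ⟨x n, ?_, ?_⟩
  · refine lt_of_pow_lt_pow_left₀ 2 hη.le ?_
    simp only [hF] at hn
    nlinarith [sq_nonneg (nrm s (1 - x n))]
  · refine lt_of_pow_lt_pow_left₀ 2 hη.le ?_
    simp only [hF] at hn
    nlinarith [sq_nonneg (nrm g (x n))]

end Parallel
end VNLeb

open scoped ComplexOrder

namespace VNLeb
open Filter Topology

section Res
variable {H : Type} [NormedAddCommGroup H] [InnerProductSpace ℂ H] [CompleteSpace H]
variable {M : VonNeumannAlgebra H}

/-- The resolvent `(1 + T)⁻¹`. -/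
noncomputable def res (T : ↥M) : ↥M :=
  ⟨cfc (fun t : ℝ => (1 + t)⁻¹) (T : H →L[ℂ] H), cfc_mem T.2 _⟩

lemma spec_nonneg {T : H →L[ℂ] H} (hT : 0 ≤ T) {t : ℝ} (ht : t ∈ spectrum ℝ T) : 0 ≤ t :=
  spectrum_nonneg_of_nonneg hT ht

lemma res_cont {T : H →L[ℂ] H} (hT : 0 ≤ T) :
    ContinuousOn (fun t : ℝ => (1 + t)⁻¹) (spectrum ℝ T) := by
  apply ContinuousOn.inv₀ (by fun_prop)
  intro t ht
  have := spec_nonneg hT ht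
  positivity

lemma res_mul {T : ↥M} (hT : 0 ≤ (T : H →L[ℂ] H)) : res T * (1 + T) = 1 := by
  apply Subtype.ext
  have hsa : IsSelfAdjoint (T : H →L[ℂ] H) := hT.isSelfAdjoint
  have h1 : (1 : H →L[ℂ] H) + T = cfc (fun t : ℝ => 1 + t) (T : H →L[ℂ] H) := by
    rw [cfc_const_add 1 (fun t : ℝ => t) (T : H →L[ℂ] H), cfc_id' ℝ (T : H →L[ℂ] H)]
    simp
  push_cast
  rw [h1]
  change cfc (fun t : ℝ => (1 + t)⁻¹) (T : H →L[ℂ] H) * _ = _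
  rw [← cfc_mul _ _ _ (res_cont hT) (by fun_prop)]
  rw [cfc_congr (g := fun _ => (1 : ℝ)), cfc_const_one ℝ (T : H →L[ℂ] H)]
  intro t ht
  have := spec_nonneg hT ht
  simp only
  field_simp

lemma res_nonneg {T : ↥M} (hT : 0 ≤ (T : H →L[ℂ] H)) : 0 ≤ (res T : H →L[ℂ] H) := by
  apply cfc_nonneg
  intro t ht
  have := spec_nonneg hT ht
  positivity

lemma star_of_nonneg {T : ↥M} (hT : 0 ≤ (T : H →L[ℂ] H)) : star T = T :=
  Subtype.ext hT.isSelfAdjoint.star_eq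

lemma mul_res {T : ↥M} (hT : 0 ≤ (T : H →L[ℂ] H)) : (1 + T) * res T = 1 := by
  have := congrArg star (res_mul hT)
  simpa [star_of_nonneg hT, star_of_nonneg (res_nonneg hT)] using this

lemma res_le_one {T : ↥M} (hT : 0 ≤ (T : H →L[ℂ] H)) : (res T : H →L[ℂ] H) ≤ 1 := by
  apply cfc_le_one
  intro t ht
  have := spec_nonneg hT ht
  apply inv_le_one_of_one_le₀; linarith

lemma conj_nonneg {a b : H →L[ℂ] H} (ha : 0 ≤ a) (hb : star b = b) : 0 ≤ b * a * b := by
  have := star_left_conjugate_nonneg ha b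
  rwa [hb] at this

lemma res_anti {S T : ↥M} (hS : 0 ≤ (S : H →L[ℂ] H)) (hST : (S : H →L[ℂ] H) ≤ T) :
    (res T : H →L[ℂ] H) ≤ res S := by
  have hT := hS.trans hST
  have hD : 0 ≤ ((T - S : ↥M) : H →L[ℂ] H) := by push_cast; exact sub_nonneg.2 hST
  have e0 : res S = res T + res T * (T - S) * res S := by
    calc res S = res T * (1 + T) * res S := by rw [res_mul hT, one_mul]
      _ = res T * ((1 + S) * res S) + res T * (T - S) * res S := by noncomm_ring
      _ = _ := by rw [mul_res hS, mul_one]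
  have e0' : res S = res T + res S * (T - S) * res T := by
    have := congrArg star e0
    simpa [star_of_nonneg hT, star_of_nonneg hS, star_of_nonneg (res_nonneg hT),
      star_of_nonneg (res_nonneg hS), mul_assoc] using this
  have e1 : res S - res T = res T * (T - S) * res T
      + star ((T - S) * res T) * res S * ((T - S) * res T) := by
    have : res T * (T - S) * res S = res T * (T - S) * res T
      + star ((T - S) * res T) * res S * ((T - S) * res T) := by
      conv_lhs => rw [e0']
      rw [star_mul, star_of_nonneg hD, star_of_nonneg (res_nonneg hT)]
      noncomm_ring
    rw [← this]
    nth_rewrite 1 [e0]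
    abel
  have h2 : 0 ≤ ((res S - res T : ↥M) : H →L[ℂ] H) := by
    rw [e1]
    push_cast at hD ⊢
    refine add_nonneg (conj_nonneg hD ?_) ?_
    · exact (res_nonneg hT).isSelfAdjoint.star_eq
    · have := star_left_conjugate_nonneg (res_nonneg hS) (((T : H →L[ℂ] H) - S) * (res T : H →L[ℂ] H))
      simpa using this
  push_cast at h2
  exact sub_nonneg.1 h2

lemma norm_le_one_of {a : H →L[ℂ] H} (h0 : 0 ≤ a) (h1 : a ≤ 1) : ‖a‖ ≤ 1 :=
  (CStarAlgebra.norm_le_one_iff_of_nonneg a h0).2 h1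

lemma res_norm {T : ↥M} (hT : 0 ≤ (T : H →L[ℂ] H)) : ‖(res T : H →L[ℂ] H)‖ ≤ 1 :=
  norm_le_one_of (res_nonneg hT) (res_le_one hT)

/-- `(1+d)⁻¹ ≤ 1 - d/2` for `0 ≤ d ≤ 1`. -/
lemma res_le_of_le_one {d : ↥M} (h0 : 0 ≤ (d : H →L[ℂ] H)) (h1 : (d : H →L[ℂ] H) ≤ 1) :
    (res d : H →L[ℂ] H) ≤ 1 - (1 / 2 : ℝ) • (d : H →L[ℂ] H) := by
  have hsa : IsSelfAdjoint (d : H →L[ℂ] H) := h0.isSelfAdjoint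
  have e : 1 - (1 / 2 : ℝ) • (d : H →L[ℂ] H) = cfc (fun t : ℝ => 1 - (1/2) * t) (d : H →L[ℂ] H) := by
    rw [cfc_sub (fun _ : ℝ => (1:ℝ)) (fun t : ℝ => (1/2) * t) (d : H →L[ℂ] H), cfc_const_one ℝ (d : H →L[ℂ] H), cfc_const_mul (1/2 : ℝ) (fun t : ℝ => t) (d : H →L[ℂ] H), cfc_id' ℝ (d : H →L[ℂ] H)]
  rw [e]
  have hc := res_cont h0
  refine cfc_mono (fun t ht => ?_) hc (by fun_prop)
  have ht0 := spec_nonneg h0 ht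
  have ht1 : t ≤ 1 := by
    have := (le_algebraMap_iff_spectrum_le (R := ℝ) (r := 1) (a := (d : H →L[ℂ] H))).1 (by simpa using h1)
    exact this t ht
  rw [inv_le_iff_one_le_mul₀ (by positivity)]
  nlinarith

/-- `1 - B ≤ (1+B)⁻¹`. -/
lemma one_sub_le_res {B : ↥M} (h0 : 0 ≤ (B : H →L[ℂ] H)) :
    (1 : H →L[ℂ] H) - B ≤ res B := by
  have e1 : res B = 1 - res B * B := by
    have := res_mul h0
    rw [mul_add, mul_one] at this
    exact eq_sub_of_add_eq this
  have e2 : res B = 1 - B * res B := by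
    have := mul_res h0
    rw [add_mul, one_mul] at this
    exact eq_sub_of_add_eq this
  have e3 : res B - (1 - B) = B * res B * B := by
    calc res B - (1 - B) = B - B * res B := by
          nth_rewrite 1 [e2]; abel
      _ = B - B * (1 - res B * B) := by nth_rewrite 1 [e1]; rfl
      _ = _ := by noncomm_ring
  have h := conj_nonneg (res_nonneg h0) h0.isSelfAdjoint.star_eq
  have e4 := congrArg (fun a : ↥M => (a : H →L[ℂ] H)) e3
  push_cast at e4
  rw [← e4] at h
  exact sub_nonneg.1 h

lemma norm_res_mul_star (v : ↥M) :
    ‖((res (star v * v) * star v : ↥M) : H →L[ℂ] H)‖ ≤ 1 := by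
  set B : ↥M := star v * v with hB
  have h0 : 0 ≤ (B : H →L[ℂ] H) := by rw [hB]; push_cast; exact star_mul_self_nonneg _
  have hs := star_of_nonneg (res_nonneg h0)
  have e : (res B * star v) * star (res B * star v) = res B - res B * res B := by
    rw [star_mul, star_star, hs]
    have h1 := res_mul h0
    calc res B * star v * (v * res B) = res B * B * res B := by rw [hB]; noncomm_ring
      _ = (res B * (1 + B)) * res B - res B * res B := by noncomm_ring
      _ = _ := by rw [h1, one_mul]
  have e' := congrArg (fun a : ↥M => (a : H →L[ℂ] H)) e
  push_cast at e'
  have h2 : ‖((res B * star v : ↥M) : H →L[ℂ] H)‖ * ‖((res B * star v : ↥M) : H →L[ℂ] H)‖ ≤ 1 := by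
    rw [← CStarRing.norm_self_mul_star]
    push_cast
    rw [e']
    apply norm_le_one_of
    · rw [← e']; exact mul_star_self_nonneg _
    · refine le_trans ?_ (res_le_one h0)
      refine sub_le_self _ ?_
      have := star_mul_self_nonneg (res B : H →L[ℂ] H)
      rwa [(res_nonneg h0).isSelfAdjoint.star_eq] at this
  nlinarith [norm_nonneg ((res B * star v : ↥M) : H →L[ℂ] H)]

lemma le_of_re_inner {a b : H →L[ℂ] H} (ha : IsSelfAdjoint a) (hb : IsSelfAdjoint b)
    (h : ∀ ξ, (inner ℂ (a ξ) ξ).re ≤ (inner ℂ (b ξ) ξ).re) : a ≤ b := by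
  rw [← sub_nonneg, ContinuousLinearMap.nonneg_iff_isPositive,
    ContinuousLinearMap.isPositive_def']
  refine ⟨hb.sub ha, fun ξ => ?_⟩
  have := h ξ
  simpa [ContinuousLinearMap.reApplyInnerSelf_apply, inner_sub_left] using this

lemma re_inner_algebraMap (c : ℝ) (ξ : H) :
    (inner ℂ ((algebraMap ℝ (H →L[ℂ] H) c) ξ) ξ).re = c * ‖ξ‖ ^ 2 := by
  rw [Algebra.algebraMap_eq_smul_one]
  have e : ((c • (1 : H →L[ℂ] H)) ξ) = (c : ℂ) • ξ := by simp
  rw [e, inner_smul_left, inner_self_eq_norm_sq_to_K, Complex.conj_ofReal, Complex.re_ofReal_mul]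
  norm_cast

lemma re_inner_sum {a b c : H →L[ℂ] H} (h : c = star a * a + star b * b) (ξ : H) :
    (inner ℂ (c ξ) ξ).re = ‖a ξ‖ ^ 2 + ‖b ξ‖ ^ 2 := by
  rw [norm_sq_star_mul, norm_sq_star_mul, ← Complex.add_re, ← inner_add_left,
    ← ContinuousLinearMap.add_apply, h]

/-- the contradiction with finiteness -/
lemma proj_zero (hM : VNFinite M) (v : ℕ → ↥M) (hv : ∀ i j, i ≠ j → star (v i) * v j = 0)
    (Q : ↥M) (hQ : Q * Q = Q) (hQs : star Q = Q)
    (hlow : ∀ j (ξ : H), (1 / 3 : ℝ) * ‖(Q : H →L[ℂ] H) ξ‖ ^ 2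
      ≤ ‖(v j : H →L[ℂ] H) ((Q : H →L[ℂ] H) ξ)‖ ^ 2) : Q = 0 := by
  have hex : ∀ j, ∃ h : ↥M, star h = h ∧ h * Q = Q * h ∧
      h * (Q * (star (v j) * v j) * Q) * h = Q := by
    intro j
    set b : ↥M := Q * (star (v j) * v j) * Q + (1 - Q) with hb
    have hQ1 : (1 - Q) * (1 - Q) = 1 - Q := by rw [sub_mul, mul_sub, mul_sub, hQ]; simp
    have hbstar : b = star (v j * Q) * (v j * Q) + star (1 - Q) * (1 - Q) := by
      rw [hb, star_mul, star_sub, hQs, star_one, hQ1]; noncomm_ring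
    have hb0 : 0 ≤ (b : H →L[ℂ] H) := by
      rw [hbstar]; push_cast
      have := add_nonneg (star_mul_self_nonneg ((v j * Q : ↥M) : H →L[ℂ] H))
        (star_mul_self_nonneg ((1 - Q : ↥M) : H →L[ℂ] H))
      simpa using this
    have hbsa : IsSelfAdjoint (b : H →L[ℂ] H) := hb0.isSelfAdjoint
    have hlow' : algebraMap ℝ (H →L[ℂ] H) (1/3) ≤ b := by
      refine le_of_re_inner (IsSelfAdjoint.algebraMap _ (IsSelfAdjoint.all _)) hbsa fun ξ => ?_
      have h1 : (inner ℂ ((b : H →L[ℂ] H) ξ) ξ).re = ‖(v j : H →L[ℂ] H) ((Q : H →L[ℂ] H) ξ)‖ ^ 2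
          + ‖((1 - Q : ↥M) : H →L[ℂ] H) ξ‖ ^ 2 := by
        exact re_inner_sum (a := ((v j * Q : ↥M) : H →L[ℂ] H)) (b := ((1 - Q : ↥M) : H →L[ℂ] H))
          (congrArg (fun a : ↥M => (a : H →L[ℂ] H)) hbstar) ξ
      have h2 : ‖ξ‖ ^ 2 = ‖(Q : H →L[ℂ] H) ξ‖ ^ 2 + ‖((1 - Q : ↥M) : H →L[ℂ] H) ξ‖ ^ 2 := by
        have e5 : star Q * Q + star (1 - Q) * (1 - Q) = 1 := by
          rw [star_sub, hQs, star_one, hQ1, hQ]; abel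
        have e6 := re_inner_sum (a := (Q : H →L[ℂ] H)) (b := ((1 - Q : ↥M) : H →L[ℂ] H))
          (congrArg (fun a : ↥M => (a : H →L[ℂ] H)) e5.symm) ξ
        rw [← e6]
        change _ = (inner ℂ ξ ξ).re
        rw [inner_self_eq_norm_sq_to_K]; norm_cast
      have h3 : (inner ℂ ((algebraMap ℝ (H →L[ℂ] H) (1/3)) ξ) ξ).re = 1/3 * ‖ξ‖ ^ 2 := by
        exact re_inner_algebraMap _ _
      rw [h1, h3, h2]
      have := hlow j ξ
      nlinarith [sq_nonneg ‖((1 - Q : ↥M) : H →L[ℂ] H) ξ‖]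
    have hspec : ∀ t ∈ spectrum ℝ (b : H →L[ℂ] H), 1/3 ≤ t :=
      (algebraMap_le_iff_le_spectrum (R := ℝ)).1 hlow'
    have hcont : ContinuousOn (fun t : ℝ => (Real.sqrt t)⁻¹) (spectrum ℝ (b : H →L[ℂ] H)) := by
      apply ContinuousOn.inv₀ (by fun_prop)
      intro t ht
      have := hspec t ht
      exact (Real.sqrt_pos.2 (by linarith)).ne'
    have hbQ : b * Q = Q * (star (v j) * v j) * Q := by
      rw [hb, add_mul, mul_assoc _ Q Q, sub_mul, hQ]; simp
    have hQb : Q * b = Q * (star (v j) * v j) * Q := by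
      rw [hb, mul_add, ← mul_assoc, ← mul_assoc, mul_sub, hQ]; simp
    set h : ↥M := ⟨cfc (fun t : ℝ => (Real.sqrt t)⁻¹) (b : H →L[ℂ] H), cfc_mem b.2 _⟩ with hh
    have hhQ : h * Q = Q * h := by
      apply Subtype.ext
      have hc : Commute (b : H →L[ℂ] H) (Q : H →L[ℂ] H) := by
        have := congrArg (fun a : ↥M => (a : H →L[ℂ] H)) (hbQ.trans hQb.symm)
        exact this
      exact (hc.cfc_real (fun t : ℝ => (Real.sqrt t)⁻¹)).eq
    have hhb : h * b * h = 1 := by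
      apply Subtype.ext
      push_cast
      have e2 : (h : H →L[ℂ] H) = cfc (fun t : ℝ => (Real.sqrt t)⁻¹) (b : H →L[ℂ] H) := rfl
      rw [e2]
      nth_rewrite 2 [← cfc_id' ℝ (b : H →L[ℂ] H)]
      rw [← cfc_mul _ _ _ hcont (by fun_prop)]
      rw [← cfc_mul (fun x => (Real.sqrt x)⁻¹ * x) _ _ (hcont.mul (by fun_prop)) hcont]
      rw [cfc_congr (g := fun _ => (1 : ℝ)), cfc_const_one ℝ (b : H →L[ℂ] H)]
      intro t ht
      have h3 := hspec t ht
      have h4 : 0 < Real.sqrt t := Real.sqrt_pos.2 (by linarith)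
      have h5 : Real.sqrt t * Real.sqrt t = t := Real.mul_self_sqrt (by linarith)
      simp only
      field_simp
      nlinarith
    refine ⟨h, ?_, hhQ, ?_⟩
    · apply Subtype.ext
      have : IsSelfAdjoint (cfc (fun t : ℝ => (Real.sqrt t)⁻¹) (b : H →L[ℂ] H)) := cfc_predicate _ _
      exact this.star_eq
    · rw [← hbQ, ← mul_assoc, mul_assoc, ← hhQ, ← mul_assoc, hhb, one_mul]
  choose h hs hc hQh using hex
  apply shift_contra hM (fun j => v j * Q * h j) Q hQ
  intro i j
  have e : star (v i * Q * h i) * (v j * Q * h j)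
      = h i * (Q * (star (v i) * v j) * Q) * h j := by
    simp only [star_mul, hs, hQs]; noncomm_ring
  rw [e]
  by_cases hij : i = j
  · subst hij; rw [if_pos rfl, hQh]
  · rw [if_neg hij, hv i j hij]; simp

end Res
end VNLeb

open scoped ComplexOrder

namespace VNLeb
open Filter Topology

section Cut
variable {H : Type} [NormedAddCommGroup H] [InnerProductSpace ℂ H] [CompleteSpace H]
variable {M : VonNeumannAlgebra H}

lemma res_series (a : ℕ → ↥M) (ha : ∀ k, 0 ≤ (a k : H →L[ℂ] H)) :
    ∃ R : ↥M, 0 ≤ (R : H →L[ℂ] H) ∧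
      (∀ m, (R : H →L[ℂ] H) ≤ res (∑ k ∈ Finset.range m, a k)) ∧
      ∀ ξ : H, Tendsto (fun m => (res (∑ k ∈ Finset.range m, a k) : H →L[ℂ] H) ξ) atTop
        (𝓝 ((R : H →L[ℂ] H) ξ)) := by
  have hpos : ∀ F : Finset ℕ, 0 ≤ ((∑ k ∈ F, a k : ↥M) : H →L[ℂ] H) := by
    intro F
    push_cast
    exact Finset.sum_nonneg fun k _ => ha k
  apply exists_lim
  · intro m
    exact res_nonneg (hpos _)
  · intro i j hij
    apply res_anti (hpos _)
    push_cast
    apply Finset.sum_le_sum_of_subset_of_nonneg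
    · exact Finset.range_mono hij
    · intro k _ _; exact ha k

lemma sum_nonneg_M (a : ℕ → ↥M) (ha : ∀ k, 0 ≤ (a k : H →L[ℂ] H)) (F : Finset ℕ) :
    0 ≤ ((∑ k ∈ F, a k : ↥M) : H →L[ℂ] H) := by
  push_cast
  exact Finset.sum_nonneg fun k _ => ha k

lemma le_sum_M (a : ℕ → ↥M) (ha : ∀ k, 0 ≤ (a k : H →L[ℂ] H)) (F : Finset ℕ) (j : ℕ)
    (hj : j ∈ F) : (a j : H →L[ℂ] H) ≤ ((∑ k ∈ F, a k : ↥M) : H →L[ℂ] H) := by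
  push_cast
  exact Finset.single_le_sum (f := fun k => (a k : H →L[ℂ] H)) (fun k _ => ha k) hj

lemma sq_le_self {D : H →L[ℂ] H} (h0 : 0 ≤ D) (h1 : D ≤ 1) : D * D ≤ D := by
  set s := CFC.sqrt D with hs
  have hss : s * s = D := CFC.sqrt_mul_sqrt_self _ h0
  have hsa : star s = s := (CFC.sqrt_nonneg D).isSelfAdjoint.star_eq
  have := star_left_conjugate_le_conjugate h1 s
  rw [hsa, mul_one, hss] at this
  have e : s * D * s = D * D := by rw [← hss]; noncomm_ring
  rwa [e] at this

lemma nrm_tendsto {f : ↥M →ₗ[ℂ] ℂ} (hf : VNIsPos f) (hfn : VNIsNormal f)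
    (x : ℕ → ↥M) (y : ↥M) (h0 : 0 ≤ (y : H →L[ℂ] H)) (hpos : ∀ i, (y : H →L[ℂ] H) ≤ x i)
    (h1 : ∀ i, (x i : H →L[ℂ] H) ≤ 1)
    (hanti : ∀ i j, i ≤ j → (x j : H →L[ℂ] H) ≤ x i)
    (hlim : ∀ ξ : H, Tendsto (fun i => (x i : H →L[ℂ] H) ξ) atTop (𝓝 ((y : H →L[ℂ] H) ξ))) :
    Tendsto (fun i => nrm f (x i - y)) atTop (𝓝 0) := by
  have ht := (normal_tendsto hf hfn x y hpos hanti hlim).sub_const (f y).re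
  rw [sub_self] at ht
  have ht2 := (Real.continuous_sqrt.tendsto 0).comp ht
  rw [Real.sqrt_zero] at ht2
  refine squeeze_zero (fun i => nrm_nonneg _ _) (fun i => ?_) ht2
  simp only [Function.comp, nrm]
  apply Real.sqrt_le_sqrt
  rw [← Complex.sub_re, ← map_sub]
  apply f_re_mono hf
  have hD0 : 0 ≤ ((x i - y : ↥M) : H →L[ℂ] H) := by push_cast; exact sub_nonneg.2 (hpos i)
  rw [star_of_nonneg hD0]
  have hD1 : ((x i - y : ↥M) : H →L[ℂ] H) ≤ 1 := by
    push_cast; exact (sub_le_self _ h0).trans (h1 i)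
  exact sq_le_self hD0 hD1

/-! ### distance seminorm to the kernel of `g` -/

/-- distance from `a` to the left kernel of `g`, in the seminorm of `s` -/
noncomputable def qn (s g : ↥M →ₗ[ℂ] ℂ) (a : ↥M) : ℝ :=
  sInf {r | ∃ y : ↥M, nrm g y = 0 ∧ nrm s (a - y) = r}

lemma qn_bdd (s g : ↥M →ₗ[ℂ] ℂ) (a : ↥M) :
    BddBelow {r | ∃ y : ↥M, nrm g y = 0 ∧ nrm s (a - y) = r} :=
  ⟨0, by rintro _ ⟨y, _, rfl⟩; exact nrm_nonneg _ _⟩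

lemma qn_nonneg (s g : ↥M →ₗ[ℂ] ℂ) (a : ↥M) : 0 ≤ qn s g a := by
  apply Real.sInf_nonneg
  rintro _ ⟨y, _, rfl⟩; exact nrm_nonneg _ _

lemma qn_le (s : ↥M →ₗ[ℂ] ℂ) {g : ↥M →ₗ[ℂ] ℂ} (a : ↥M) {y : ↥M} (hy : nrm g y = 0) :
    qn s g a ≤ nrm s (a - y) := csInf_le (qn_bdd s g a) ⟨y, hy, rfl⟩

lemma qn_le_nrm (s g : ↥M →ₗ[ℂ] ℂ) (a : ↥M) : qn s g a ≤ nrm s a := by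
  simpa using qn_le s (g := g) a nrm_zero

lemma qn_lt (s g : ↥M →ₗ[ℂ] ℂ) (a : ↥M) {ε : ℝ} (hε : 0 < ε) :
    ∃ y : ↥M, nrm g y = 0 ∧ nrm s (a - y) < qn s g a + ε := by
  obtain ⟨_, ⟨y, hy, rfl⟩, h⟩ := exists_lt_of_csInf_lt
    (s := {r | ∃ y : ↥M, nrm g y = 0 ∧ nrm s (a - y) = r}) ⟨_, 0, nrm_zero, rfl⟩
    (show sInf _ < qn s g a + ε by rw [← qn]; linarith)
  exact ⟨y, hy, h⟩

lemma qn_add {s g : ↥M →ₗ[ℂ] ℂ} (hs : VNIsPos s) (hg : VNIsPos g) (a b : ↥M) :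
    qn s g (a + b) ≤ qn s g a + qn s g b := by
  apply le_of_forall_pos_le_add
  intro ε hε
  obtain ⟨y, hy, h1⟩ := qn_lt s g a (half_pos hε)
  obtain ⟨z, hz, h2⟩ := qn_lt s g b (half_pos hε)
  have hyz : nrm g (y + z) = 0 :=
    le_antisymm ((nrm_add hg y z).trans (by rw [hy, hz]; simp)) (nrm_nonneg _ _)
  have h3 := qn_le s (a + b) hyz
  have h4 := nrm_add hs (a - y) (b - z)
  rw [show a - y + (b - z) = a + b - (y + z) by abel] at h4
  linarith

lemma qn_mul {s g : ↥M →ₗ[ℂ] ℂ} (hs : VNIsPos s) (hg : VNIsPos g) (b a : ↥M) :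
    qn s g (b * a) ≤ ‖(b : H →L[ℂ] H)‖ * qn s g a := by
  apply le_of_forall_pos_le_add
  intro ε hε
  obtain ⟨y, hy, h1⟩ := qn_lt s g a (ε := ε / (‖(b : H →L[ℂ] H)‖ + 1)) (by positivity)
  have hby : nrm g (b * y) = 0 :=
    le_antisymm ((nrm_mul_le hg b y).trans (by rw [hy]; simp)) (nrm_nonneg _ _)
  have h3 := qn_le s (b * a) hby
  rw [← mul_sub] at h3
  have h4 := nrm_mul_le hs b (a - y)
  have h5 : ‖(b : H →L[ℂ] H)‖ * (ε / (‖(b : H →L[ℂ] H)‖ + 1)) ≤ ε := by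
    rw [mul_div_assoc', div_le_iff₀ (by positivity)]
    nlinarith
  nlinarith [norm_nonneg (b : H →L[ℂ] H)]

lemma qn_sum {s g : ↥M →ₗ[ℂ] ℂ} (hs : VNIsPos s) (hg : VNIsPos g) (a : ℕ → ↥M) (F : Finset ℕ) :
    qn s g (∑ k ∈ F, a k) ≤ ∑ k ∈ F, qn s g (a k) := by
  induction F using Finset.induction_on with
  | empty =>
    have := qn_le_nrm s g 0
    rw [nrm_zero] at this
    simpa using this
  | insert k F hk ih =>
    rw [Finset.sum_insert hk, Finset.sum_insert hk]
    have := qn_add hs hg (a k) (∑ k ∈ F, a k)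
    linarith

/-! ### cut-off functions -/

/-- functional calculus inside `M` -/
noncomputable def cf (R : ↥M) (φ : ℝ → ℝ) : ↥M := ⟨cfc φ (R : H →L[ℂ] H), cfc_mem R.2 _⟩

/-- cut-off function vanishing for `t ≤ 1/n`, equal to one for `t ≥ 2/n` -/
noncomputable def psi (n : ℕ) (t : ℝ) : ℝ := max 0 (min 1 ((n : ℝ) * t - 1))

lemma psi_cont (n : ℕ) : Continuous (psi n) := by unfold psi; fun_prop

lemma psi_nonneg (n : ℕ) (t : ℝ) : 0 ≤ psi n t := le_max_left _ _
lemma psi_le_one (n : ℕ) (t : ℝ) : psi n t ≤ 1 := by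
  unfold psi; exact max_le zero_le_one (min_le_left _ _)

lemma psi_mono {m n : ℕ} (h : m ≤ n) {t : ℝ} (ht : 0 ≤ t) : psi m t ≤ psi n t := by
  unfold psi
  have : (m : ℝ) ≤ n := by exact_mod_cast h
  gcongr

lemma psi_zero {n : ℕ} {t : ℝ} (h : (n : ℝ) * t ≤ 1) : psi n t = 0 := by
  unfold psi
  apply max_eq_left
  exact (min_le_right _ _).trans (by linarith)

lemma psi_one {n : ℕ} {t : ℝ} (h : 2 ≤ (n : ℝ) * t) : psi n t = 1 := by
  unfold psi
  rw [min_eq_left (by linarith), max_eq_right zero_le_one]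

lemma cf_mul (R : ↥M) {φ ψ : ℝ → ℝ} (hφ : Continuous φ) (hψ : Continuous ψ) :
    cf R φ * cf R ψ = cf R (fun t => φ t * ψ t) :=
  Subtype.ext (cfc_mul φ ψ (R : H →L[ℂ] H) hφ.continuousOn hψ.continuousOn).symm

lemma cf_id {R : ↥M} (hR : 0 ≤ (R : H →L[ℂ] H)) : cf R (fun t => t) = R :=
  Subtype.ext (cfc_id' ℝ (R : H →L[ℂ] H) hR.isSelfAdjoint)

lemma cf_sub (R : ↥M) {φ ψ : ℝ → ℝ} (hφ : Continuous φ) (hψ : Continuous ψ) :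
    cf R (fun t => φ t - ψ t) = cf R φ - cf R ψ :=
  Subtype.ext (cfc_sub φ ψ (R : H →L[ℂ] H) hφ.continuousOn hψ.continuousOn)

lemma cf_one {R : ↥M} (hR : 0 ≤ (R : H →L[ℂ] H)) : cf R (fun _ => 1) = 1 :=
  Subtype.ext (cfc_const_one ℝ (R : H →L[ℂ] H) hR.isSelfAdjoint)

lemma star_cf (R : ↥M) (φ : ℝ → ℝ) : star (cf R φ) = cf R φ := by
  apply Subtype.ext
  have : IsSelfAdjoint (cfc φ (R : H →L[ℂ] H)) := cfc_predicate _ _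
  exact this.star_eq

/-- `θ` with `ψ_n(t) = t θ(t)`. -/
lemma psi_factor (n : ℕ) (hn : 1 ≤ n) : ∃ θ : ℝ → ℝ, Continuous θ ∧ ∀ t, psi n t = t * θ t := by
  have hn' : (0 : ℝ) < n := by exact_mod_cast hn
  refine ⟨fun t => psi n t / max t (1 / n), ?_, ?_⟩
  · refine (psi_cont n).div (by fun_prop) fun t => ?_
    have : 0 < max t (1 / (n : ℝ)) := lt_max_of_lt_right (by positivity)
    exact this.ne'
  · intro t
    rcases le_or_gt t (1 / n) with h | h
    · have h0 : psi n t = 0 := psi_zero (by rw [le_div_iff₀ hn'] at h; linarith)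
      simp [h0]
    · simp only
      rw [max_eq_left h.le]
      have : 0 < t := lt_trans (by positivity) h
      field_simp

lemma step_norm (x R : ↥M) (R' : ℕ → ↥M) (c : ℝ) (hc : 0 ≤ c)
    (hR : ∀ ξ : H, Tendsto (fun m => (R' m : H →L[ℂ] H) ξ) atTop (𝓝 ((R : H →L[ℂ] H) ξ)))
    (hb : ∀ᶠ m in atTop, ‖((x * R' m : ↥M) : H →L[ℂ] H)‖ ≤ c) :
    ‖((x * R : ↥M) : H →L[ℂ] H)‖ ≤ c := by
  apply ContinuousLinearMap.opNorm_le_bound _ hc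
  intro ξ
  have h1 := (((x : H →L[ℂ] H).continuous.tendsto _).comp (hR ξ)).norm
  refine le_of_tendsto h1 ?_
  filter_upwards [hb] with m hm
  calc _ ≤ ‖((x * R' m : ↥M) : H →L[ℂ] H)‖ * ‖ξ‖ := ContinuousLinearMap.le_opNorm _ _
    _ ≤ _ := by gcongr

end Cut
end VNLeb

open scoped ComplexOrder

namespace VNLeb
open Filter Topology

section Main
variable {H : Type} [NormedAddCommGroup H] [InnerProductSpace ℂ H] [CompleteSpace H]
variable {M : VonNeumannAlgebra H}

lemma norm_mul_res (x T : ↥M) (c : ℝ) (hc : 0 < c) (hT0 : 0 ≤ (T : H →L[ℂ] H))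
    (h1 : c • (star (x : H →L[ℂ] H) * (x : H →L[ℂ] H)) ≤ T) :
    c * ‖((x * res T : ↥M) : H →L[ℂ] H)‖ ^ 2 ≤ 1 := by
  have hrs : star (res T : H →L[ℂ] H) = res T := (res_nonneg hT0).isSelfAdjoint.star_eq
  have h2 := star_left_conjugate_le_conjugate h1 (res T : H →L[ℂ] H)
  rw [hrs] at h2
  have h3 : (res T : H →L[ℂ] H) * T * res T ≤ 1 := by
    have e : res T * T * res T = res T - res T * res T := by
      calc res T * T * res T = res T * (1 + T) * res T - res T * res T := by
            noncomm_ring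
        _ = _ := by rw [res_mul hT0, one_mul]
    have e' := congrArg (fun a : ↥M => (a : H →L[ℂ] H)) e
    push_cast at e'
    rw [e']
    refine (sub_le_self _ ?_).trans (res_le_one hT0)
    have := star_mul_self_nonneg (res T : H →L[ℂ] H)
    rwa [hrs] at this
  set z : H →L[ℂ] H := ((x * res T : ↥M) : H →L[ℂ] H) with hz
  have hz' : z = (x : H →L[ℂ] H) * res T := rfl
  have h4 : c • (star z * z) ≤ 1 := by
    refine le_trans (le_of_eq ?_) (h2.trans h3)
    rw [hz', star_mul, hrs]
    simp only [mul_smul_comm, smul_mul_assoc, mul_assoc]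
  have h0 : 0 ≤ c • (star z * z) := smul_nonneg hc.le (star_mul_self_nonneg z)
  have h5 := norm_le_one_of h0 h4
  rw [norm_smul, CStarRing.norm_star_mul_self, Real.norm_of_nonneg hc.le] at h5
  rw [sq]; exact h5

set_option maxHeartbeats 1000000 in
/-- existence of the operator `R` cutting the elements `x k` down -/
lemma exists_R {s g : ↥M →ₗ[ℂ] ℂ} (hs : VNIsPos s) (hsn : VNIsNormal s) (hg : VNIsPos g)
    (hgn : VNIsNormal g) (x : ℕ → ↥M) (hx : ∀ k, nrm g (x k) ≤ (1 / 2) ^ k) :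
    ∃ R : ↥M, 0 ≤ (R : H →L[ℂ] H) ∧
      Tendsto (fun k => ‖((x k * R : ↥M) : H →L[ℂ] H)‖) atTop (𝓝 0) ∧
      Tendsto (fun n => qn s g (1 - cf R (psi n))) atTop (𝓝 0) := by
  set a : ℕ → ↥M := fun k => (((2 : ℝ) ^ k : ℝ) : ℂ) • (star (x k) * x k) with ha
  have ha' : ∀ k, (a k : H →L[ℂ] H) = ((2 : ℝ) ^ k) • (star (x k : H →L[ℂ] H) * (x k : H →L[ℂ] H)) := by
    intro k
    simp only [ha]
    exact Complex.coe_smul _ _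
  have ha0 : ∀ k, 0 ≤ (a k : H →L[ℂ] H) := by
    intro k
    rw [ha']
    exact smul_nonneg (by positivity) (star_mul_self_nonneg _)
  obtain ⟨R, hR0, hRle, hRlim⟩ := res_series a ha0
  set T : ℕ → ↥M := fun m => ∑ k ∈ Finset.range m, a k with hT
  have hT0 : ∀ m, 0 ≤ (T m : H →L[ℂ] H) := fun m => sum_nonneg_M a ha0 _
  have hR1 : (R : H →L[ℂ] H) ≤ 1 := (hRle 0).trans (res_le_one (hT0 0))
  have hRs := star_of_nonneg hR0
  refine ⟨R, hR0, ?_, ?_⟩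
  · have hb : ∀ k m, k < m → ‖((x k * res (T m) : ↥M) : H →L[ℂ] H)‖ ≤ Real.sqrt ((1 / 2) ^ k) := by
      intro k m hkm
      apply Real.le_sqrt_of_sq_le
      have h1 : (a k : H →L[ℂ] H) ≤ T m := le_sum_M a ha0 _ k (Finset.mem_range.2 hkm)
      have h5 := norm_mul_res (x k) (T m) ((2 : ℝ) ^ k) (by positivity) (hT0 m) (by rw [← ha']; exact h1)
      rw [one_div, inv_pow, ← one_div, le_div_iff₀ (by positivity)]
      linarith
    have hb2 : ∀ k, ‖((x k * R : ↥M) : H →L[ℂ] H)‖ ≤ Real.sqrt ((1 / 2) ^ k) := by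
      intro k
      apply step_norm (x k) R (fun m => res (T m)) _ (Real.sqrt_nonneg _) hRlim
      filter_upwards [eventually_gt_atTop k] with m hm
      exact hb k m hm
    refine squeeze_zero (fun k => norm_nonneg _) hb2 ?_
    have := (Real.continuous_sqrt.tendsto 0).comp
      (tendsto_pow_atTop_nhds_zero_of_lt_one (r := (1/2 : ℝ)) (by norm_num) (by norm_num))
    simpa [Function.comp_def] using this
  · -- the limit of the complementary cut-offs
    have hφ : ∀ n, 1 - cf R (psi n) = cf R (fun t => 1 - psi n t) := by
      intro n
      rw [cf_sub R continuous_const (psi_cont n), cf_one hR0]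
    have hφ0 : ∀ n, 0 ≤ ((1 - cf R (psi n) : ↥M) : H →L[ℂ] H) := by
      intro n
      rw [hφ]
      apply cfc_nonneg
      intro t _
      linarith [psi_le_one n t]
    have hφ1 : ∀ n, ((1 - cf R (psi n) : ↥M) : H →L[ℂ] H) ≤ 1 := by
      intro n
      rw [hφ]
      apply cfc_le_one
      intro t _
      linarith [psi_nonneg n t]
    have hanti : ∀ i j, i ≤ j → ((1 - cf R (psi j) : ↥M) : H →L[ℂ] H) ≤ (1 - cf R (psi i) : ↥M) := by
      intro i j hij
      rw [hφ, hφ]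
      refine cfc_mono (fun t ht => ?_) ?_ ?_
      · have := psi_mono hij (spec_nonneg hR0 ht)
        linarith
      · exact (continuous_const.sub (psi_cont j)).continuousOn
      · exact (continuous_const.sub (psi_cont i)).continuousOn
    obtain ⟨N, hN0, hNle, hNlim⟩ := exists_lim _ hφ0 hanti
    have hN1 := (hNle 0).trans (hφ1 0)
    have hNs := star_of_nonneg hN0
    have hRφ : ∀ n : ℕ, 1 ≤ n → ‖((R * (1 - cf R (psi n)) : ↥M) : H →L[ℂ] H)‖ ≤ 2 / ((n : ℝ)) := by
      intro n hn
      have hn' : (0 : ℝ) < n := by exact_mod_cast hn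
      rw [hφ]
      nth_rewrite 1 [← cf_id hR0]
      rw [cf_mul R (φ := fun t => t) (ψ := fun t => 1 - psi n t) continuous_id'
        (continuous_const.sub (psi_cont n))]
      apply norm_cfc_le (by positivity)
      intro t ht
      have ht0 := spec_nonneg hR0 ht
      have h1 := psi_le_one n t
      have h2 := psi_nonneg n t
      rw [Real.norm_of_nonneg (mul_nonneg ht0 (by linarith)), le_div_iff₀ hn']
      rcases le_or_gt 2 ((n : ℝ) * t) with h3 | h3
      · rw [psi_one h3]; simp
      · nlinarith [mul_nonneg hn'.le ht0]
    have hRN : R * N = 0 := by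
      have h1 : ‖((R * N : ↥M) : H →L[ℂ] H)‖ ≤ 0 := by
        apply le_of_forall_pos_le_add
        intro ε hε
        rw [zero_add]
        apply step_norm R N _ ε hε.le hNlim
        have h2 : Tendsto (fun n : ℕ => 2 / (n : ℝ)) atTop (𝓝 0) :=
          tendsto_const_div_atTop_nhds_zero_nat 2
        filter_upwards [h2.eventually (gt_mem_nhds hε), eventually_ge_atTop 1] with n hn hn1
        exact (hRφ n hn1).trans hn.le
      exact Subtype.ext (norm_le_zero_iff.1 h1)
    have hNR : N * R = 0 := by
      have := congrArg star hRN
      simpa [hNs, hRs] using this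
    have hgT : ∀ m, nrm g 1 ^ 2 + (g (T m)).re ≤ nrm g 1 ^ 2 + 2 := by
      intro m
      have h1 : (g (T m)).re = ∑ k ∈ Finset.range m, (2 : ℝ) ^ k * nrm g (x k) ^ 2 := by
        simp only [hT, map_sum, Complex.re_sum]
        apply Finset.sum_congr rfl
        intro k _
        simp only [ha]
        rw [map_smul, f_eq_nrm hg, smul_eq_mul]
        norm_cast
      have h2 : ∀ k ∈ Finset.range m, (2 : ℝ) ^ k * nrm g (x k) ^ 2 ≤ (1 / 2) ^ k := by
        intro k _
        have h3 : nrm g (x k) ^ 2 ≤ ((1/2) ^ k) ^ 2 := by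
          have := nrm_nonneg g (x k)
          have := hx k
          gcongr
        calc (2 : ℝ) ^ k * nrm g (x k) ^ 2 ≤ 2 ^ k * ((1/2) ^ k) ^ 2 := by gcongr
          _ = (2 * (1/2)) ^ k * (1/2) ^ k := by rw [mul_pow]; ring
          _ = _ := by norm_num
      have h4 := Finset.sum_le_sum h2
      have h5 : ∑ k ∈ Finset.range m, (1/2 : ℝ) ^ k ≤ 2 := sum_geometric_two_le m
      linarith
    have hgN : g N = 0 := by
      have hlim := normal_tendsto hg hgn (fun m => N * res (T m) * N) (N * R * N) ?_ ?_ ?_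
      · rw [hNR, zero_mul, map_zero, Complex.zero_re] at hlim
        have hb : ∀ m, ‖g N‖ ≤ Real.sqrt ((g (N * res (T m) * N)).re)
            * Real.sqrt (nrm g 1 ^ 2 + 2) := by
          intro m
          obtain ⟨c, hcs, hcc⟩ := exists_sqrt (res (T m)) (res_nonneg (hT0 m))
          have h1 := cauchy hg (c * N) (c * (1 + T m))
          have e1 : star (c * N) * (c * (1 + T m)) = N := by
            rw [star_mul, hcs, hNs, mul_assoc, ← mul_assoc c c, hcc, res_mul (hT0 m), mul_one]
          have e2 : star (c * N) * (c * N) = N * res (T m) * N := by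
            rw [star_mul, hcs, hNs, ← hcc]; noncomm_ring
          have e3 : star (c * (1 + T m)) * (c * (1 + T m)) = star 1 * 1 + T m := by
            have : star (1 + T m) = 1 + T m := by
              rw [star_add, star_one, star_of_nonneg (hT0 m)]
            rw [star_mul, hcs, this, mul_assoc, ← mul_assoc c c, hcc, res_mul (hT0 m)]
            simp
          rw [e1, nrm, nrm, e2, e3] at h1
          refine h1.trans (mul_le_mul_of_nonneg_left ?_ (Real.sqrt_nonneg _))
          apply Real.sqrt_le_sqrt
          rw [map_add, Complex.add_re, ← nrm_sq hg]
          exact hgT m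
        have h2 := ((Real.continuous_sqrt.tendsto 0).comp hlim).mul_const
          (Real.sqrt (nrm g 1 ^ 2 + 2))
        rw [Real.sqrt_zero, zero_mul] at h2
        have h3 := ge_of_tendsto' h2 hb
        exact norm_le_zero_iff.1 h3
      · intro m
        have := star_left_conjugate_le_conjugate (hRle m) (N : H →L[ℂ] H)
        rw [hN0.isSelfAdjoint.star_eq] at this
        exact this
      · intro i j hij
        have h1 : (res (T j) : H →L[ℂ] H) ≤ res (T i) := by
          apply res_anti (hT0 i)
          simp only [hT]
          push_cast
          apply Finset.sum_le_sum_of_subset_of_nonneg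
          · exact Finset.range_mono hij
          · intro k _ _; exact ha0 k
        have := star_left_conjugate_le_conjugate h1 (N : H →L[ℂ] H)
        rw [hN0.isSelfAdjoint.star_eq] at this
        exact this
      · intro ξ
        exact (((N : H →L[ℂ] H).continuous.tendsto _).comp (hRlim ((N : H →L[ℂ] H) ξ)))
    have hNg : nrm g N = 0 := by
      have h1 : (g (star N * N)).re ≤ (g N).re := by
        apply f_re_mono hg
        rw [hNs]
        exact sq_le_self hN0 hN1
      rw [hgN, Complex.zero_re] at h1
      exact Real.sqrt_eq_zero_of_nonpos h1
    refine squeeze_zero (fun n => qn_nonneg _ _ _) (fun n => qn_le s _ hNg) ?_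
    exact nrm_tendsto hs hsn _ N hN0 hNle hφ1 hanti hNlim

end Main
end VNLeb

open scoped ComplexOrder

namespace VNLeb
open Filter Topology

section Sel
variable {H : Type} [NormedAddCommGroup H] [InnerProductSpace ℂ H] [CompleteSpace H]
variable {M : VonNeumannAlgebra H}

lemma q_step {s g : ↥M →ₗ[ℂ] ℂ} (hs : VNIsPos s) (hg : VNIsPos g) (x a e p : ↥M)
    (h : a + e + p = 1) (he : star e = e) (c : ℝ) (hc : 0 < c) (v : ↥M)
    (hv : v = (c : ℂ) • (e * star x)) :
    qn s g (res (star v * v)) ≤ nrm s (1 - x) + ‖((x * a : ↥M) : H →L[ℂ] H)‖ * qn s g 1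
      + c⁻¹ * qn s g 1 + ‖(x : H →L[ℂ] H)‖ * qn s g p := by
  have h0 : 0 ≤ ((star v * v : ↥M) : H →L[ℂ] H) := by
    push_cast; exact star_mul_self_nonneg _
  have hd := res_norm h0
  have hdv := norm_res_mul_star v
  set d := res (star v * v) with hdd
  have q1 := qn_nonneg s g 1
  have qp := qn_nonneg s g p
  have hsv : star v = (c : ℂ) • (x * e) := by
    rw [hv, star_smul, star_mul, star_star, he]; simp
  have hxe : d * (x * e) = ((c : ℂ)⁻¹) • (d * star v) := by
    rw [hsv, mul_smul_comm, smul_smul, inv_mul_cancel₀ (by exact_mod_cast hc.ne'), one_smul]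
  have hxen : ‖((d * (x * e) : ↥M) : H →L[ℂ] H)‖ ≤ c⁻¹ := by
    rw [hxe]
    have : (((c : ℂ)⁻¹ • (d * star v) : ↥M) : H →L[ℂ] H) =
      (c : ℂ)⁻¹ • ((d * star v : ↥M) : H →L[ℂ] H) := rfl
    rw [this, norm_smul, norm_inv, Complex.norm_real, Real.norm_of_nonneg hc.le]
    have : 0 < c⁻¹ := by positivity
    nlinarith
  have key : d = d * (1 - x) + d * (x * a) + d * (x * e) * 1 + d * (x * p) := by
    calc d = d * (1 - x) + d * x * 1 := by noncomm_ring
      _ = d * (1 - x) + d * x * (a + e + p) := by rw [h]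
      _ = _ := by noncomm_ring
  have b1 : qn s g (d * (1 - x)) ≤ nrm s (1 - x) := by
    refine (qn_mul hs hg _ _).trans ?_
    have := qn_le_nrm s g (1 - x)
    have := qn_nonneg s g (1 - x)
    nlinarith
  have b2 : qn s g (d * (x * a)) ≤ ‖((x * a : ↥M) : H →L[ℂ] H)‖ * qn s g 1 := by
    refine (qn_mul hs hg _ _).trans ?_
    have h1 := qn_mul hs hg (x * a) 1
    rw [mul_one] at h1
    have := qn_nonneg s g (x * a)
    nlinarith
  have b3 : qn s g (d * (x * e) * 1) ≤ c⁻¹ * qn s g 1 := by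
    refine (qn_mul hs hg _ _).trans ?_
    gcongr
  have b4 : qn s g (d * (x * p)) ≤ ‖(x : H →L[ℂ] H)‖ * qn s g p := by
    refine (qn_mul hs hg _ _).trans ?_
    have h1 := qn_mul hs hg x p
    have := qn_nonneg s g (x * p)
    nlinarith
  rw [key]
  refine (qn_add hs hg _ _).trans ?_
  have t1 := qn_add hs hg (d * (1 - x) + d * (x * a)) (d * (x * e) * 1)
  have t2 := qn_add hs hg (d * (1 - x)) (d * (x * a))
  linarith

lemma select {s g : ↥M →ₗ[ℂ] ℂ} (hs : VNIsPos s) (hg : VNIsPos g) (x : ℕ → ↥M)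
    (hx : Tendsto (fun k => nrm s (1 - x k)) atTop (𝓝 0))
    (R : ↥M) (hR : 0 ≤ (R : H →L[ℂ] H))
    (hxR : Tendsto (fun k => ‖((x k * R : ↥M) : H →L[ℂ] H)‖) atTop (𝓝 0))
    (hψ : Tendsto (fun n => qn s g (1 - cf R (psi n))) atTop (𝓝 0))
    (n : ℕ) (η : ℝ) (hη : 0 < η) :
    ∃ (m k : ℕ) (c : ℝ), n + 1 ≤ m ∧ ∀ v : ↥M,
      v = (c : ℂ) • ((cf R (psi m) - cf R (psi (n + 1))) * star (x k)) →
      qn s g (res (star v * v)) ≤ η := by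
  obtain ⟨θ, hθ, hθ'⟩ := psi_factor (n + 1) (by omega)
  have q1 := qn_nonneg s g 1
  have hfac : cf R (psi (n + 1)) = R * cf R θ := by
    nth_rewrite 2 [← cf_id hR]
    rw [cf_mul R (φ := fun t => t) (ψ := θ) continuous_id' hθ]
    congr 1
    funext t; exact hθ' t
  have hb : ∀ k, ‖((x k * cf R (psi (n + 1)) : ↥M) : H →L[ℂ] H)‖
      ≤ ‖((x k * R : ↥M) : H →L[ℂ] H)‖ * ‖(cf R θ : H →L[ℂ] H)‖ := by
    intro k
    rw [hfac, ← mul_assoc]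
    exact norm_mul_le ((x k * R : ↥M) : H →L[ℂ] H) (cf R θ : H →L[ℂ] H)
  have hlim := (hxR.mul_const ‖(cf R θ : H →L[ℂ] H)‖).mul_const (qn s g 1)
  rw [zero_mul, zero_mul] at hlim
  obtain ⟨k, hk1, hk2⟩ := ((hlim.eventually (gt_mem_nhds (show (0:ℝ) < η / 4 by positivity))).and
    (hx.eventually (gt_mem_nhds (show (0:ℝ) < η / 4 by positivity)))).exists
  have hlim2 := hψ.const_mul ‖(x k : H →L[ℂ] H)‖
  rw [mul_zero] at hlim2
  obtain ⟨m, hm1, hm2⟩ := ((hlim2.eventually (gt_mem_nhds (show (0:ℝ) < η / 4 by positivity))).and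
    (eventually_ge_atTop (n + 1))).exists
  refine ⟨m, k, 4 * (qn s g 1 + 1) / η, hm2, fun v hv => ?_⟩
  have := q_step hs hg (x k) (cf R (psi (n + 1))) (cf R (psi m) - cf R (psi (n + 1)))
    (1 - cf R (psi m)) (by abel) (by rw [star_sub, star_cf, star_cf]) _
    (show 0 < 4 * (qn s g 1 + 1) / η by positivity) v hv
  have h3 : (4 * (qn s g 1 + 1) / η)⁻¹ * qn s g 1 ≤ η / 4 := by
    rw [inv_div, div_mul_eq_mul_div, div_le_div_iff₀ (by positivity) (by norm_num)]
    nlinarith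
  have h4 := mul_le_mul_of_nonneg_right (hb k) q1
  linarith

lemma cut_orth (R : ↥M) {a b c d : ℕ} (hab : a ≤ b) (hbc : 2 * b ≤ c) (hcd : c ≤ d) :
    (cf R (psi b) - cf R (psi a)) * (cf R (psi d) - cf R (psi c)) = 0 := by
  rw [← cf_sub R (psi_cont _) (psi_cont _), ← cf_sub R (psi_cont _) (psi_cont _),
    cf_mul R (φ := fun t => psi b t - psi a t) (ψ := fun t => psi d t - psi c t)
      ((psi_cont _).sub (psi_cont _)) ((psi_cont _).sub (psi_cont _))]
  have e : (fun t => (psi b t - psi a t) * (psi d t - psi c t)) = fun _ => 0 := by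
    funext t
    have hab' : (a : ℝ) ≤ b := by exact_mod_cast hab
    have hbc' : 2 * (b : ℝ) ≤ c := by exact_mod_cast hbc
    have hcd' : (c : ℝ) ≤ d := by exact_mod_cast hcd
    have ha0 : (0 : ℝ) ≤ a := by positivity
    rcases le_or_gt t 0 with ht | ht
    · rw [psi_zero (n := b) (by nlinarith), psi_zero (n := a) (by nlinarith)]; simp
    · rcases le_or_gt ((b : ℝ) * t) 1 with h | h
      · rw [psi_zero h, psi_zero (n := a) (by nlinarith)]; simp
      · rw [psi_one (n := c) (by nlinarith), psi_one (n := d) (by nlinarith)]; simp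
  rw [e]
  apply Subtype.ext
  exact cfc_const_zero ℝ (R : H →L[ℂ] H)

lemma select_seq {s g : ↥M →ₗ[ℂ] ℂ} (hs : VNIsPos s) (hg : VNIsPos g) (x : ℕ → ↥M)
    (hx : Tendsto (fun k => nrm s (1 - x k)) atTop (𝓝 0))
    (R : ↥M) (hR : 0 ≤ (R : H →L[ℂ] H))
    (hxR : Tendsto (fun k => ‖((x k * R : ↥M) : H →L[ℂ] H)‖) atTop (𝓝 0))
    (hψ : Tendsto (fun n => qn s g (1 - cf R (psi n))) atTop (𝓝 0))
    (η : ℕ → ℝ) (hη : ∀ j, 0 < η j) :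
    ∃ v : ℕ → ↥M, (∀ i j, i ≠ j → star (v i) * v j = 0) ∧
      ∀ j, qn s g (res (star (v j) * v j)) ≤ η j := by
  have hsel := fun (j n : ℕ) => select hs hg x hx R hR hxR hψ n (η j) (hη j)
  choose m k c hm hv using hsel
  let N : ℕ → ℕ := fun j => Nat.rec 0 (fun j n => 2 * m j n) j
  have hN : ∀ j, N (j + 1) = 2 * m j (N j) := fun j => rfl
  have hmono : Monotone N := by
    apply monotone_nat_of_le_succ
    intro j
    have := hm j (N j)
    rw [hN]; omega
  let e : ℕ → ↥M := fun j => cf R (psi (m j (N j))) - cf R (psi (N j + 1))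
  have hes : ∀ j, star (e j) = e j := fun j => by
    simp only [e]; rw [star_sub, star_cf, star_cf]
  have hlt : ∀ i j, i < j → e i * e j = 0 := by
    intro i j hij
    apply cut_orth
    · exact hm i _
    · have := hmono (Nat.succ_le_of_lt hij)
      have h2 := hN i
      simp only [Nat.succ_eq_add_one] at this
      omega
    · exact hm j _
  have hne : ∀ i j, i ≠ j → e i * e j = 0 := by
    intro i j hij
    rcases lt_or_gt_of_ne hij with h | h
    · exact hlt i j h
    · have := congrArg star (hlt j i h)
      rwa [star_mul, hes, hes, star_zero] at this
  refine ⟨fun j => ((c j (N j) : ℝ) : ℂ) • (e j * star (x (k j (N j)))), ?_, ?_⟩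
  · intro i j hij
    simp only [star_smul, star_mul, star_star, hes, smul_mul_assoc, mul_smul_comm]
    rw [show x (k i (N i)) * e i * (e j * star (x (k j (N j))))
      = x (k i (N i)) * (e i * e j) * star (x (k j (N j))) by noncomm_ring, hne i j hij]
    simp
  · intro j
    exact hv j (N j) _ rfl

end Sel
end VNLeb

open scoped ComplexOrder

namespace VNLeb
open Filter Topology

section Fin
variable {H : Type} [NormedAddCommGroup H] [InnerProductSpace ℂ H] [CompleteSpace H]
variable {M : VonNeumannAlgebra H}

/-- projection onto the kernel of an element of `M` -/
lemma ker_proj (a : ↥M) : ∃ Q : ↥M, Q * Q = Q ∧ star Q = Q ∧ a * Q = 0 ∧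
    ∀ ξ : H, (a : H →L[ℂ] H) ξ = 0 → (Q : H →L[ℂ] H) ξ = ξ := by
  set K : Submodule ℂ H := (a : H →L[ℂ] H).ker with hK
  have hKc : IsClosed (K : Set H) := (a : H →L[ℂ] H).isClosed_ker
  haveI : CompleteSpace K := hKc.completeSpace_coe
  have hsp : IsStarProjection K.starProjection := isStarProjection_starProjection
  have hmem : K.starProjection ∈ M := by
    rw [VonNeumannAlgebra.IsStarProjection.mem_iff hsp]
    intro y hy
    rw [Submodule.range_starProjection, Module.End.mem_invtSubmodule]
    intro ξ hξ
    have hc := commute_of_mem a.2 hy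
    have h1 : (a : H →L[ℂ] H) ξ = 0 := hξ
    show (a : H →L[ℂ] H) (y ξ) = 0
    have h2 := congrArg (fun T : H →L[ℂ] H => T ξ) hc.eq
    have h3 : (a : H →L[ℂ] H) (y ξ) = y ((a : H →L[ℂ] H) ξ) := h2
    rw [h3, h1, map_zero]
  refine ⟨⟨K.starProjection, hmem⟩, Subtype.ext hsp.isIdempotentElem,
    Subtype.ext hsp.isSelfAdjoint.star_eq, ?_, ?_⟩
  · apply Subtype.ext
    ext ξ
    have : K.starProjection ξ ∈ K := Submodule.starProjection_apply_mem K ξ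
    exact this
  · intro ξ hξ
    exact Submodule.starProjection_eq_self_iff.2 hξ

/-- if `R` is below all `res d_j` then finiteness forces `R ≤ 2/3` -/
lemma R_norm (hM : VNFinite M) (v : ℕ → ↥M) (hv : ∀ i j, i ≠ j → star (v i) * v j = 0)
    (R : ↥M) (hR : 0 ≤ (R : H →L[ℂ] H))
    (hle : ∀ j, (R : H →L[ℂ] H) ≤ res (res (star (v j) * v j))) :
    ‖(R : H →L[ℂ] H)‖ ≤ 2 / 3 := by
  have hB0 : ∀ j, 0 ≤ ((star (v j) * v j : ↥M) : H →L[ℂ] H) := by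
    intro j; push_cast; exact star_mul_self_nonneg _
  set P := cf R (fun t => max (t - 2 / 3) 0) with hP
  set N := cf R (fun t => max (2 / 3 - t) 0) with hN
  have hNP : N * P = 0 := by
    rw [hN, hP, cf_mul R (φ := fun t => max (2 / 3 - t) 0) (ψ := fun t => max (t - 2 / 3) 0)
      (by fun_prop) (by fun_prop)]
    have e : (fun t : ℝ => max (2 / 3 - t) 0 * max (t - 2 / 3) 0) = fun _ => 0 := by
      funext t
      rcases le_total t (2 / 3) with h | h
      · rw [max_eq_right (a := t - 2 / 3) (by linarith), mul_zero]
      · rw [max_eq_right (a := 2 / 3 - t) (by linarith), zero_mul]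
    rw [e]
    apply Subtype.ext
    exact cfc_const_zero ℝ (R : H →L[ℂ] H)
  have hP0 : 0 ≤ (P : H →L[ℂ] H) := by
    apply cfc_nonneg; intro t _; exact le_max_right _ _
  have hdec : (R : H →L[ℂ] H) = algebraMap ℝ (H →L[ℂ] H) (2 / 3) + P - N := by
    have h1 : (R : H →L[ℂ] H) - algebraMap ℝ (H →L[ℂ] H) (2 / 3) = P - N := by
      have h2 : P - N = cf R (fun t => max (t - 2 / 3) 0 - max (2 / 3 - t) 0) :=
        (cf_sub R (φ := fun t => max (t - 2 / 3) 0) (ψ := fun t => max (2 / 3 - t) 0)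
          (by fun_prop) (by fun_prop)).symm
      have h3 : (fun t : ℝ => max (t - 2 / 3) 0 - max (2 / 3 - t) 0) = fun t => t - 2 / 3 := by
        funext t
        rcases le_total t (2 / 3) with h | h
        · rw [max_eq_right (a := t - 2 / 3) (by linarith), max_eq_left (by linarith)]; ring
        · rw [max_eq_right (a := 2 / 3 - t) (by linarith), max_eq_left (by linarith)]; ring
      rw [h3, cf_sub R (φ := fun t => t) (ψ := fun _ => 2 / 3) continuous_id' continuous_const,
        cf_id hR] at h2
      have h4 : (cf R (fun _ => (2 / 3 : ℝ)) : H →L[ℂ] H) = algebraMap ℝ (H →L[ℂ] H) (2 / 3) :=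
        cfc_const (2 / 3 : ℝ) (R : H →L[ℂ] H) hR.isSelfAdjoint
      have h5 := congrArg (fun a : ↥M => (a : H →L[ℂ] H)) h2
      push_cast at h5
      rw [h5, h4]
    rw [add_sub_assoc, ← h1]; abel
  obtain ⟨Q, hQQ, hQs, hNQ, hQξ⟩ := ker_proj N
  have hQ0 : Q = 0 := by
    apply proj_zero hM v hv Q hQQ hQs
    intro j ξ
    set ζ := (Q : H →L[ℂ] H) ξ with hζ
    have hNζ : (N : H →L[ℂ] H) ζ = 0 := by
      have := congrArg (fun a : ↥M => (a : H →L[ℂ] H) ξ) hNQ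
      exact this
    have h1 : (2 / 3 : ℝ) * ‖ζ‖ ^ 2 ≤ (inner ℂ ((R : H →L[ℂ] H) ζ) ζ).re := by
      rw [hdec, sub_apply, ContinuousLinearMap.add_apply, hNζ, sub_zero,
        inner_add_left, Complex.add_re, re_inner_algebraMap]
      have := re_inner_nonneg hP0 ζ
      linarith
    set d := res (star (v j) * v j) with hd
    have h2 := re_inner_mono ((hle j).trans (res_le_of_le_one (res_nonneg (hB0 j))
      (res_le_one (hB0 j)))) ζ
    have h3 := re_inner_mono (one_sub_le_res (hB0 j)) ζ
    rw [norm_sq_star_mul (v j : H →L[ℂ] H) ζ]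
    have e1 : (inner ℂ ζ ζ : ℂ).re = ‖ζ‖ ^ 2 := by
      rw [inner_self_eq_norm_sq_to_K]; norm_cast
    have e2 : (inner ℂ (((1 : H →L[ℂ] H) - (1 / 2 : ℝ) • (d : H →L[ℂ] H)) ζ) ζ).re
        = ‖ζ‖ ^ 2 - 1 / 2 * (inner ℂ ((d : H →L[ℂ] H) ζ) ζ).re := by
      have : ((1 : H →L[ℂ] H) - (1 / 2 : ℝ) • (d : H →L[ℂ] H)) ζ
        = ζ - ((1 / 2 : ℝ) : ℂ) • ((d : H →L[ℂ] H) ζ) := by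
        rw [Complex.coe_smul]; rfl
      rw [this, inner_sub_left, inner_smul_left, Complex.sub_re, e1, Complex.conj_ofReal,
        Complex.re_ofReal_mul]
    have e3 : (inner ℂ (((1 : H →L[ℂ] H) - ((star (v j) * v j : ↥M) : H →L[ℂ] H)) ζ) ζ).re
        = ‖ζ‖ ^ 2 - (inner ℂ ((star (v j : H →L[ℂ] H) * (v j : H →L[ℂ] H)) ζ) ζ).re := by
      have : ((1 : H →L[ℂ] H) - ((star (v j) * v j : ↥M) : H →L[ℂ] H)) ζ
        = ζ - (star (v j : H →L[ℂ] H) * (v j : H →L[ℂ] H)) ζ := rfl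
      rw [this, inner_sub_left, Complex.sub_re, e1]
    rw [e2] at h2
    rw [e3, ← hd] at h3
    linarith
  have hPz : P = 0 := by
    apply Subtype.ext
    ext ξ
    have h1 : (N : H →L[ℂ] H) ((P : H →L[ℂ] H) ξ) = 0 := by
      have := congrArg (fun a : ↥M => (a : H →L[ℂ] H) ξ) hNP
      exact this
    have h2 := hQξ _ h1
    rw [hQ0] at h2
    exact h2.symm
  have hRP : ∀ t ∈ spectrum ℝ (R : H →L[ℂ] H), max (t - 2 / 3) 0 = 0 := by
    have h1 : cfc (fun t : ℝ => max (t - 2 / 3) 0) (R : H →L[ℂ] H) = cfc (fun _ => (0 : ℝ)) (R : H →L[ℂ] H) := by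
      rw [cfc_const_zero ℝ (R : H →L[ℂ] H)]
      exact congrArg (fun a : ↥M => (a : H →L[ℂ] H)) hPz
    exact (cfc_eq_cfc_iff_eqOn (ha := hR.isSelfAdjoint) (hf := by fun_prop)
      (hg := by fun_prop)).1 h1
  have h2 : ‖cfc (fun t : ℝ => t) (R : H →L[ℂ] H)‖ ≤ 2 / 3 := by
    apply norm_cfc_le (by norm_num)
    intro t ht
    have h3 := hRP t ht
    have h4 := le_max_left (t - 2 / 3) 0
    rw [Real.norm_of_nonneg (spec_nonneg hR ht)]
    linarith
  rwa [cfc_id' ℝ (R : H →L[ℂ] H) hR.isSelfAdjoint] at h2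

lemma main_lemma (hM : VNFinite M) {s g : ↥M →ₗ[ℂ] ℂ} (hs : VNIsPos s) (hsn : VNIsNormal s)
    (hg : VNIsPos g) (hgn : VNIsNormal g) (hsing : VNSingular s g) : qn s g 1 = 0 := by
  by_contra hne
  set δ := qn s g 1 with hδ
  have hδ0 : 0 < δ := lt_of_le_of_ne (qn_nonneg s g 1) (Ne.symm hne)
  have hpar := fun k : ℕ => parallel hs hsn hg hsing ((1 / 2 : ℝ) ^ k) (by positivity)
  choose x hx1 hx2 using hpar
  obtain ⟨R, hR0, hxR, hψ⟩ := exists_R hs hsn hg hgn x (fun k => (hx1 k).le)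
  have hx : Tendsto (fun k => nrm s (1 - x k)) atTop (𝓝 0) :=
    squeeze_zero (fun k => nrm_nonneg _ _) (fun k => (hx2 k).le)
      (tendsto_pow_atTop_nhds_zero_of_lt_one (by norm_num) (by norm_num))
  obtain ⟨v, hv, hq⟩ := select_seq hs hg x hx R hR0 hxR hψ (fun j => δ / 10 * (1 / 2) ^ j)
    (fun j => by positivity)
  set d : ℕ → ↥M := fun j => res (star (v j) * v j) with hd
  have hB0 : ∀ j, 0 ≤ ((star (v j) * v j : ↥M) : H →L[ℂ] H) := by
    intro j; push_cast; exact star_mul_self_nonneg _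
  have hd0 : ∀ j, 0 ≤ (d j : H →L[ℂ] H) := fun j => res_nonneg (hB0 j)
  obtain ⟨R', hR'0, hR'le, hR'lim⟩ := res_series d hd0
  set T : ℕ → ↥M := fun m => ∑ k ∈ Finset.range m, d k with hT
  have hT0 : ∀ m, 0 ≤ (T m : H →L[ℂ] H) := fun m => sum_nonneg_M d hd0 _
  have hnorm : ‖(R' : H →L[ℂ] H)‖ ≤ 2 / 3 := by
    apply R_norm hM v hv R' hR'0
    intro j
    refine (hR'le (j + 1)).trans (res_anti (hd0 j) ?_)
    exact le_sum_M d hd0 _ j (Finset.mem_range.2 (Nat.lt_succ_self j))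
  have hqT : ∀ m, qn s g (1 - res (T m)) ≤ δ / 5 := by
    intro m
    have e : 1 - res (T m) = res (T m) * T m := by
      have := res_mul (hT0 m)
      rw [mul_add, mul_one] at this
      rw [← this]; abel
    rw [e]
    have h1 := qn_mul hs hg (res (T m)) (T m)
    have h2 := res_norm (hT0 m)
    have h3 := qn_nonneg s g (T m)
    have h4 := qn_sum hs hg d (Finset.range m)
    have h5 : ∑ k ∈ Finset.range m, qn s g (d k) ≤ ∑ k ∈ Finset.range m, δ / 10 * (1 / 2) ^ k :=
      Finset.sum_le_sum fun k _ => hq k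
    rw [← Finset.mul_sum] at h5
    have h6 : ∑ k ∈ Finset.range m, (1/2 : ℝ) ^ k ≤ 2 := sum_geometric_two_le m
    have h7 : qn s g (T m) ≤ δ / 5 := by
      refine h4.trans (h5.trans ?_)
      nlinarith
    nlinarith
  have hanti : ∀ i j, i ≤ j → (res (T j) : H →L[ℂ] H) ≤ res (T i) := by
    intro i j hij
    apply res_anti (hT0 i)
    simp only [hT]
    push_cast
    apply Finset.sum_le_sum_of_subset_of_nonneg
    · exact Finset.range_mono hij
    · intro k _ _; exact hd0 k
  have hlim := nrm_tendsto hs hsn (fun m => res (T m)) R' hR'0 hR'le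
    (fun m => res_le_one (hT0 m)) hanti hR'lim
  have hqR : qn s g (1 - R') ≤ δ / 5 := by
    have hb : ∀ m, qn s g (1 - R') ≤ δ / 5 + nrm s (res (T m) - R') := by
      intro m
      have h1 := qn_add hs hg (1 - res (T m)) (res (T m) - R')
      rw [sub_add_sub_cancel] at h1
      have h2 := qn_le_nrm s g (res (T m) - R')
      have h3 := hqT m
      linarith
    have h2 := hlim.const_add (δ / 5)
    rw [add_zero] at h2
    exact ge_of_tendsto' h2 hb
  have h1 := qn_add hs hg (1 - R') (R' * 1)
  rw [mul_one, sub_add_cancel, ← hδ] at h1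
  have h2 := qn_mul hs hg R' 1
  rw [mul_one, ← hδ] at h2
  nlinarith

lemma ac_null {r g : ↥M →ₗ[ℂ] ℂ} (hg : VNIsPos g) (h : VNAbsCont r g) {y : ↥M}
    (hy : nrm g y = 0) : nrm r y = 0 := by
  obtain ⟨fn, α, hf, hα, -, hle, hlim⟩ := h
  have h0 : g (star y * y) = 0 := by rw [f_eq_nrm hg, hy]; simp
  have h1 : ∀ n, fn n (star y * y) = 0 := by
    intro n
    have h2 := hle n y
    rw [LinearMap.sub_apply, LinearMap.smul_apply, h0, smul_zero, zero_sub] at h2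
    exact le_antisymm (neg_nonneg.1 h2) ((hf n).1 y)
  have h3 : r (star y * y) = 0 := by
    refine tendsto_nhds_unique (hlim (star y * y)) ?_
    simp [h1]
  unfold nrm
  rw [h3]; simp

lemma nrm_sub_null {r : ↥M →ₗ[ℂ] ℂ} (hr : VNIsPos r) (x z : ↥M) (hz : nrm r z = 0) :
    nrm r (x - z) = nrm r x := by
  apply le_antisymm
  · have := nrm_sub hr x z; linarith
  · have := nrm_add hr (x - z) z
    rw [sub_add_cancel] at this; linarith

lemma le_of_decomp (hM : VNFinite M) {f g r s r' s' : ↥M →ₗ[ℂ] ℂ} (hg : VNIsPos g)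
    (hgn : VNIsNormal g) (h : VNIsLebDecomp f g r s) (h' : VNIsLebDecomp f g r' s') (x : ↥M) :
    nrm r x ^ 2 ≤ nrm r' x ^ 2 := by
  obtain ⟨hr, hrn, hs, hsn, hf, hac, -⟩ := h
  obtain ⟨hr', hrn', hs', hsn', hf', hac', hsing'⟩ := h'
  have hq := main_lemma hM hs' hsn' hg hgn hsing'
  have key : ∀ ε : ℝ, 0 < ε → nrm r x ^ 2 ≤ nrm r' x ^ 2 + (‖(x : H →L[ℂ] H)‖ * ε) ^ 2 := by
    intro ε hε
    obtain ⟨y, hy, hy2⟩ := qn_lt s' g 1 hε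
    rw [hq, zero_add] at hy2
    have hxy : nrm g (x * y) = 0 :=
      le_antisymm ((nrm_mul_le hg x y).trans (by rw [hy, mul_zero])) (nrm_nonneg _ _)
    have h1 := nrm_sub_null hr x _ (ac_null hg hac hxy)
    have h2 := nrm_sub_null hr' x _ (ac_null hg hac' hxy)
    set z := x - x * y with hz
    have hz' : z = x * (1 - y) := by rw [hz]; noncomm_ring
    have h3 : nrm s' z ≤ ‖(x : H →L[ℂ] H)‖ * ε := by
      rw [hz']
      refine (nrm_mul_le hs' _ _).trans ?_
      gcongr
    have h4 : nrm r z ^ 2 + nrm s z ^ 2 = nrm r' z ^ 2 + nrm s' z ^ 2 := by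
      rw [nrm_sq hr, nrm_sq hs, nrm_sq hr', nrm_sq hs', ← Complex.add_re, ← Complex.add_re,
        ← LinearMap.add_apply, ← LinearMap.add_apply, ← hf, ← hf']
    rw [← h1, ← h2]
    have h5 : nrm s' z ^ 2 ≤ (‖(x : H →L[ℂ] H)‖ * ε) ^ 2 :=
      pow_le_pow_left₀ (nrm_nonneg _ _) h3 2
    nlinarith [sq_nonneg (nrm s z)]
  have ht : Tendsto (fun ε : ℝ => nrm r' x ^ 2 + (‖(x : H →L[ℂ] H)‖ * ε) ^ 2) (𝓝[>] 0)
      (𝓝 (nrm r' x ^ 2)) := by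
    have : Continuous (fun ε : ℝ => nrm r' x ^ 2 + (‖(x : H →L[ℂ] H)‖ * ε) ^ 2) := by fun_prop
    have h2 := this.tendsto 0
    simp only [mul_zero, ne_eq, OfNat.ofNat_ne_zero, not_false_eq_true, zero_pow, add_zero] at h2
    exact h2.mono_left nhdsWithin_le_nhds
  refine ge_of_tendsto ht ?_
  filter_upwards [self_mem_nhdsWithin] with ε hε
  exact key ε hε

lemma eq_of_nrm {r r' : ↥M →ₗ[ℂ] ℂ} (hr : VNIsPos r) (hr' : VNIsPos r')
    (h : ∀ x, nrm r x ^ 2 = nrm r' x ^ 2) : r = r' := by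
  have hre : ∀ b, (r b).re = (r' b).re := by
    intro b
    have h1 := nrm_expand hr 1 b
    have h2 := nrm_expand hr' 1 b
    rw [star_one, one_mul] at h1 h2
    have h3 := h 1
    have h4 := h b
    have h5 := h (1 + b)
    linarith
  apply LinearMap.ext
  intro b
  apply Complex.ext (hre b)
  have := hre (Complex.I • b)
  rw [map_smul, map_smul] at this
  simpa using this

end Fin
end VNLeb

/-- **Corollary 2.11**: on a finite von Neumann algebra the Lebesgue decomposition of
normal positive functionals is unique. -/
theorem vN_finite_lebesgue_unique
    {H : Type} [NormedAddCommGroup H] [InnerProductSpace ℂ H] [CompleteSpace H]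
    (M : VonNeumannAlgebra H) (hM : VNFinite M) :
    VNLebDecompUnique M := by
  intro f g hf hfn hg hgn r s r' s' h h'
  have hr : r = r' := VNLeb.eq_of_nrm h.1 h'.1 fun x =>
    le_antisymm (VNLeb.le_of_decomp hM hg hgn h h' x) (VNLeb.le_of_decomp hM hg hgn h' h x)
  refine ⟨hr, ?_⟩
  have e1 := h.2.2.2.2.1
  have e2 := h'.2.2.2.2.1
  rw [e1, hr] at e2
  exact add_left_cancel e2
end
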